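/- (Theorem 1, stability.) Assume the Dirichlet-measurement setting described in the context, with θ₁ ∈ (0, π/2]. Suppose K ∈ ℝ^{1×N₀} and L ∈ ℝ^{N₀} are such that every complex eigenvalue μ of F₁ satisfies Re μ < −|c|; fix α₁, α₂, α₃, α₄ > 0 with 𝔠 := 1 − ½(|c|/α₁ + 1/α₂ + 1/α₃ + |c|/α₄) > 0; and suppose for the given N ≥ N₀ + 1 there exist a symmetric positive definite P, symmetric positive semidefinite Q₁, Q₂, and reals r₁, r₂, β, γ > 0 such that Ψ ≺ 0, Θ₁ ≺ 0, Θ₂ ≺ 0, Θ₃ < 0, Θ₄ < 0. Then for any h > 0 there exist constants δ, M > 0 such that every classical solution of the closed-loop system (the PDE with output y_D(t) = z(t,0) interconnected with the controller), with admissible initial data (z₀ ∈ C⁰([−h,0]; L²(0,1)) with z₀ and u₀ Lipschitz, z₀(τ,·) ∈ H²(0,1), cos(θ₁) z₀(0,0) − sin(θ₁) z₀,ₓ(0,0) = 0, u₀(0) = Σ_{k=1}^{N₀} k_k ẑ_k(0), and ẑₙ constant on [−h,0]), satisfies for all t ≥ 0: ‖z(t,·)‖²_{H¹} + Σ_{n=1}^{N}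 ẑₙ(t)² ≤ M e^{−2δt} ( sup_{τ∈[−h,0]} ‖z₀(τ,·)‖²_{L²} + ‖z₀(0,·)‖²_{H¹} + ‖u₀‖²_∞ + Σ_{n=1}^{N} ẑₙ(0)² ). -/

import Mathlib

open Real Set Matrix MeasureTheory

noncomputable section

/-- One-sided/within derivative on the spatial interval `[0,1]`. -/
def dI (f : ℝ → ℝ) (x : ℝ) : ℝ := derivWithin f (Set.Icc 0 1) x

/-- `L²(0,1)` inner product. -/
def ip (f g : ℝ → ℝ) : ℝ := ∫ x in (0:ℝ)..1, f x * g x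

/-- The lifting function `a(x) = (2p(x) + 2xp'(x) - x²q̃(x))/(cos θ₂ + 2 sin θ₂)`. -/
def aFun (p qt : ℝ → ℝ) (θ₂ : ℝ) (x : ℝ) : ℝ :=
  (2 * p x + 2 * x * dI p x - x ^ 2 * qt x) / (Real.cos θ₂ + 2 * Real.sin θ₂)

/-- The lifting function `b(x) = -x²/(cos θ₂ + 2 sin θ₂)`. -/
def bFun (θ₂ : ℝ) (x : ℝ) : ℝ := -x ^ 2 / (Real.cos θ₂ + 2 * Real.sin θ₂)

/-- Input coefficient `βₙ = aₙ + (-λₙ + q_c) bₙ`. -/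
def betaC (p qt : ℝ → ℝ) (θ₂ q_c : ℝ) (lam : ℕ → ℝ) (phi : ℕ → ℝ → ℝ) (n : ℕ) : ℝ :=
  ip (aFun p qt θ₂) (phi n) + (-lam n + q_c) * ip (bFun θ₂) (phi n)

/-- Squared `L²`-norm `‖R_N f‖² = Σ_{n≥N+1} ⟨f,φₙ⟩²` of the residual `R_N f`. -/
def RN2 (f : ℝ → ℝ) (phi : ℕ → ℝ → ℝ) (N : ℕ) : ℝ := ∑' k : ℕ, (ip f (phi (N + 1 + k)))^2

/-- `A₀ = diag(-λ₁+q_c, …, -λ_{N₀}+q_c)`. -/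
def A0 (N₀ : ℕ) (lam : ℕ → ℝ) (q_c : ℝ) : Matrix (Fin N₀) (Fin N₀) ℝ :=
  Matrix.diagonal fun i => -lam (i.val + 1) + q_c

/-- `F₃ = A₁ = diag(-λ_{N₀+1}+q_c, …, -λ_N+q_c)`. -/
def A1 (N₀ N : ℕ) (lam : ℕ → ℝ) (q_c : ℝ) : Matrix (Fin (N - N₀)) (Fin (N - N₀)) ℝ :=
  Matrix.diagonal fun i => -lam (N₀ + i.val + 1) + q_c

/-- `𝔅₀ = (β₁,…,β_{N₀})ᵀ`. -/
def B0 (N₀ : ℕ) (p qt : ℝ → ℝ) (θ₂ q_c : ℝ) (lam : ℕ → ℝ) (phi : ℕ → ℝ → ℝ) :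
    Fin N₀ → ℝ :=
  fun i => betaC p qt θ₂ q_c lam phi (i.val + 1)

/-- `F₁ = [[A₀+𝔅₀K, LC₀],[0, A₀-LC₀]]`. -/
def F1 (N₀ : ℕ) (lam : ℕ → ℝ) (q_c : ℝ) (B0v C0v K L : Fin N₀ → ℝ) :
    Matrix (Fin N₀ ⊕ Fin N₀) (Fin N₀ ⊕ Fin N₀) ℝ :=
  Matrix.fromBlocks (A0 N₀ lam q_c + Matrix.vecMulVec B0v K) (Matrix.vecMulVec L C0v) 0
    (A0 N₀ lam q_c - Matrix.vecMulVec L C0v)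

/-- `F₂ = [LC̃₁; -LC̃₁]`. -/
def F2 (N₀ N : ℕ) (L : Fin N₀ → ℝ) (Ct : Fin (N - N₀) → ℝ) :
    Matrix (Fin N₀ ⊕ Fin N₀) (Fin (N - N₀)) ℝ :=
  Matrix.of fun i j => Sum.elim (fun a' => L a' * Ct j) (fun a' => -(L a' * Ct j)) i

/-- `ℒ = col(L,-L)`. -/
def Lv (N₀ : ℕ) (L : Fin N₀ → ℝ) : Fin N₀ ⊕ Fin N₀ → ℝ := Sum.elim L fun a' => -L a'

/-- `K̃ = [K 0]`. -/
def Kt (N₀ : ℕ) (K : Fin N₀ → ℝ) : Fin N₀ ⊕ Fin N₀ → ℝ := Sum.elim K 0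

/-- Index type of the matrix `Ψ` (blocks of sizes `2N₀`, `N-N₀`, `1`). -/
abbrev SIdx (N₀ N : ℕ) := ((Fin N₀ ⊕ Fin N₀) ⊕ Fin (N - N₀)) ⊕ Unit

/-- The row vector `E = K̃ [F₁ F₂ ℒ]`. -/
def Erow (N₀ N : ℕ) (F1m : Matrix (Fin N₀ ⊕ Fin N₀) (Fin N₀ ⊕ Fin N₀) ℝ)
    (F2m : Matrix (Fin N₀ ⊕ Fin N₀) (Fin (N - N₀)) ℝ)
    (Lvv Ktv : Fin N₀ ⊕ Fin N₀ → ℝ) : SIdx N₀ N → ℝ :=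
  Sum.elim (Sum.elim (Matrix.vecMul Ktv F1m) (Matrix.vecMul Ktv F2m)) fun _ => Ktv ⬝ᵥ Lvv

/-- The matrix `Ψ` of the LMI conditions. -/
def PsiM (N₀ N : ℕ)
    (P Q1 F1m : Matrix (Fin N₀ ⊕ Fin N₀) (Fin N₀ ⊕ Fin N₀) ℝ)
    (Q2 F3m : Matrix (Fin (N - N₀)) (Fin (N - N₀)) ℝ)
    (F2m : Matrix (Fin N₀ ⊕ Fin N₀) (Fin (N - N₀)) ℝ)
    (Lvv Ktv : Fin N₀ ⊕ Fin N₀ → ℝ) (E : SIdx N₀ N → ℝ)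
    (c r₁ βs γ α₂ α₃ RNa2 RNb2 : ℝ) : Matrix (SIdx N₀ N) (SIdx N₀ N) ℝ :=
  Matrix.fromBlocks
    (Matrix.fromBlocks
      (F1mᵀ * P + P * F1m + |c| • P + Q1 + (α₂ * γ * RNa2) • Matrix.vecMulVec Ktv Ktv)
      (P * F2m)
      ((P * F2m)ᵀ)
      (r₁ • ((2:ℝ) • F3m + |c| • (1 : Matrix (Fin (N - N₀)) (Fin (N - N₀)) ℝ)) + Q2))
    (Matrix.of fun i (_ : Unit) => Sum.elim (P.mulVec Lvv) (fun _ => 0) i)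
    (Matrix.of fun (_ : Unit) j => Sum.elim (P.mulVec Lvv) (fun _ => 0) j)
    (Matrix.of fun _ _ => -βs)
  + (2 * α₃ * γ * RNb2) • Matrix.vecMulVec E E

/-- The matrix `Θ₁`. -/
def Theta1 (N₀ : ℕ) (P Q1 : Matrix (Fin N₀ ⊕ Fin N₀) (Fin N₀ ⊕ Fin N₀) ℝ)
    (Ktv : Fin N₀ ⊕ Fin N₀ → ℝ) (c γ α₃ α₄ RNb2 : ℝ) :
    Matrix (Fin N₀ ⊕ Fin N₀) (Fin N₀ ⊕ Fin N₀) ℝ :=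
  |c| • P - Q1 + ((2*α₃*|c| + α₄) * γ * |c| * RNb2) • Matrix.vecMulVec Ktv Ktv

/-- The matrix `Θ₂`. -/
def Theta2 (N₀ N : ℕ) (Q2 : Matrix (Fin (N - N₀)) (Fin (N - N₀)) ℝ) (r₁ c : ℝ) :
    Matrix (Fin (N - N₀)) (Fin (N - N₀)) ℝ :=
  (r₁ * |c|) • (1 : Matrix (Fin (N - N₀)) (Fin (N - N₀)) ℝ) - Q2

/-!
The function `b` lifts the boundary input: `w = z + u b` satisfies the homogeneous boundary
conditions and can be expanded in the eigenfunctions `φₙ`. On the modes, the Lyapunov functional is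
`XᵀPX + r₁ |e|² + γ ∑ λₖ wₖ²`, where `X` collects the estimates and errors of the first `N₀` modes,
`e` the scaled errors of the modes `N₀ < n ≤ N`, and `wₖ` the modes above `N`. The matrix
inequalities say that along solutions `V' ≤ -ηV - (1 + η)G + G(t - h)`, with `G` quadratic in the
state, so `V` decays at a rate `δ` with `exp(2δh) ≤ 1 + η`.

The functional is differentiated only for finitely many residual modes, so that no series has to be
differentiated. The output `ζ` of the residual modes then obeys `ζ² ≤ Mφ ∑ λₖ wₖ²` only up to a
defect, whose weighted integral over `[0, t]` tends to `0` with the truncation order by dominated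
convergence.

The input is a feedback of `X` and hence decays. The estimates of the modes `N₀ < n ≤ N` solve
scalar delay equations driven by it, stable because `-λₙ + q_c + |c| < 0`, and therefore decay as
well. Finally `∑ λₙ wₙ²` is the form `∫ p w'² + q w²` plus nonnegative boundary terms, which
dominates the `H¹` norm.
-/

/-! ### Calculus on the unit interval -/

theorem hasDerivWithinAt_dI {f : ℝ → ℝ} (hf : ContDiffOn ℝ 1 f (Icc 0 1)) {x : ℝ}
    (hx : x ∈ Icc (0 : ℝ) 1) : HasDerivWithinAt f (dI f x) (Icc 0 1) x :=
  (hf.differentiableOn one_ne_zero x hx).hasDerivWithinAt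

theorem dI_eq_of_hasDerivWithinAt {f : ℝ → ℝ} {f' x : ℝ} (hx : x ∈ Icc (0 : ℝ) 1)
    (hf : HasDerivWithinAt f f' (Icc 0 1) x) : dI f x = f' :=
  hf.derivWithin (uniqueDiffOn_Icc one_pos x hx)

theorem contDiffOn_dI {f : ℝ → ℝ} (hf : ContDiffOn ℝ 2 f (Icc 0 1)) :
    ContDiffOn ℝ 1 (dI f) (Icc 0 1) :=
  hf.derivWithin (uniqueDiffOn_Icc one_pos) (by norm_num)

theorem continuousOn_dI {f : ℝ → ℝ} (hf : ContDiffOn ℝ 1 f (Icc 0 1)) :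
    ContinuousOn (dI f) (Icc 0 1) :=
  hf.continuousOn_derivWithin (uniqueDiffOn_Icc one_pos) le_rfl

theorem dI_add {f g : ℝ → ℝ} (hf : ContDiffOn ℝ 1 f (Icc 0 1))
    (hg : ContDiffOn ℝ 1 g (Icc 0 1)) {x : ℝ} (hx : x ∈ Icc (0 : ℝ) 1) :
    dI (f + g) x = dI f x + dI g x :=
  dI_eq_of_hasDerivWithinAt hx ((hasDerivWithinAt_dI hf hx).add (hasDerivWithinAt_dI hg hx))

theorem dI_smul (k : ℝ) {f : ℝ → ℝ} (hf : ContDiffOn ℝ 1 f (Icc 0 1)) {x : ℝ}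
    (hx : x ∈ Icc (0 : ℝ) 1) : dI (k • f) x = k * dI f x :=
  dI_eq_of_hasDerivWithinAt hx ((hasDerivWithinAt_dI hf hx).const_smul k)

theorem dI_add_smul {f g : ℝ → ℝ} (hf : ContDiffOn ℝ 1 f (Icc 0 1))
    (hg : ContDiffOn ℝ 1 g (Icc 0 1)) (k : ℝ) {x : ℝ} (hx : x ∈ Icc (0 : ℝ) 1) :
    dI (f + k • g) x = dI f x + k * dI g x := by
  rw [← dI_smul k hg hx]
  exact dI_add hf (contDiffOn_const.smul hg) hx

theorem intervalIntegrable_unit {f : ℝ → ℝ} (hf : ContinuousOn f (Icc 0 1)) :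
    IntervalIntegrable f volume 0 1 :=
  hf.intervalIntegrable_of_Icc zero_le_one

theorem integral_unit_congr {f g : ℝ → ℝ} (h : EqOn f g (Icc 0 1)) :
    ∫ x in (0 : ℝ)..1, f x = ∫ x in (0 : ℝ)..1, g x :=
  intervalIntegral.integral_congr (by rwa [uIcc_of_le zero_le_one])

theorem integral_unit_mono {f g : ℝ → ℝ} (hf : ContinuousOn f (Icc 0 1))
    (hg : ContinuousOn g (Icc 0 1)) (h : ∀ x ∈ Icc (0 : ℝ) 1, f x ≤ g x) :
    ∫ x in (0 : ℝ)..1, f x ≤ ∫ x in (0 : ℝ)..1, g x :=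
  intervalIntegral.integral_mono_on zero_le_one (intervalIntegrable_unit hf)
    (intervalIntegrable_unit hg) h

theorem integral_unit_mul_deriv {u v u' v' : ℝ → ℝ}
    (hu : ∀ x ∈ Icc (0 : ℝ) 1, HasDerivWithinAt u (u' x) (Icc 0 1) x)
    (hv : ∀ x ∈ Icc (0 : ℝ) 1, HasDerivWithinAt v (v' x) (Icc 0 1) x)
    (hu' : ContinuousOn u' (Icc 0 1)) (hv' : ContinuousOn v' (Icc 0 1)) :
    ∫ x in (0 : ℝ)..1, u x * v' x = u 1 * v 1 - u 0 * v 0 - ∫ x in (0 : ℝ)..1, u' x * v x := by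
  rw [← uIcc_of_le zero_le_one] at hu hv
  exact intervalIntegral.integral_mul_deriv_eq_deriv_mul_of_hasDerivWithinAt hu hv
    (intervalIntegrable_unit hu') (intervalIntegrable_unit hv')

theorem ip_comm (f g : ℝ → ℝ) : ip f g = ip g f := by
  simp only [ip, mul_comm]

theorem ip_self (f : ℝ → ℝ) : ip f f = ∫ x in (0 : ℝ)..1, f x ^ 2 := by
  simp only [ip, sq]

theorem ip_self_nonneg (f : ℝ → ℝ) : 0 ≤ ip f f :=
  intervalIntegral.integral_nonneg zero_le_one fun _ _ => mul_self_nonneg _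

theorem ip_congr_left {f₁ f₂ : ℝ → ℝ} (h : EqOn f₁ f₂ (Icc 0 1)) (g : ℝ → ℝ) :
    ip f₁ g = ip f₂ g :=
  integral_unit_congr fun x hx => by simp only [h hx]

theorem ip_add_left {f₁ f₂ g : ℝ → ℝ} (h₁ : ContinuousOn f₁ (Icc 0 1))
    (h₂ : ContinuousOn f₂ (Icc 0 1)) (hg : ContinuousOn g (Icc 0 1)) :
    ip (f₁ + f₂) g = ip f₁ g + ip f₂ g := by
  simp only [ip, Pi.add_apply, add_mul]
  exact intervalIntegral.integral_add (intervalIntegrable_unit (h₁.mul hg))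
    (intervalIntegrable_unit (h₂.mul hg))

theorem ip_smul_left (k : ℝ) (f g : ℝ → ℝ) : ip (k • f) g = k * ip f g := by
  simp only [ip, Pi.smul_apply, smul_eq_mul, mul_assoc, intervalIntegral.integral_const_mul]

theorem ip_sub_left {f₁ f₂ g : ℝ → ℝ} (h₁ : ContinuousOn f₁ (Icc 0 1))
    (h₂ : ContinuousOn f₂ (Icc 0 1)) (hg : ContinuousOn g (Icc 0 1)) :
    ip (f₁ - f₂) g = ip f₁ g - ip f₂ g := by
  simp only [ip, Pi.sub_apply, sub_mul]
  exact intervalIntegral.integral_sub (intervalIntegrable_unit (h₁.mul hg))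
    (intervalIntegrable_unit (h₂.mul hg))

theorem ip_sum_left {ι : Type*} (s : Finset ι) {F : ι → ℝ → ℝ} {g : ℝ → ℝ}
    (hF : ∀ i ∈ s, ContinuousOn (F i) (Icc 0 1)) (hg : ContinuousOn g (Icc 0 1)) :
    ip (∑ i ∈ s, F i) g = ∑ i ∈ s, ip (F i) g := by
  simp only [ip, Finset.sum_apply, Finset.sum_mul]
  exact intervalIntegral.integral_finsetSum fun i hi =>
    intervalIntegrable_unit ((hF i hi).mul hg)

/-- The squared `H¹(0,1)` norm. -/
def h1sq (f : ℝ → ℝ) : ℝ := (∫ x in (0 : ℝ)..1, f x ^ 2) + ∫ x in (0 : ℝ)..1, dI f x ^ 2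

theorem h1sq_nonneg (f : ℝ → ℝ) : 0 ≤ h1sq f :=
  add_nonneg (intervalIntegral.integral_nonneg zero_le_one fun _ _ => sq_nonneg _)
    (intervalIntegral.integral_nonneg zero_le_one fun _ _ => sq_nonneg _)

theorem trace_sq_le_h1sq {f : ℝ → ℝ} (hf : ContDiffOn ℝ 1 f (Icc 0 1)) {a : ℝ}
    (ha : a ∈ Icc (0 : ℝ) 1) : a * f 0 ^ 2 + (1 - a) * f 1 ^ 2 ≤ 2 * h1sq f := by
  have hc := hf.continuousOn
  have hc' := continuousOn_dI hf
  have hparts := integral_unit_mul_deriv (u := fun x => f x ^ 2) (v := fun x => x - a)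
    (u' := fun x => 2 * f x * dI f x) (v' := fun _ => 1)
    (fun x hx => by simpa using (hasDerivWithinAt_dI hf hx).fun_pow 2)
    (fun x _ => (hasDerivWithinAt_id x _).sub_const a) (by fun_prop) continuousOn_const
  have hpointwise : ∫ x in (0 : ℝ)..1, 2 * f x * dI f x * (x - a) ≤
      ∫ x in (0 : ℝ)..1, (f x ^ 2 + dI f x ^ 2) := by
    refine integral_unit_mono (by fun_prop) (by fun_prop) fun x hx => ?_
    have : (x - a) ^ 2 ≤ 1 := by nlinarith [hx.1, hx.2, ha.1, ha.2]
    nlinarith [sq_nonneg (f x - (x - a) * dI f x),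
      mul_le_mul_of_nonneg_right this (sq_nonneg (dI f x))]
  rw [intervalIntegral.integral_add (intervalIntegrable_unit (by fun_prop))
    (intervalIntegrable_unit (by fun_prop))] at hpointwise
  simp only [mul_one] at hparts
  have : 0 ≤ ∫ x in (0 : ℝ)..1, dI f x ^ 2 :=
    intervalIntegral.integral_nonneg zero_le_one fun _ _ => sq_nonneg _
  simp only [h1sq]
  linarith

theorem sq_zero_le_h1sq {f : ℝ → ℝ} (hf : ContDiffOn ℝ 1 f (Icc 0 1)) :
    f 0 ^ 2 ≤ 2 * h1sq f := by
  simpa using trace_sq_le_h1sq hf (a := 1) (by simp)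

theorem sq_one_le_h1sq {f : ℝ → ℝ} (hf : ContDiffOn ℝ 1 f (Icc 0 1)) :
    f 1 ^ 2 ≤ 2 * h1sq f := by
  simpa using trace_sq_le_h1sq hf (a := 0) (by simp)

/-! ### Sturm–Liouville expressions with Robin boundary conditions -/

/-- The Sturm–Liouville differential expression `-(p f')' + q f` on `[0,1]`. -/
def slOp (p q f : ℝ → ℝ) (x : ℝ) : ℝ := -(dI (fun y => p y * dI f y) x) + q x * f x

/-- The bilinear form `∫₀¹ p f' g' + q f g` that integration by parts associates with the
Sturm–Liouville expression; the boundary terms are not included. -/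
def slForm (p q f g : ℝ → ℝ) : ℝ := ∫ x in (0 : ℝ)..1, (p x * dI f x * dI g x + q x * f x * g x)

theorem slForm_comm (p q f g : ℝ → ℝ) : slForm p q f g = slForm p q g f := by
  simp only [slForm, mul_right_comm]

theorem slForm_const_self (m : ℝ) {f : ℝ → ℝ} (hf : ContDiffOn ℝ 1 f (Icc 0 1)) :
    slForm (fun _ => m) (fun _ => m) f f = m * h1sq f := by
  have hc := hf.continuousOn
  have hc' := continuousOn_dI hf
  rw [slForm, h1sq, add_comm (∫ x in (0 : ℝ)..1, f x ^ 2), ← intervalIntegral.integral_add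
    (intervalIntegrable_unit (by fun_prop)) (intervalIntegrable_unit (by fun_prop)),
    ← intervalIntegral.integral_const_mul]
  exact integral_unit_congr fun x _ => by ring

theorem slForm_self_mono {p₁ p₂ q₁ q₂ f : ℝ → ℝ} (hf : ContDiffOn ℝ 1 f (Icc 0 1))
    (hp₁ : ContinuousOn p₁ (Icc 0 1)) (hp₂ : ContinuousOn p₂ (Icc 0 1))
    (hq₁ : ContinuousOn q₁ (Icc 0 1)) (hq₂ : ContinuousOn q₂ (Icc 0 1))
    (hp : ∀ x ∈ Icc (0 : ℝ) 1, p₁ x ≤ p₂ x) (hq : ∀ x ∈ Icc (0 : ℝ) 1, q₁ x ≤ q₂ x) :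
    slForm p₁ q₁ f f ≤ slForm p₂ q₂ f f := by
  have hc := hf.continuousOn
  have hc' := continuousOn_dI hf
  refine integral_unit_mono (by fun_prop) (by fun_prop) fun x hx => ?_
  simp only [mul_assoc, ← sq]
  gcongr
  exacts [hp x hx, hq x hx]

section Green

variable {p q f g : ℝ → ℝ}

theorem contDiffOn_mul_dI (hp : ContDiffOn ℝ 1 p (Icc 0 1)) (hf : ContDiffOn ℝ 2 f (Icc 0 1)) :
    ContDiffOn ℝ 1 (fun y => p y * dI f y) (Icc 0 1) :=
  hp.mul (contDiffOn_dI hf)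

theorem continuousOn_slOp (hp : ContDiffOn ℝ 1 p (Icc 0 1)) (hq : ContinuousOn q (Icc 0 1))
    (hf : ContDiffOn ℝ 2 f (Icc 0 1)) : ContinuousOn (slOp p q f) (Icc 0 1) :=
  (continuousOn_dI (contDiffOn_mul_dI hp hf)).neg.add (hq.mul hf.continuousOn)

theorem ip_slOp (hp : ContDiffOn ℝ 1 p (Icc 0 1)) (hq : ContinuousOn q (Icc 0 1))
    (hf : ContDiffOn ℝ 2 f (Icc 0 1)) (hg : ContDiffOn ℝ 1 g (Icc 0 1)) :
    ip (slOp p q f) g = slForm p q f g - p 1 * dI f 1 * g 1 + p 0 * dI f 0 * g 0 := by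
  have hpf := contDiffOn_mul_dI hp hf
  have hfc := hf.continuousOn
  have hgc := hg.continuousOn
  have hpf' := continuousOn_dI hpf
  have hsl := continuousOn_slOp hp hq hf
  have hf' := (contDiffOn_dI hf).continuousOn
  have hpc := hp.continuousOn
  have hg' := continuousOn_dI hg
  have hparts := integral_unit_mul_deriv (fun x hx => hasDerivWithinAt_dI hg hx)
    (fun x hx => hasDerivWithinAt_dI hpf hx) hg' hpf'
  have hsplit : ip (slOp p q f) g - slForm p q f g =
      -(∫ x in (0 : ℝ)..1, g x * dI (fun y => p y * dI f y) x)
        - ∫ x in (0 : ℝ)..1, dI g x * (p x * dI f x) := by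
    rw [ip, slForm, ← intervalIntegral.integral_neg,
      ← intervalIntegral.integral_sub (intervalIntegrable_unit (by fun_prop))
        (intervalIntegrable_unit (by fun_prop)),
      ← intervalIntegral.integral_sub (intervalIntegrable_unit (by fun_prop))
        (intervalIntegrable_unit (by fun_prop))]
    exact integral_unit_congr fun x _ => by simp only [slOp]; ring
  linarith

end Green

/-- The domain of the Sturm–Liouville operator inside `C²([0,1])`: twice continuously
differentiable functions satisfying both homogeneous Robin boundary conditions. -/
def robinDomain (θ₁ θ₂ : ℝ) : Submodule ℝ (ℝ → ℝ) where
  carrier := {f | ContDiffOn ℝ 2 f (Icc 0 1) ∧ cos θ₁ * f 0 - sin θ₁ * dI f 0 = 0 ∧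
    cos θ₂ * f 1 + sin θ₂ * dI f 1 = 0}
  add_mem' := by
    rintro f g ⟨hf, hf₀, hf₁⟩ ⟨hg, hg₀, hg₁⟩
    refine ⟨hf.add hg, ?_, ?_⟩ <;>
      rw [dI_add (hf.of_le one_le_two) (hg.of_le one_le_two) (by simp), Pi.add_apply]
    · linear_combination hf₀ + hg₀
    · linear_combination hf₁ + hg₁
  zero_mem' := by
    have : dI (0 : ℝ → ℝ) = 0 := derivWithin_zero _
    exact ⟨contDiffOn_const, by simp [this], by simp [this]⟩
  smul_mem' := by
    rintro k f ⟨hf, hf₀, hf₁⟩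
    refine ⟨hf.const_smul k, ?_, ?_⟩ <;>
      rw [dI_smul k (hf.of_le one_le_two) (by simp), Pi.smul_apply, smul_eq_mul]
    · linear_combination k * hf₀
    · linear_combination k * hf₁

theorem robin_wronskian_eq {θ a a' b b' : ℝ} (ha : cos θ * a - sin θ * a' = 0)
    (hb : cos θ * b - sin θ * b' = 0) : a' * b = b' * a := by
  linear_combination (b' * a - a' * b) * sin_sq_add_cos_sq θ
    - (sin θ * b + cos θ * b') * ha + (sin θ * a + cos θ * a') * hb

theorem robin_mul_eq_cot_mul_sq {θ y y' : ℝ} (h : cos θ * y - sin θ * y' = 0) :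
    y' * y = cot θ * y ^ 2 := by
  rw [Real.cot_eq_cos_div_sin]
  by_cases hs : sin θ = 0
  · have hc : cos θ ≠ 0 := fun hc => by simpa [hs, hc] using sin_sq_add_cos_sq θ
    have hy : y = 0 := by simpa [hs, hc] using h
    simp [hy]
  · field_simp
    linear_combination -y * h

theorem cot_nonneg_of_mem_Icc {θ : ℝ} (hθ : θ ∈ Icc 0 (π / 2)) : 0 ≤ cot θ := by
  rw [Real.cot_eq_cos_div_sin]
  exact div_nonneg (cos_nonneg_of_mem_Icc ⟨by linarith [hθ.1, pi_pos], hθ.2⟩)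
    (sin_nonneg_of_nonneg_of_le_pi hθ.1 (by linarith [hθ.2, pi_pos]))

section Robin

variable {θ₁ θ₂ : ℝ} {p q f g : ℝ → ℝ}

theorem ip_slOp_comm (hp : ContDiffOn ℝ 1 p (Icc 0 1)) (hq : ContinuousOn q (Icc 0 1))
    (hf : f ∈ robinDomain θ₁ θ₂) (hg : g ∈ robinDomain θ₁ θ₂) :
    ip (slOp p q f) g = ip (slOp p q g) f := by
  obtain ⟨hf, hf₀, hf₁⟩ := hf
  obtain ⟨hg, hg₀, hg₁⟩ := hg
  have h₀ := robin_wronskian_eq hf₀ hg₀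
  have h₁ := robin_wronskian_eq (a := f 1) (a' := -dI f 1) (b := g 1) (b' := -dI g 1)
    (by linear_combination hf₁) (by linear_combination hg₁)
  rw [ip_slOp hp hq hf (hg.of_le one_le_two), ip_slOp hp hq hg (hf.of_le one_le_two), slForm_comm]
  linear_combination p 0 * h₀ + p 1 * h₁

theorem ip_slOp_self (hp : ContDiffOn ℝ 1 p (Icc 0 1)) (hq : ContinuousOn q (Icc 0 1))
    (hf : f ∈ robinDomain θ₁ θ₂) :
    ip (slOp p q f) f =
      slForm p q f f + p 1 * cot θ₂ * f 1 ^ 2 + p 0 * cot θ₁ * f 0 ^ 2 := by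
  obtain ⟨hf, hf₀, hf₁⟩ := hf
  have h₀ := robin_mul_eq_cot_mul_sq hf₀
  have h₁ := robin_mul_eq_cot_mul_sq (y := f 1) (y' := -dI f 1) (by linear_combination hf₁)
  rw [ip_slOp hp hq hf (hf.of_le one_le_two)]
  linear_combination p 0 * h₀ + p 1 * h₁

theorem exists_mul_h1sq_le_ip_slOp (hθ₁ : θ₁ ∈ Icc 0 (π / 2)) (hθ₂ : θ₂ ∈ Icc 0 (π / 2))
    (hp : ContDiffOn ℝ 1 p (Icc 0 1)) (hp_pos : ∀ x ∈ Icc (0 : ℝ) 1, 0 < p x)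
    (hq : ContinuousOn q (Icc 0 1)) (hq_pos : ∀ x ∈ Icc (0 : ℝ) 1, 0 < q x) :
    ∃ m > 0, ∀ f ∈ robinDomain θ₁ θ₂, m * h1sq f ≤ ip (slOp p q f) f := by
  obtain ⟨m₁, hm₁, hpm⟩ := isCompact_Icc.exists_forall_le' hp.continuousOn hp_pos
  obtain ⟨m₂, hm₂, hqm⟩ := isCompact_Icc.exists_forall_le' hq hq_pos
  refine ⟨min m₁ m₂, lt_min hm₁ hm₂, fun f hf => ?_⟩
  have hf' : ContDiffOn ℝ 1 f (Icc 0 1) := hf.1.of_le one_le_two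
  have hform : min m₁ m₂ * h1sq f ≤ slForm p q f f := by
    rw [← slForm_const_self _ hf']
    exact slForm_self_mono hf' continuousOn_const hp.continuousOn continuousOn_const hq
      (fun x hx => (min_le_left _ _).trans (hpm x hx))
      (fun x hx => (min_le_right _ _).trans (hqm x hx))
  have hb₁ := mul_nonneg (mul_nonneg (hp_pos 1 (by simp)).le (cot_nonneg_of_mem_Icc hθ₂))
    (sq_nonneg (f 1))
  have hb₀ := mul_nonneg (mul_nonneg (hp_pos 0 (by simp)).le (cot_nonneg_of_mem_Icc hθ₁))
    (sq_nonneg (f 0))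
  rw [ip_slOp_self hp hq hf]
  linarith

theorem exists_ip_slOp_le_mul_h1sq (hp : ContDiffOn ℝ 1 p (Icc 0 1))
    (hq : ContinuousOn q (Icc 0 1)) (θ₁ θ₂ : ℝ) :
    ∃ C > 0, ∀ f ∈ robinDomain θ₁ θ₂, ip (slOp p q f) f ≤ C * h1sq f := by
  obtain ⟨C₁, hC₁⟩ := isCompact_Icc.exists_bound_of_continuousOn hp.continuousOn
  obtain ⟨C₂, hC₂⟩ := isCompact_Icc.exists_bound_of_continuousOn hq
  set B := |p 1 * cot θ₂| + |p 0 * cot θ₁|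
  have hC : 0 ≤ max C₁ C₂ := ((norm_nonneg _).trans (hC₁ 0 (by simp))).trans (le_max_left _ _)
  refine ⟨max C₁ C₂ + 2 * B + 1, by positivity, fun f hf => ?_⟩
  have hf' : ContDiffOn ℝ 1 f (Icc 0 1) := hf.1.of_le one_le_two
  have hform : slForm p q f f ≤ max C₁ C₂ * h1sq f := by
    rw [← slForm_const_self _ hf']
    exact slForm_self_mono hf' hp.continuousOn continuousOn_const hq continuousOn_const
      (fun x hx => (le_abs_self _).trans ((hC₁ x hx).trans (le_max_left _ _)))
      (fun x hx => (le_abs_self _).trans ((hC₂ x hx).trans (le_max_right _ _)))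
  have hb₁ : p 1 * cot θ₂ * f 1 ^ 2 ≤ |p 1 * cot θ₂| * (2 * h1sq f) :=
    mul_le_mul (le_abs_self _) (sq_one_le_h1sq hf') (sq_nonneg _) (abs_nonneg _)
  have hb₀ : p 0 * cot θ₁ * f 0 ^ 2 ≤ |p 0 * cot θ₁| * (2 * h1sq f) :=
    mul_le_mul (le_abs_self _) (sq_zero_le_h1sq hf') (sq_nonneg _) (abs_nonneg _)
  rw [ip_slOp_self hp hq hf]
  linarith [h1sq_nonneg f]

end Robin

/-! ### Orthonormal expansions -/

/-- The remainder `f - ∑_{i ∈ s} ⟨f, φᵢ⟩ φᵢ` of the expansion of `f` in the family `φ`. -/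
def expansionRemainder {ι : Type*} (φ : ι → ℝ → ℝ) (s : Finset ι) (f : ℝ → ℝ) : ℝ → ℝ :=
  f - ∑ i ∈ s, ip f (φ i) • φ i

section Orthonormal

variable {ι : Type*} [DecidableEq ι] {φ : ι → ℝ → ℝ} {f : ℝ → ℝ}

theorem ip_expansionRemainder (hφ : ∀ i, ContinuousOn (φ i) (Icc 0 1))
    (horth : ∀ i j, ip (φ i) (φ j) = if i = j then 1 else 0) (s : Finset ι)
    (hf : ContinuousOn f (Icc 0 1)) (j : ι) :
    ip (expansionRemainder φ s f) (φ j) = if j ∈ s then 0 else ip f (φ j) := by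
  have hterm : ∀ i ∈ s, ContinuousOn (ip f (φ i) • φ i) (Icc 0 1) :=
    fun i _ => (hφ i).const_smul _
  have hsum : ContinuousOn (∑ i ∈ s, ip f (φ i) • φ i) (Icc 0 1) := by
    simpa only [Finset.sum_fn] using continuousOn_finsetSum s hterm
  rw [expansionRemainder, ip_sub_left hf hsum (hφ j), ip_sum_left s hterm (hφ j)]
  simp only [ip_smul_left, horth, mul_ite, mul_one, mul_zero, Finset.sum_ite_eq']
  split_ifs <;> ring

theorem sum_sq_ip_le (hφ : ∀ i, ContinuousOn (φ i) (Icc 0 1))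
    (horth : ∀ i j, ip (φ i) (φ j) = if i = j then 1 else 0) (s : Finset ι)
    (hf : ContinuousOn f (Icc 0 1)) : ∑ i ∈ s, ip f (φ i) ^ 2 ≤ ip f f := by
  have hterm : ∀ i ∈ s, ContinuousOn (ip f (φ i) • φ i) (Icc 0 1) :=
    fun i _ => (hφ i).const_smul _
  have hsum : ContinuousOn (∑ i ∈ s, ip f (φ i) • φ i) (Icc 0 1) := by
    simpa only [Finset.sum_fn] using continuousOn_finsetSum s hterm
  set g := expansionRemainder φ s f
  have hg : ContinuousOn g (Icc 0 1) := hf.sub hsum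
  have horth_g : ip (∑ i ∈ s, ip f (φ i) • φ i) g = 0 := by
    rw [ip_sum_left s hterm hg]
    refine Finset.sum_eq_zero fun i hi => ?_
    rw [ip_smul_left, ip_comm _ g, ip_expansionRemainder hφ horth s hf, if_pos hi, mul_zero]
  have hself : ip g g = ip f f - ∑ i ∈ s, ip f (φ i) ^ 2 := by
    calc ip g g = ip f g - ip (∑ i ∈ s, ip f (φ i) • φ i) g := ip_sub_left hf hsum hg
      _ = ip g f := by rw [horth_g, sub_zero, ip_comm]
      _ = ip f f - ip (∑ i ∈ s, ip f (φ i) • φ i) f := ip_sub_left hf hsum hf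
      _ = _ := by rw [ip_sum_left s hterm hf]; simp only [ip_smul_left, sq, ip_comm f]
  linarith [ip_self_nonneg g]

end Orthonormal

/-! ### The eigenstructure of a regular Sturm–Liouville problem -/

/-- A regular Sturm–Liouville problem on `[0,1]` with Robin boundary conditions, with its
eigenvalues `lam n` and orthonormal eigenfunctions `phi n`. As in the paper the eigenpairs are
numbered from `1`; `lam 0` and `phi 0` are arbitrary. Parseval's identity expresses that the
eigenfunctions form a Hilbert basis. -/
structure SturmLiouville (θ₁ θ₂ : ℝ) (p q : ℝ → ℝ) (lam : ℕ → ℝ) (phi : ℕ → ℝ → ℝ) :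
    Prop where
  angle_left : θ₁ ∈ Icc 0 (π / 2)
  angle_right : θ₂ ∈ Icc 0 (π / 2)
  p_reg : ContDiffOn ℝ 1 p (Icc 0 1)
  p_pos : ∀ x ∈ Icc (0 : ℝ) 1, 0 < p x
  q_cont : ContinuousOn q (Icc 0 1)
  q_pos : ∀ x ∈ Icc (0 : ℝ) 1, 0 < q x
  lam_pos : ∀ n ≥ 1, 0 < lam n
  lam_le_succ : ∀ n ≥ 1, lam n ≤ lam (n + 1)
  phi_mem : ∀ n ≥ 1, phi n ∈ robinDomain θ₁ θ₂
  phi_eig : ∀ n ≥ 1, EqOn (slOp p q (phi n)) (lam n • phi n) (Icc 0 1)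
  orth : ∀ m ≥ 1, ∀ n ≥ 1, ip (phi m) (phi n) = if m = n then 1 else 0
  parseval : ∀ f : ℝ → ℝ, ContinuousOn f (Icc 0 1) → ip f f = ∑' k, ip f (phi (k + 1)) ^ 2

namespace SturmLiouville

variable {θ₁ θ₂ : ℝ} {p q : ℝ → ℝ} {lam : ℕ → ℝ} {phi : ℕ → ℝ → ℝ} {f g : ℝ → ℝ}

theorem continuousOn_phi (H : SturmLiouville θ₁ θ₂ p q lam phi) {n : ℕ} (hn : 1 ≤ n) :
    ContinuousOn (phi n) (Icc 0 1) :=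
  (H.phi_mem n hn).1.continuousOn

theorem lam_mono (H : SturmLiouville θ₁ θ₂ p q lam phi) {m n : ℕ} (hm : 1 ≤ m) (hmn : m ≤ n) :
    lam m ≤ lam n := by
  induction n, hmn using Nat.le_induction with
  | base => exact le_rfl
  | succ n hn ih => exact ih.trans (H.lam_le_succ n (hm.trans hn))

theorem orth_succ (H : SturmLiouville θ₁ θ₂ p q lam phi) (i j : ℕ) :
    ip (phi (i + 1)) (phi (j + 1)) = if i = j then 1 else 0 := by
  simpa only [Nat.add_right_cancel_iff] using H.orth (i + 1) (by omega) (j + 1) (by omega)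

-- Bessel's inequality gives the summability that the junk value of `tsum` hides in `parseval`.
theorem hasSum_sq (H : SturmLiouville θ₁ θ₂ p q lam phi) (hf : ContinuousOn f (Icc 0 1)) :
    HasSum (fun k => ip f (phi (k + 1)) ^ 2) (ip f f) := by
  rw [H.parseval f hf]
  exact (summable_of_sum_le (fun _ => sq_nonneg _) fun s =>
    sum_sq_ip_le (φ := fun k => phi (k + 1)) (fun _ => H.continuousOn_phi (by omega))
      H.orth_succ s hf).hasSum

theorem hasSum_ip (H : SturmLiouville θ₁ θ₂ p q lam phi) (hf : ContinuousOn f (Icc 0 1))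
    (hg : ContinuousOn g (Icc 0 1)) :
    HasSum (fun k => ip f (phi (k + 1)) * ip g (phi (k + 1))) (ip f g) := by
  have hpolar : ip f g = 1 / 4 * (ip (f + g) (f + g) - ip (f - g) (f - g)) := by
    rw [ip_add_left hf hg (hf.add hg), ip_sub_left hf hg (hf.sub hg), ip_comm f (f + g),
      ip_comm g (f + g), ip_comm f (f - g), ip_comm g (f - g)]
    rw [ip_add_left hf hg hf, ip_add_left hf hg hg, ip_sub_left hf hg hf, ip_sub_left hf hg hg,
      ip_comm g f]
    ring
  rw [hpolar]
  refine (((H.hasSum_sq (hf.add hg)).sub (H.hasSum_sq (hf.sub hg))).mul_left (1 / 4)).congr_fun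
    fun k => ?_
  have hk := H.continuousOn_phi (Nat.le_add_left 1 k)
  rw [ip_add_left hf hg hk, ip_sub_left hf hg hk]
  ring

theorem ip_slOp_phi (H : SturmLiouville θ₁ θ₂ p q lam phi) (hf : f ∈ robinDomain θ₁ θ₂) {n : ℕ}
    (hn : 1 ≤ n) : ip (slOp p q f) (phi n) = lam n * ip f (phi n) := by
  rw [ip_slOp_comm H.p_reg H.q_cont hf (H.phi_mem n hn), ip_congr_left (H.phi_eig n hn),
    ip_smul_left, ip_comm]

theorem hasSum_energy (H : SturmLiouville θ₁ θ₂ p q lam phi) (hf : f ∈ robinDomain θ₁ θ₂) :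
    HasSum (fun k => lam (k + 1) * ip f (phi (k + 1)) ^ 2) (ip (slOp p q f) f) := by
  refine (H.hasSum_ip (continuousOn_slOp H.p_reg H.q_cont hf.1) hf.1.continuousOn).congr_fun
    fun k => ?_
  rw [H.ip_slOp_phi hf (Nat.le_add_left 1 k)]
  ring

theorem expansionRemainder_mem (H : SturmLiouville θ₁ θ₂ p q lam phi)
    (hf : f ∈ robinDomain θ₁ θ₂) (s : Finset ℕ) :
    expansionRemainder (fun k => phi (k + 1)) s f ∈ robinDomain θ₁ θ₂ :=
  sub_mem hf <| sum_mem fun k _ => Submodule.smul_mem _ _ (H.phi_mem (k + 1) (by omega))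

theorem energy_expansionRemainder (H : SturmLiouville θ₁ θ₂ p q lam phi)
    (hf : f ∈ robinDomain θ₁ θ₂) (M : ℕ) :
    let g := expansionRemainder (fun k => phi (k + 1)) (Finset.range M) f
    ip (slOp p q g) g = ∑' k, lam (k + M + 1) * ip f (phi (k + M + 1)) ^ 2 := by
  intro g
  have hcoef : ∀ k, ip g (phi (k + 1)) = if k ∈ Finset.range M then 0 else ip f (phi (k + 1)) :=
    ip_expansionRemainder (φ := fun k => phi (k + 1)) (fun _ => H.continuousOn_phi (by omega))
      H.orth_succ _ hf.1.continuousOn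
  have htail := (hasSum_nat_add_iff' M).2
    (H.hasSum_energy (H.expansionRemainder_mem hf (Finset.range M)))
  rw [Finset.sum_eq_zero fun k hk => by rw [hcoef k, if_pos hk]; ring, sub_zero] at htail
  rw [← htail.tsum_eq]
  exact tsum_congr fun k => by rw [hcoef (k + M), if_neg (by simp)]

theorem tendsto_sum_trace (H : SturmLiouville θ₁ θ₂ p q lam phi) (hf : f ∈ robinDomain θ₁ θ₂) :
    Filter.Tendsto (fun M => ∑ k ∈ Finset.range M, ip f (phi (k + 1)) * phi (k + 1) 0)
      Filter.atTop (nhds (f 0)) := by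
  obtain ⟨m, hm, hcoercive⟩ := exists_mul_h1sq_le_ip_slOp H.angle_left H.angle_right H.p_reg
    H.p_pos H.q_cont H.q_pos
  have hbound : ∀ M, (f 0 - ∑ k ∈ Finset.range M, ip f (phi (k + 1)) * phi (k + 1) 0) ^ 2
      ≤ 2 / m * ∑' k, lam (k + M + 1) * ip f (phi (k + M + 1)) ^ 2 := fun M => by
    set g := expansionRemainder (fun k => phi (k + 1)) (Finset.range M) f with hg_def
    have hg := H.expansionRemainder_mem hf (Finset.range M)
    have hg₀ : g 0 = f 0 - ∑ k ∈ Finset.range M, ip f (phi (k + 1)) * phi (k + 1) 0 := by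
      simp [hg_def, expansionRemainder]
    calc _ = g 0 ^ 2 := by rw [hg₀]
      _ ≤ 2 * h1sq g := sq_zero_le_h1sq (hg.1.of_le one_le_two)
      _ = 2 / m * (m * h1sq g) := by field_simp
      _ ≤ 2 / m * ip (slOp p q g) g := by gcongr; exact hcoercive g hg
      _ = _ := by rw [H.energy_expansionRemainder hf M]
  have htail : Filter.Tendsto (fun M => 2 / m * ∑' k, lam (k + M + 1) *
      ip f (phi (k + M + 1)) ^ 2) Filter.atTop (nhds 0) := by
    simpa using (tendsto_sum_nat_add fun k => lam (k + 1) * ip f (phi (k + 1)) ^ 2).const_mul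
      (2 / m)
  have hsq := (squeeze_zero (fun M => sq_nonneg _) hbound htail).sqrt
  simp only [Real.sqrt_sq_eq_abs, Real.sqrt_zero] at hsq
  simpa using ((tendsto_zero_iff_abs_tendsto_zero _).2 hsq).const_sub (f 0)

end SturmLiouville

/-! ### Differential inequalities with delay -/

theorem le_add_integral_of_hasDerivAt_le_delay {h t : ℝ} {W W' Γ ε : ℝ → ℝ} (hh : 0 ≤ h)
    (hW : ContinuousOn W (Ici 0)) (hΓ : ContinuousOn Γ (Ici (-h))) (hΓ0 : ∀ s ≥ -h, 0 ≤ Γ s)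
    (hε : ContinuousOn ε (Ici 0)) (hW' : ∀ s > 0, HasDerivAt W (W' s) s)
    (hle : ∀ s > 0, W' s ≤ -Γ s + Γ (s - h) + ε s) (ht : 0 ≤ t) :
    W t ≤ W 0 + (∫ s in -h..0, Γ s) + ∫ s in (0 : ℝ)..t, ε s := by
  have intΓ : ∀ a b, -h ≤ a → -h ≤ b → IntervalIntegrable Γ volume a b := fun a b ha hb =>
    (hΓ.mono fun s hs => (le_min ha hb).trans hs.1).intervalIntegrable
  have intε : IntervalIntegrable ε volume 0 t :=
    (hε.mono fun s hs => (le_min le_rfl ht).trans hs.1).intervalIntegrable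
  have intΓ_shift : IntervalIntegrable (fun s => Γ (s - h)) volume 0 t := by
    simpa using (intΓ (-h) (t - h) le_rfl (by linarith)).comp_sub_right h
  have int_head : IntervalIntegrable (fun s => -Γ s) volume 0 t :=
    (intΓ 0 t (by linarith) (by linarith)).neg
  have growth : W t - W 0 ≤ ∫ s in (0 : ℝ)..t, (-Γ s + Γ (s - h) + ε s) := by
    refine intervalIntegral.sub_le_integral_of_hasDeriv_right_of_le ht
      (hW.mono Icc_subset_Ici_self) (fun s hs => (hW' s hs.1).hasDerivWithinAt) ?_
      fun s hs => hle s hs.1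
    exact (intervalIntegrable_iff_integrableOn_Icc_of_le ht).1
      ((int_head.add intΓ_shift).add intε)
  have shift : ∫ s in (0 : ℝ)..t, Γ (s - h) = ∫ s in -h..t - h, Γ s := by
    simp [intervalIntegral.integral_comp_sub_right Γ h]
  have telescope : (∫ s in -h..t - h, Γ s) - ∫ s in (0 : ℝ)..t, Γ s
      = (∫ s in -h..0, Γ s) - ∫ s in t - h..t, Γ s :=
    intervalIntegral.integral_interval_sub_interval_comm (intΓ _ _ le_rfl (by linarith))
      (intΓ _ _ (by linarith) (by linarith)) (intΓ _ _ le_rfl (by linarith))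
  have window : 0 ≤ ∫ s in t - h..t, Γ s :=
    intervalIntegral.integral_nonneg (by linarith) fun s hs => hΓ0 s (by linarith [hs.1])
  rw [intervalIntegral.integral_add (int_head.add intΓ_shift) intε,
    intervalIntegral.integral_add int_head intΓ_shift, intervalIntegral.integral_neg, shift]
    at growth
  linarith

theorem integral_exp_mul_le {h δ g : ℝ} {G : ℝ → ℝ} (hh : 0 ≤ h) (hδ : 0 ≤ δ)
    (hG : ContinuousOn G (Icc (-h) 0)) (hG0 : ∀ s ∈ Icc (-h) 0, 0 ≤ G s)
    (hg : ∀ s ∈ Icc (-h) 0, G s ≤ g) : ∫ s in -h..0, exp (δ * s) * G s ≤ h * g := by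
  have pointwise : ∀ s ∈ Icc (-h) 0, exp (δ * s) * G s ≤ g := fun s hs =>
    (mul_le_of_le_one_left (hG0 s hs)
      (exp_le_one_iff.2 (mul_nonpos_of_nonneg_of_nonpos hδ hs.2))).trans (hg s hs)
  have integrable : IntervalIntegrable (fun s => exp (δ * s) * G s) volume (-h) 0 := by
    refine ContinuousOn.intervalIntegrable ?_
    rw [uIcc_of_le (by linarith)]
    fun_prop
  have := intervalIntegral.integral_mono_on (by linarith) integrable (by simp) pointwise
  simpa using this

/- Halanay-type argument: after multiplication by `exp (2δt)`, the delayed term `G (t - h)` is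
absorbed by the undelayed one because `exp (2δh) ≤ 1 + η`. -/
theorem exp_mul_le_of_hasDerivAt_le_delay {h δ η g t : ℝ} {V V' G err : ℝ → ℝ} (hh : 0 ≤ h)
    (hδ : 0 ≤ δ) (hδη : 2 * δ ≤ η) (hδh : exp (2 * δ * h) ≤ 1 + η)
    (hV : ContinuousOn V (Ici 0)) (hV0 : ∀ s ≥ 0, 0 ≤ V s)
    (hG : ContinuousOn G (Ici (-h))) (hG0 : ∀ s ≥ -h, 0 ≤ G s)
    (herr : ContinuousOn err (Ici 0)) (hV' : ∀ s > 0, HasDerivAt V (V' s) s)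
    (hle : ∀ s > 0, V' s ≤ -η * V s - (1 + η) * G s + G (s - h) + err s)
    (hg : ∀ s ∈ Icc (-h) 0, G s ≤ g) (ht : 0 ≤ t) :
    exp (2 * δ * t) * V t ≤
      V 0 + (1 + η) * (h * g) + ∫ s in (0 : ℝ)..t, exp (2 * δ * s) * err s := by
  have η_pos : 0 < 1 + η := (exp_pos _).trans_le hδh
  set Γ : ℝ → ℝ := fun s => (1 + η) * (exp (2 * δ * s) * G s)
  have Γ_nonneg : ∀ s ≥ -h, 0 ≤ Γ s := fun s hs =>
    mul_nonneg η_pos.le (mul_nonneg (exp_pos _).le (hG0 s hs))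
  have weighted_deriv : ∀ s > 0, HasDerivAt (fun s => exp (2 * δ * s) * V s)
      (exp (2 * δ * s) * (2 * δ) * V s + exp (2 * δ * s) * V' s) s := fun s hs => by
    simpa using (((hasDerivAt_id s).const_mul (2 * δ)).exp).fun_mul (hV' s hs)
  have weighted_le : ∀ s > 0, exp (2 * δ * s) * (2 * δ) * V s + exp (2 * δ * s) * V' s
      ≤ -Γ s + Γ (s - h) + exp (2 * δ * s) * err s := fun s hs => by
    have absorb_rate := mul_le_mul_of_nonneg_right hδη (hV0 s hs.le)
    have absorb_delay := mul_le_mul_of_nonneg_right hδh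
      (mul_nonneg (exp_pos (2 * δ * (s - h))).le (hG0 (s - h) (by linarith)))
    have split : exp (2 * δ * s) = exp (2 * δ * h) * exp (2 * δ * (s - h)) := by
      rw [← exp_add]; ring_nf
    rw [← mul_assoc, ← split] at absorb_delay
    have scaled := mul_le_mul_of_nonneg_left (add_le_add absorb_rate (hle s hs))
      (exp_pos (2 * δ * s)).le
    simp only [Γ]
    linarith
  have history : ∫ s in -h..0, Γ s ≤ (1 + η) * (h * g) := by
    rw [intervalIntegral.integral_const_mul]
    exact mul_le_mul_of_nonneg_left (integral_exp_mul_le hh (by positivity)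
      (hG.mono Icc_subset_Ici_self) (fun s hs => hG0 s hs.1) hg) η_pos.le
  have main := le_add_integral_of_hasDerivAt_le_delay hh (by fun_prop) (by fun_prop) Γ_nonneg
    (by fun_prop) weighted_deriv weighted_le ht
  simp only [mul_zero, exp_zero, one_mul] at main
  linarith

theorem exists_rate_le_and_exp_le {h η : ℝ} (hh : 0 < h) (hη : 0 < η) :
    ∃ δ > 0, 2 * δ ≤ η ∧ exp (2 * δ * h) ≤ 1 + η := by
  have log_pos : 0 < log (1 + η) := Real.log_pos (by linarith)
  refine ⟨min (η / 2) (log (1 + η) / (2 * h)), by positivity, ?_, ?_⟩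
  · linarith [min_le_left (η / 2) (log (1 + η) / (2 * h))]
  · rw [← le_log_iff_exp_le (by linarith)]
    have := min_le_right (η / 2) (log (1 + η) / (2 * h))
    rw [le_div_iff₀ (by positivity)] at this
    linarith

/-! ### Quadratic forms -/

section QuadraticForms

variable {ι : Type*} [Fintype ι]

theorem dotProduct_self_nonneg (x : ι → ℝ) : 0 ≤ x ⬝ᵥ x := by
  simpa using dotProduct_self_star_nonneg x

theorem sq_apply_le_dotProduct_self (x : ι → ℝ) (i : ι) : x i ^ 2 ≤ x ⬝ᵥ x := by
  rw [sq]
  exact Finset.single_le_sum (fun j _ => mul_self_nonneg (x j)) (Finset.mem_univ i)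

theorem dotProduct_sq_le (x y : ι → ℝ) : (x ⬝ᵥ y) ^ 2 ≤ (x ⬝ᵥ x) * (y ⬝ᵥ y) := by
  simpa [dotProduct, sq] using Finset.sum_mul_sq_le_sq_mul_sq Finset.univ x y

theorem exists_mul_dotProduct_self_le {A : Matrix ι ι ℝ} (hA : A.PosDef) :
    ∃ ε > (0 : ℝ), ∀ x : ι → ℝ, ε * (x ⬝ᵥ x) ≤ x ⬝ᵥ (A *ᵥ x) := by
  classical
  cases isEmpty_or_nonempty ι
  · exact ⟨1, one_pos, fun x => by simp [dotProduct]⟩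
  open scoped MatrixOrder Matrix.Norms.L2Operator in
  obtain ⟨ε, ε_pos, hε⟩ := (CFC.exists_pos_algebraMap_le_iff hA.isHermitian.isSelfAdjoint).2
    fun x hx => hA.isStrictlyPositive.spectrum_pos hx
  refine ⟨ε, ε_pos, fun x => ?_⟩
  have := (Matrix.le_iff.1 hε).dotProduct_mulVec_nonneg x
  simpa [sub_mulVec, dotProduct_sub, Algebra.algebraMap_eq_smul_one, smul_mulVec] using this

theorem exists_dotProduct_mulVec_le (A : Matrix ι ι ℝ) :
    ∃ C ≥ (0 : ℝ), ∀ x : ι → ℝ, x ⬝ᵥ (A *ᵥ x) ≤ C * (x ⬝ᵥ x) := by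
  refine ⟨∑ i, ∑ j, |A i j|, by positivity, fun x => ?_⟩
  rw [dotProduct, Finset.sum_mul]
  refine Finset.sum_le_sum fun i _ => ?_
  rw [mulVec, dotProduct, Finset.mul_sum, Finset.sum_mul]
  refine Finset.sum_le_sum fun j _ => ?_
  have cross : |x i * x j| ≤ x ⬝ᵥ x := by
    rw [abs_le]
    have hi := sq_apply_le_dotProduct_self x i
    have hj := sq_apply_le_dotProduct_self x j
    constructor <;> nlinarith [sq_nonneg (x i + x j), sq_nonneg (x i - x j)]
  calc x i * (A i j * x j) = A i j * (x i * x j) := by ring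
    _ ≤ |A i j| * |x i * x j| := by rw [← abs_mul]; exact le_abs_self _
    _ ≤ |A i j| * (x ⬝ᵥ x) := mul_le_mul_of_nonneg_left cross (abs_nonneg _)

theorem dotProduct_mulVec_comm {P : Matrix ι ι ℝ} (hP : P.IsHermitian) (x y : ι → ℝ) :
    x ⬝ᵥ (P *ᵥ y) = y ⬝ᵥ (P *ᵥ x) := by
  have transpose_eq : Pᵀ = P := (conjTranspose_eq_transpose_of_trivial P).symm.trans hP
  rw [dotProduct_mulVec, ← mulVec_transpose, transpose_eq, dotProduct_comm]

theorem two_mul_dotProduct_mulVec_smul_le {P : Matrix ι ι ℝ} (hP : P.PosSemidef) (c : ℝ)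
    (x y : ι → ℝ) :
    2 * (x ⬝ᵥ (P *ᵥ (c • y))) ≤ |c| * (x ⬝ᵥ (P *ᵥ x)) + |c| * (y ⬝ᵥ (P *ᵥ y)) := by
  have h_sub := hP.dotProduct_mulVec_nonneg (x - y)
  have h_add := hP.dotProduct_mulVec_nonneg (x + y)
  simp only [star_trivial, mulVec_sub, mulVec_add, sub_dotProduct, add_dotProduct, dotProduct_sub,
    dotProduct_add, dotProduct_mulVec_comm hP.1 y x] at h_sub h_add
  rw [mulVec_smul, dotProduct_smul, smul_eq_mul]
  rcases abs_cases c with ⟨h_abs, hc⟩ | ⟨h_abs, hc⟩ <;> rw [h_abs] <;> nlinarith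

theorem hasDerivAt_dotProduct {X Y : ℝ → ι → ℝ} {X' Y' : ι → ℝ} {t : ℝ} (hX : HasDerivAt X X' t)
    (hY : HasDerivAt Y Y' t) :
    HasDerivAt (fun s => X s ⬝ᵥ Y s) (X' ⬝ᵥ Y t + X t ⬝ᵥ Y') t := by
  simp only [dotProduct, ← Finset.sum_add_distrib]
  exact HasDerivAt.fun_sum fun i _ => (hasDerivAt_pi.1 hX i).fun_mul (hasDerivAt_pi.1 hY i)

theorem hasDerivAt_dotProduct_mulVec_self {A : Matrix ι ι ℝ} (hA : A.IsHermitian)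
    {X : ℝ → ι → ℝ} {X' : ι → ℝ} {t : ℝ} (hX : HasDerivAt X X' t) :
    HasDerivAt (fun s => X s ⬝ᵥ (A *ᵥ X s)) (2 * (X t ⬝ᵥ (A *ᵥ X'))) t := by
  have image : HasDerivAt (fun s => A *ᵥ X s) (A *ᵥ X') t :=
    (LinearMap.toContinuousLinearMap A.mulVecLin).hasFDerivAt.comp_hasDerivAt t hX
  have product := hasDerivAt_dotProduct hX image
  rwa [dotProduct_mulVec_comm hA X', ← two_mul] at product

theorem continuousOn_dotProduct {X Y : ℝ → ι → ℝ} {s : Set ℝ} (hX : ContinuousOn X s)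
    (hY : ContinuousOn Y s) : ContinuousOn (fun t => X t ⬝ᵥ Y t) s :=
  (continuous_fst.dotProduct continuous_snd : Continuous fun v : (ι → ℝ) × (ι → ℝ) => v.1 ⬝ᵥ v.2)
    |>.comp_continuousOn (hX.prodMk hY)

theorem continuousOn_mulVec (A : Matrix ι ι ℝ) {X : ℝ → ι → ℝ} {s : Set ℝ}
    (hX : ContinuousOn X s) : ContinuousOn (fun t => A *ᵥ X t) s :=
  (continuous_const.matrix_mulVec continuous_id : Continuous fun v : ι → ℝ => A *ᵥ v)
    |>.comp_continuousOn hX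

end QuadraticForms

theorem two_mul_le_sq_div_add {α : ℝ} (hα : 0 < α) (x y : ℝ) :
    2 * x * y ≤ x ^ 2 / α + α * y ^ 2 := by
  have square : (x - α * y) ^ 2 / α = x ^ 2 / α - 2 * x * y + α * y ^ 2 := by field_simp; ring
  have : 0 ≤ (x - α * y) ^ 2 / α := by positivity
  linarith

/-! ### Lyapunov analysis of the modal system -/

/-- State of the modal system: observer and observation errors of the actuated modes (`core`),
observation errors of the modes that are only estimated (`fast`), plant modes beyond the observer
(`residual`), and the input. -/
structure ModalState (m n : Type*) where
  core : m → ℝ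
  fast : n → ℝ
  residual : ℕ → ℝ
  input : ℝ

/-- Coefficients of the delayed closed loop in modal coordinates: `F₁`, `F₂`, `F₃`, `ℒ`, `K̃` in the
notation of the LMIs, the delay coefficient `c`, the reaction shift `q_c`, and, for the residual
modes, the eigenvalues `l` and the lifting coefficients `a`, `b`. -/
structure ModalSystem (m n : Type*) where
  F₁ : Matrix m m ℝ
  F₂ : Matrix m n ℝ
  F₃ : Matrix n n ℝ
  inj : m → ℝ
  gain : m → ℝ
  c : ℝ
  q_c : ℝ
  l : ℕ → ℝ
  a : ℕ → ℝ
  b : ℕ → ℝ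

section LyapunovDecay

variable {m n : Type*} [Fintype m] [Fintype n]

namespace ModalState

/-- Squared norm of a state, its residual part truncated to `M` modes. -/
def sqNorm (M : ℕ) (x : ModalState m n) : ℝ :=
  x.core ⬝ᵥ x.core + x.fast ⬝ᵥ x.fast + ∑ k ∈ Finset.range M, x.residual k ^ 2 + x.input ^ 2

end ModalState

namespace ModalSystem

variable (S : ModalSystem m n)

/-- The delay-free part of the dynamics of `core`, driven by the residual output `ζ`. -/
def drift (x : ModalState m n) (ζ : ℝ) : m → ℝ :=
  S.F₁ *ᵥ x.core + S.F₂ *ᵥ x.fast + ζ • S.inj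

/-- Velocity of `core` at the state `x`, when the delayed state is `xd`. -/
def coreRate (x xd : ModalState m n) (ζ : ℝ) : m → ℝ := S.drift x ζ + S.c • xd.core

/-- Velocity of `fast` at the state `x`, when the delayed state is `xd`. -/
def fastRate (x xd : ModalState m n) : n → ℝ := S.F₃ *ᵥ x.fast + S.c • xd.fast

/-- Velocity of the `k`-th residual mode; it involves the velocity `gain ⬝ᵥ coreRate` of the input
because the boundary control was lifted into the domain. -/
def residualRate (x xd : ModalState m n) (ζ : ℝ) (k : ℕ) : ℝ :=
  (-S.l k + S.q_c) * x.residual k + S.c * xd.residual k + S.a k * (S.gain ⬝ᵥ x.core)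
    + S.b k * (S.gain ⬝ᵥ S.coreRate x xd ζ) - S.c * S.b k * xd.input

/-- Energy `Σ lₖ wₖ²` of the first `M` residual modes. -/
def residualEnergy (M : ℕ) (x : ModalState m n) : ℝ :=
  ∑ k ∈ Finset.range M, S.l k * x.residual k ^ 2

/-- Squared energy norm of a state, its residual part truncated to `M` modes. -/
def sqEnergyNorm (M : ℕ) (x : ModalState m n) : ℝ :=
  x.core ⬝ᵥ x.core + x.fast ⬝ᵥ x.fast + S.residualEnergy M x

/-- Trajectories of the modal system with delay `h`. The residual output `ζ` is known only through
the bound `ζ² ≤ Mφ Σ lₖ wₖ²` over all residual modes; `defect` expresses it on truncations. -/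
structure IsTrajectory (h Mφ : ℝ) (x : ℝ → ModalState m n) (ζ : ℝ → ℝ) : Prop where
  continuousOn_core : ContinuousOn (fun t => (x t).core) (Ici (-h))
  continuousOn_fast : ContinuousOn (fun t => (x t).fast) (Ici (-h))
  continuousOn_residual : ∀ k, ContinuousOn (fun t => (x t).residual k) (Ici (-h))
  continuousOn_input : ContinuousOn (fun t => (x t).input) (Ici (-h))
  continuousOn_output : ContinuousOn ζ (Ici 0)
  hasDerivAt_core : ∀ t > 0,
    HasDerivAt (fun s => (x s).core) (S.coreRate (x t) (x (t - h)) (ζ t)) t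
  hasDerivAt_fast : ∀ t > 0, HasDerivAt (fun s => (x s).fast) (S.fastRate (x t) (x (t - h))) t
  hasDerivAt_residual : ∀ k, ∀ t > 0,
    HasDerivAt (fun s => (x s).residual k) (S.residualRate (x t) (x (t - h)) (ζ t) k) t
  input_eq : ∀ t ≥ 0, (x t).input = S.gain ⬝ᵥ (x t).core
  defect : ∀ t ≥ 0, Filter.Tendsto
    (fun M => max 0 (ζ t ^ 2 - Mφ * S.residualEnergy M (x t))) Filter.atTop (nhds 0)

end ModalSystem

/-- The constant `𝔠` of the LMIs: the share of the parabolic dissipation left after the coupling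
terms have been bounded by Young's inequality. -/
def youngMargin (c α₁ α₂ α₃ α₄ : ℝ) : ℝ := 1 - (|c| / α₁ + 1 / α₂ + 1 / α₃ + |c| / α₄) / 2

/-- A solution of the LMIs for a modal system, with `Ψ ≺ 0`, `Θ₁ ⪯ 0`, `Θ₂ ⪯ 0` written as
inequalities between quadratic forms. -/
structure LyapunovCertificate (S : ModalSystem m n) where
  (P Q₁ : Matrix m m ℝ)
  (Q₂ : Matrix n n ℝ)
  (r₁ r₂ β γ α₁ α₂ α₃ α₄ l₀ Ra Rb Mφ ε : ℝ)
  P_posDef : P.PosDef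
  Q₁_posSemidef : Q₁.PosSemidef
  Q₂_posSemidef : Q₂.PosSemidef
  r₁_pos : 0 < r₁
  r₂_pos : 0 < r₂
  β_pos : 0 < β
  γ_pos : 0 < γ
  α₁_pos : 0 < α₁
  α₂_pos : 0 < α₂
  α₃_pos : 0 < α₃
  α₄_pos : 0 < α₄
  l₀_pos : 0 < l₀
  ε_pos : 0 < ε
  Mφ_nonneg : 0 ≤ Mφ
  margin_nonneg : 0 ≤ youngMargin S.c α₁ α₂ α₃ α₄
  l₀_le : ∀ k, l₀ ≤ S.l k
  sum_a_le : ∀ M, ∑ k ∈ Finset.range M, S.a k ^ 2 ≤ Ra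
  sum_b_le : ∀ M, ∑ k ∈ Finset.range M, S.b k ^ 2 ≤ Rb
  psi_le : ∀ x ζ, 2 * (x.core ⬝ᵥ (P *ᵥ S.drift x ζ)) + |S.c| * (x.core ⬝ᵥ (P *ᵥ x.core))
      + x.core ⬝ᵥ (Q₁ *ᵥ x.core) + α₂ * γ * Ra * (S.gain ⬝ᵥ x.core) ^ 2
      + r₁ * (2 * (x.fast ⬝ᵥ (S.F₃ *ᵥ x.fast)) + |S.c| * (x.fast ⬝ᵥ x.fast))
      + x.fast ⬝ᵥ (Q₂ *ᵥ x.fast) - β * ζ ^ 2 + 2 * α₃ * γ * Rb * (S.gain ⬝ᵥ S.drift x ζ) ^ 2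
    ≤ -(ε * (x.core ⬝ᵥ x.core + x.fast ⬝ᵥ x.fast))
  theta1_le : ∀ v, |S.c| * (v ⬝ᵥ (P *ᵥ v))
      + (2 * α₃ * |S.c| + α₄) * γ * |S.c| * Rb * (S.gain ⬝ᵥ v) ^ 2 ≤ v ⬝ᵥ (Q₁ *ᵥ v)
  theta2_le : ∀ v, r₁ * |S.c| * (v ⬝ᵥ v) ≤ v ⬝ᵥ (Q₂ *ᵥ v)
  theta3_le : γ * α₁ * |S.c| ≤ r₂
  theta4_neg : 2 * γ * (-youngMargin S.c α₁ α₂ α₃ α₄ * l₀ + S.q_c) + β * Mφ + r₂ / l₀ < 0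

theorem two_mul_mul_le_abs_mul {α : ℝ} (hα : 0 < α) (c x y : ℝ) :
    2 * x * (c * y) ≤ |c| * (x ^ 2 / α + α * y ^ 2) :=
  calc 2 * x * (c * y) ≤ |2 * x * (c * y)| := le_abs_self _
    _ = |c| * (2 * |x| * |y|) := by rw [abs_mul, abs_mul, abs_mul, abs_two]; ring
    _ ≤ |c| * (|x| ^ 2 / α + α * |y| ^ 2) :=
      mul_le_mul_of_nonneg_left (two_mul_le_sq_div_add hα _ _) (abs_nonneg _)
    _ = _ := by rw [sq_abs, sq_abs]

theorem residual_mode_dissipation {α₁ α₂ α₃ α₄ c : ℝ} (hα₁ : 0 < α₁) (hα₂ : 0 < α₂)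
    (hα₃ : 0 < α₃) (hα₄ : 0 < α₄) (h_margin : 0 ≤ youngMargin c α₁ α₂ α₃ α₄) {l₀ l : ℝ}
    (hl₀ : 0 ≤ l₀) (hl : l₀ ≤ l) (q_c a b w wd u v ud : ℝ) :
    2 * l * w * ((-l + q_c) * w + c * wd + a * u + b * v - c * b * ud) ≤
      2 * (-youngMargin c α₁ α₂ α₃ α₄ * l₀ + q_c) * (l * w ^ 2) + α₁ * |c| * wd ^ 2
        + α₂ * u ^ 2 * a ^ 2 + α₃ * v ^ 2 * b ^ 2 + |c| * α₄ * ud ^ 2 * b ^ 2 := by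
  set y := l * w with y_eq
  have delayed_state := two_mul_mul_le_abs_mul hα₁ c y wd
  have input := two_mul_le_sq_div_add hα₂ y (a * u)
  have input_rate := two_mul_le_sq_div_add hα₃ y (b * v)
  have delayed_input := two_mul_mul_le_abs_mul hα₄ (-c) y (b * ud)
  rw [abs_neg] at delayed_input
  have spectral_gap : youngMargin c α₁ α₂ α₃ α₄ * l₀ * (l * w ^ 2)
      ≤ youngMargin c α₁ α₂ α₃ α₄ * y ^ 2 := by
    rw [y_eq, mul_pow, mul_assoc, sq l, mul_assoc l]
    have hlw : 0 ≤ l * w ^ 2 := mul_nonneg (hl₀.trans hl) (sq_nonneg w)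
    gcongr
  have margin : -2 * y ^ 2 + |c| * (y ^ 2 / α₁) + y ^ 2 / α₂ + y ^ 2 / α₃ + |c| * (y ^ 2 / α₄)
      = -2 * youngMargin c α₁ α₂ α₃ α₄ * y ^ 2 := by
    rw [youngMargin]; ring
  calc _ = -2 * y ^ 2 + 2 * q_c * (l * w ^ 2) + 2 * y * (c * wd) + 2 * y * (a * u)
          + 2 * y * (b * v) + 2 * y * (-c * (b * ud)) := by rw [y_eq]; ring
    _ ≤ _ := by linarith

namespace LyapunovCertificate

variable {S : ModalSystem m n} (C : LyapunovCertificate S)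

theorem Rb_nonneg : 0 ≤ C.Rb := by simpa using C.sum_b_le 0

include C in
theorem l_pos (k : ℕ) : 0 < S.l k := C.l₀_pos.trans_le (C.l₀_le k)

/-- The instantaneous part of the Lyapunov functional, truncated to `M` residual modes. -/
def energy (M : ℕ) (x : ModalState m n) : ℝ :=
  x.core ⬝ᵥ (C.P *ᵥ x.core) + C.r₁ * (x.fast ⬝ᵥ x.fast) + C.γ * S.residualEnergy M x

/-- Time derivative of `energy` along the modal system. -/
def energyRate (M : ℕ) (x xd : ModalState m n) (ζ : ℝ) : ℝ :=
  2 * (x.core ⬝ᵥ (C.P *ᵥ S.coreRate x xd ζ)) + 2 * C.r₁ * (x.fast ⬝ᵥ S.fastRate x xd)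
    + C.γ * ∑ k ∈ Finset.range M, 2 * S.l k * x.residual k * S.residualRate x xd ζ k

/-- Density of the Krasovskii terms, which compensate the delayed state. -/
def memory (M : ℕ) (x : ModalState m n) : ℝ :=
  x.core ⬝ᵥ (C.Q₁ *ᵥ x.core) + x.fast ⬝ᵥ (C.Q₂ *ᵥ x.fast)
    + C.r₂ * ∑ k ∈ Finset.range M, x.residual k ^ 2

/-- Weight of the delayed input in the dissipation inequality. -/
def inputWeight : ℝ := C.γ * |S.c| * C.α₄ * C.Rb

/-- Violation of the bound `ζ² ≤ Mφ Σ lₖ wₖ²` on the first `M` residual modes. -/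
def outputDefect (M : ℕ) (x : ModalState m n) (ζ : ℝ) : ℝ :=
  C.β * max 0 (ζ ^ 2 - C.Mφ * S.residualEnergy M x)

theorem inputWeight_nonneg : 0 ≤ C.inputWeight :=
  mul_nonneg (mul_nonneg (mul_nonneg C.γ_pos.le (abs_nonneg _)) C.α₄_pos.le) C.Rb_nonneg

include C in
theorem residualEnergy_nonneg (M : ℕ) (x : ModalState m n) : 0 ≤ S.residualEnergy M x :=
  Finset.sum_nonneg fun k _ => mul_nonneg (C.l_pos k).le (sq_nonneg _)

theorem core_fast_dissipation (x xd : ModalState m n) (ζ : ℝ) :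
    2 * (x.core ⬝ᵥ (C.P *ᵥ S.coreRate x xd ζ)) + 2 * C.r₁ * (x.fast ⬝ᵥ S.fastRate x xd) ≤
      -(C.ε * (x.core ⬝ᵥ x.core + x.fast ⬝ᵥ x.fast)) - x.core ⬝ᵥ (C.Q₁ *ᵥ x.core)
        - x.fast ⬝ᵥ (C.Q₂ *ᵥ x.fast) + C.β * ζ ^ 2 - C.α₂ * C.γ * C.Ra * (S.gain ⬝ᵥ x.core) ^ 2
        - 2 * C.α₃ * C.γ * C.Rb * (S.gain ⬝ᵥ S.drift x ζ) ^ 2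
        + |S.c| * (xd.core ⬝ᵥ (C.P *ᵥ xd.core)) + C.r₁ * |S.c| * (xd.fast ⬝ᵥ xd.fast) := by
  classical
  have core_delay := two_mul_dotProduct_mulVec_smul_le C.P_posDef.posSemidef S.c x.core xd.core
  have fast_delay := two_mul_dotProduct_mulVec_smul_le (PosSemidef.one (n := n) (R := ℝ)) S.c
    x.fast xd.fast
  simp only [one_mulVec] at fast_delay
  have fast_delay_scaled := mul_le_mul_of_nonneg_left fast_delay C.r₁_pos.le
  have psi := C.psi_le x ζ
  rw [ModalSystem.coreRate, ModalSystem.fastRate, mulVec_add, dotProduct_add, dotProduct_add]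
  linarith

theorem residual_dissipation (M : ℕ) (x xd : ModalState m n) (ζ : ℝ) :
    C.γ * ∑ k ∈ Finset.range M, 2 * S.l k * x.residual k * S.residualRate x xd ζ k ≤
      2 * C.γ * (-youngMargin S.c C.α₁ C.α₂ C.α₃ C.α₄ * C.l₀ + S.q_c) * S.residualEnergy M x
        + C.r₂ * ∑ k ∈ Finset.range M, xd.residual k ^ 2
        + C.α₂ * C.γ * C.Ra * (S.gain ⬝ᵥ x.core) ^ 2
        + C.α₃ * C.γ * C.Rb * (S.gain ⬝ᵥ S.coreRate x xd ζ) ^ 2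
        + C.inputWeight * xd.input ^ 2 := by
  have modes := Finset.sum_le_sum fun k (_ : k ∈ Finset.range M) =>
    residual_mode_dissipation C.α₁_pos C.α₂_pos C.α₃_pos C.α₄_pos C.margin_nonneg C.l₀_pos.le
      (C.l₀_le k) S.q_c (S.a k) (S.b k) (x.residual k) (xd.residual k) (S.gain ⬝ᵥ x.core)
      (S.gain ⬝ᵥ S.coreRate x xd ζ) xd.input
  simp only [Finset.sum_add_distrib, ← Finset.mul_sum] at modes
  have hα₂ := C.α₂_pos
  have hα₃ := C.α₃_pos
  have hα₄ := C.α₄_pos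
  have input := mul_le_mul_of_nonneg_left (C.sum_a_le M)
    (by positivity : 0 ≤ C.α₂ * (S.gain ⬝ᵥ x.core) ^ 2)
  have input_rate := mul_le_mul_of_nonneg_left (C.sum_b_le M)
    (by positivity : 0 ≤ C.α₃ * (S.gain ⬝ᵥ S.coreRate x xd ζ) ^ 2)
  have delayed_input := mul_le_mul_of_nonneg_left (C.sum_b_le M)
    (by positivity : 0 ≤ |S.c| * C.α₄ * xd.input ^ 2)
  have delayed_state := mul_le_mul_of_nonneg_right C.theta3_le
    (Finset.sum_nonneg fun k (_ : k ∈ Finset.range M) => sq_nonneg (xd.residual k))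
  have scaled := mul_le_mul_of_nonneg_left
    (modes.trans (add_le_add (add_le_add (add_le_add_right input _) input_rate) delayed_input))
    C.γ_pos.le
  rw [inputWeight]
  simp only [ModalSystem.residualRate, ModalSystem.residualEnergy]
  linarith

theorem energyRate_le (M : ℕ) (x xd : ModalState m n) (ζ : ℝ) :
    C.energyRate M x xd ζ ≤ -(C.ε * (x.core ⬝ᵥ x.core + x.fast ⬝ᵥ x.fast))
      + 2 * C.γ * (-youngMargin S.c C.α₁ C.α₂ C.α₃ C.α₄ * C.l₀ + S.q_c) * S.residualEnergy M x
      + C.β * ζ ^ 2 - x.core ⬝ᵥ (C.Q₁ *ᵥ x.core) - x.fast ⬝ᵥ (C.Q₂ *ᵥ x.fast)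
      + C.memory M xd + C.inputWeight * (xd.input ^ 2 - (S.gain ⬝ᵥ xd.core) ^ 2) := by
  have input_rate : (S.gain ⬝ᵥ S.coreRate x xd ζ) ^ 2 ≤
      2 * (S.gain ⬝ᵥ S.drift x ζ) ^ 2 + 2 * (|S.c| * |S.c|) * (S.gain ⬝ᵥ xd.core) ^ 2 := by
    rw [ModalSystem.coreRate, dotProduct_add, dotProduct_smul, smul_eq_mul, abs_mul_abs_self]
    nlinarith [sq_nonneg (S.gain ⬝ᵥ S.drift x ζ - S.c * (S.gain ⬝ᵥ xd.core))]
  have input_rate_scaled := mul_le_mul_of_nonneg_left input_rate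
    (mul_nonneg (mul_nonneg C.α₃_pos.le C.γ_pos.le) C.Rb_nonneg)
  have core_fast := C.core_fast_dissipation x xd ζ
  have residual := C.residual_dissipation M x xd ζ
  have theta1 := C.theta1_le xd.core
  have theta2 := C.theta2_le xd.fast
  rw [energyRate, memory]
  simp only [inputWeight] at residual ⊢
  linarith

theorem mul_sum_residual_sq_le (M : ℕ) (x : ModalState m n) :
    C.r₂ * ∑ k ∈ Finset.range M, x.residual k ^ 2 ≤ C.r₂ / C.l₀ * S.residualEnergy M x := by
  rw [div_mul_eq_mul_div, le_div_iff₀' C.l₀_pos, mul_left_comm]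
  refine mul_le_mul_of_nonneg_left ?_ C.r₂_pos.le
  rw [Finset.mul_sum, ModalSystem.residualEnergy]
  gcongr with k
  exact C.l₀_le k

theorem exists_energy_add_memory_le :
    ∃ B > 0, ∀ (M : ℕ) (x : ModalState m n),
      C.energy M x + C.memory M x ≤ B * S.sqEnergyNorm M x := by
  obtain ⟨B₁, hB₁, core_le⟩ := exists_dotProduct_mulVec_le (C.P + C.Q₁)
  obtain ⟨B₂, hB₂, fast_le⟩ := exists_dotProduct_mulVec_le C.Q₂
  have hγ := C.γ_pos
  have hr₁ := C.r₁_pos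
  have ratio_nonneg : 0 ≤ C.r₂ / C.l₀ := div_nonneg C.r₂_pos.le C.l₀_pos.le
  refine ⟨B₁ + (C.r₁ + B₂) + (C.γ + C.r₂ / C.l₀), by positivity, fun M x => ?_⟩
  have core := core_le x.core
  rw [add_mulVec, dotProduct_add] at core
  have fast := fast_le x.fast
  have residual := C.mul_sum_residual_sq_le M x
  have core_nonneg := dotProduct_self_nonneg x.core
  have fast_nonneg := dotProduct_self_nonneg x.fast
  have residual_nonneg := C.residualEnergy_nonneg M x
  calc C.energy M x + C.memory M x ≤ B₁ * (x.core ⬝ᵥ x.core)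
        + (C.r₁ + B₂) * (x.fast ⬝ᵥ x.fast) + (C.γ + C.r₂ / C.l₀) * S.residualEnergy M x := by
        rw [energy, memory]; linarith
    _ ≤ _ := by
        rw [ModalSystem.sqEnergyNorm, mul_add, mul_add]
        exact add_le_add (add_le_add (mul_le_mul_of_nonneg_right (by linarith) core_nonneg)
          (mul_le_mul_of_nonneg_right (by linarith) fast_nonneg))
          (mul_le_mul_of_nonneg_right (by linarith) residual_nonneg)

theorem exists_margin :
    ∃ η > 0, ∀ (M : ℕ) (x : ModalState m n), η * (C.energy M x + C.memory M x) ≤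
      C.ε * (x.core ⬝ᵥ x.core + x.fast ⬝ᵥ x.fast)
      - (2 * C.γ * (-youngMargin S.c C.α₁ C.α₂ C.α₃ C.α₄ * C.l₀ + S.q_c) + C.β * C.Mφ
        + C.r₂ / C.l₀) * S.residualEnergy M x := by
  obtain ⟨B, B_pos, total_le⟩ := C.exists_energy_add_memory_le
  set θ := -(2 * C.γ * (-youngMargin S.c C.α₁ C.α₂ C.α₃ C.α₄ * C.l₀ + S.q_c) + C.β * C.Mφ
    + C.r₂ / C.l₀) with θ_eq
  have θ_pos : 0 < θ := neg_pos.2 C.theta4_neg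
  have hε := C.ε_pos
  refine ⟨min C.ε θ / B, by positivity, fun M x => ?_⟩
  have core_nonneg := dotProduct_self_nonneg x.core
  have fast_nonneg := dotProduct_self_nonneg x.fast
  have residual_nonneg := C.residualEnergy_nonneg M x
  calc _ ≤ min C.ε θ / B * (B * S.sqEnergyNorm M x) := by
        gcongr; exact total_le M x
    _ = min C.ε θ * (x.core ⬝ᵥ x.core + x.fast ⬝ᵥ x.fast)
        + min C.ε θ * S.residualEnergy M x := by rw [ModalSystem.sqEnergyNorm]; field_simp
    _ ≤ C.ε * (x.core ⬝ᵥ x.core + x.fast ⬝ᵥ x.fast) + θ * S.residualEnergy M x := by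
        gcongr
        · exact min_le_left _ _
        · exact min_le_right _ _
    _ = _ := by rw [θ_eq]; ring

theorem exists_dissipation :
    ∃ η > 0, ∀ (M : ℕ) (x xd : ModalState m n) (ζ : ℝ), C.energyRate M x xd ζ ≤
      -η * C.energy M x - (1 + η) * C.memory M x + C.memory M xd
        + C.inputWeight * (xd.input ^ 2 - (S.gain ⬝ᵥ xd.core) ^ 2) + C.outputDefect M x ζ := by
  obtain ⟨η, η_pos, margin⟩ := C.exists_margin
  refine ⟨η, η_pos, fun M x xd ζ => ?_⟩
  have rate := C.energyRate_le M x xd ζ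
  have output : C.β * ζ ^ 2 ≤ C.β * C.Mφ * S.residualEnergy M x + C.outputDefect M x ζ := by
    have := mul_le_mul_of_nonneg_left
      (le_max_right 0 (ζ ^ 2 - C.Mφ * S.residualEnergy M x)) C.β_pos.le
    rw [outputDefect]
    linarith
  have residual := C.mul_sum_residual_sq_le M x
  have memory_eq : C.memory M x = x.core ⬝ᵥ (C.Q₁ *ᵥ x.core) + x.fast ⬝ᵥ (C.Q₂ *ᵥ x.fast)
      + C.r₂ * ∑ k ∈ Finset.range M, x.residual k ^ 2 := rfl
  linarith [margin M x]

end LyapunovCertificate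

end LyapunovDecay

section LyapunovDecay

variable {m n : Type*} [Fintype m] [Fintype n] {S : ModalSystem m n}

/-- The data of a trajectory, measured uniformly in the truncation order, are at most `D`. -/
def ModalSystem.DataBound (S : ModalSystem m n) (h : ℝ) (x : ℝ → ModalState m n)
    (D : ℝ) : Prop :=
  (∀ s ∈ Icc (-h) 0, ∀ M, (x s).sqNorm M ≤ D) ∧ ∀ M, S.sqEnergyNorm M (x 0) ≤ D

namespace ModalSystem.IsTrajectory

variable {h Mφ : ℝ} {x : ℝ → ModalState m n} {ζ : ℝ → ℝ} (T : S.IsTrajectory h Mφ x ζ)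
include T

theorem continuousOn_residualEnergy (M : ℕ) :
    ContinuousOn (fun t => S.residualEnergy M (x t)) (Ici (-h)) :=
  continuousOn_finsetSum _ fun k _ => continuousOn_const.mul ((T.continuousOn_residual k).pow 2)

theorem hasDerivAt_residualEnergy (M : ℕ) {t : ℝ} (ht : 0 < t) :
    HasDerivAt (fun s => S.residualEnergy M (x s)) (∑ k ∈ Finset.range M,
      2 * S.l k * (x t).residual k * S.residualRate (x t) (x (t - h)) (ζ t) k) t := by
  refine HasDerivAt.fun_sum fun k _ => ?_
  refine (((T.hasDerivAt_residual k t ht).fun_pow 2).const_mul (S.l k)).congr_deriv ?_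
  norm_num
  ring

end ModalSystem.IsTrajectory

namespace LyapunovCertificate

variable (C : LyapunovCertificate S)

/-- Contribution of an input that differs from the feedback law, as it may on `[-h, 0]`. -/
def inputMismatch (x : ModalState m n) : ℝ :=
  C.inputWeight * |x.input ^ 2 - (S.gain ⬝ᵥ x.core) ^ 2|

/-- Density of all terms of the dissipation inequality that involve the delayed state. -/
def history (M : ℕ) (x : ModalState m n) : ℝ := C.memory M x + C.inputMismatch x

theorem inputMismatch_nonneg (x : ModalState m n) : 0 ≤ C.inputMismatch x :=
  mul_nonneg C.inputWeight_nonneg (abs_nonneg _)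

theorem memory_nonneg (M : ℕ) (x : ModalState m n) : 0 ≤ C.memory M x := by
  have core := C.Q₁_posSemidef.dotProduct_mulVec_nonneg x.core
  have fast := C.Q₂_posSemidef.dotProduct_mulVec_nonneg x.fast
  rw [star_trivial] at core fast
  exact add_nonneg (add_nonneg core fast)
    (mul_nonneg C.r₂_pos.le (Finset.sum_nonneg fun k _ => sq_nonneg _))

theorem history_nonneg (M : ℕ) (x : ModalState m n) : 0 ≤ C.history M x :=
  add_nonneg (C.memory_nonneg M x) (C.inputMismatch_nonneg x)

theorem exists_mul_sqEnergyNorm_le_energy :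
    ∃ μ > 0, ∀ (M : ℕ) (x : ModalState m n), μ * S.sqEnergyNorm M x ≤ C.energy M x := by
  obtain ⟨ε, ε_pos, core_le⟩ := exists_mul_dotProduct_self_le C.P_posDef
  refine ⟨min ε (min C.r₁ C.γ), lt_min ε_pos (lt_min C.r₁_pos C.γ_pos), fun M x => ?_⟩
  have core := (mul_le_mul_of_nonneg_right (min_le_left ε (min C.r₁ C.γ))
    (dotProduct_self_nonneg x.core)).trans (core_le x.core)
  have fast := mul_le_mul_of_nonneg_right
    ((min_le_right ε (min C.r₁ C.γ)).trans (min_le_left _ _)) (dotProduct_self_nonneg x.fast)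
  have residual := mul_le_mul_of_nonneg_right
    ((min_le_right ε (min C.r₁ C.γ)).trans (min_le_right _ _)) (C.residualEnergy_nonneg M x)
  rw [energy, ModalSystem.sqEnergyNorm]
  linarith

include C in
theorem sqEnergyNorm_nonneg (M : ℕ) (x : ModalState m n) : 0 ≤ S.sqEnergyNorm M x :=
  add_nonneg (add_nonneg (dotProduct_self_nonneg _) (dotProduct_self_nonneg _))
    (C.residualEnergy_nonneg M x)

theorem energy_nonneg (M : ℕ) (x : ModalState m n) : 0 ≤ C.energy M x := by
  obtain ⟨μ, μ_pos, le_energy⟩ := C.exists_mul_sqEnergyNorm_le_energy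
  exact (mul_nonneg μ_pos.le (C.sqEnergyNorm_nonneg M x)).trans (le_energy M x)

include C in
theorem sqEnergyNorm_mono (x : ModalState m n) : Monotone fun M => S.sqEnergyNorm M x :=
  fun _ _ hM => add_le_add_right (Finset.sum_le_sum_of_subset_of_nonneg (Finset.range_mono hM)
    fun k _ _ => mul_nonneg (C.l_pos k).le (sq_nonneg _)) _

theorem inputMismatch_le (M : ℕ) (x : ModalState m n) :
    C.inputMismatch x ≤ C.inputWeight * (1 + S.gain ⬝ᵥ S.gain) * x.sqNorm M := by
  rw [inputMismatch, mul_assoc]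
  refine mul_le_mul_of_nonneg_left ?_ C.inputWeight_nonneg
  have core_nonneg := dotProduct_self_nonneg x.core
  have rest_nonneg : 0 ≤ x.fast ⬝ᵥ x.fast + ∑ k ∈ Finset.range M, x.residual k ^ 2 :=
    add_nonneg (dotProduct_self_nonneg _) (Finset.sum_nonneg fun k _ => sq_nonneg _)
  have gain_nonneg := dotProduct_self_nonneg S.gain
  have feedback := dotProduct_sq_le S.gain x.core
  calc |x.input ^ 2 - (S.gain ⬝ᵥ x.core) ^ 2|
      ≤ x.input ^ 2 + (S.gain ⬝ᵥ x.core) ^ 2 := by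
        rw [abs_le]; constructor <;> linarith [sq_nonneg x.input, sq_nonneg (S.gain ⬝ᵥ x.core)]
    _ ≤ x.input ^ 2 + (S.gain ⬝ᵥ S.gain) * (x.core ⬝ᵥ x.core) := by linarith
    _ ≤ _ := by
        rw [ModalState.sqNorm]
        nlinarith [mul_nonneg gain_nonneg rest_nonneg, mul_nonneg gain_nonneg (sq_nonneg x.input)]

theorem exists_history_le :
    ∃ B ≥ 0, ∀ (M : ℕ) (x : ModalState m n), C.history M x ≤ B * x.sqNorm M := by
  obtain ⟨B₁, hB₁, core_le⟩ := exists_dotProduct_mulVec_le C.Q₁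
  obtain ⟨B₂, hB₂, fast_le⟩ := exists_dotProduct_mulVec_le C.Q₂
  have hr₂ := C.r₂_pos
  have mismatch_nonneg : 0 ≤ C.inputWeight * (1 + S.gain ⬝ᵥ S.gain) :=
    mul_nonneg C.inputWeight_nonneg (by linarith [dotProduct_self_nonneg S.gain])
  refine ⟨B₁ + B₂ + C.r₂ + C.inputWeight * (1 + S.gain ⬝ᵥ S.gain), by positivity,
    fun M x => ?_⟩
  have core_nonneg := dotProduct_self_nonneg x.core
  have fast_nonneg := dotProduct_self_nonneg x.fast
  have residual_nonneg : 0 ≤ ∑ k ∈ Finset.range M, x.residual k ^ 2 :=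
    Finset.sum_nonneg fun k _ => sq_nonneg _
  have input_nonneg := sq_nonneg x.input
  have core : x.core ⬝ᵥ x.core ≤ x.sqNorm M := by rw [ModalState.sqNorm]; linarith
  have fast : x.fast ⬝ᵥ x.fast ≤ x.sqNorm M := by rw [ModalState.sqNorm]; linarith
  have residual : ∑ k ∈ Finset.range M, x.residual k ^ 2 ≤ x.sqNorm M := by
    rw [ModalState.sqNorm]; linarith
  rw [history, memory]
  linarith [(core_le x.core).trans (mul_le_mul_of_nonneg_left core hB₁),
    (fast_le x.fast).trans (mul_le_mul_of_nonneg_left fast hB₂),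
    mul_le_mul_of_nonneg_left residual hr₂.le, C.inputMismatch_le M x]

section Trajectory

variable {h : ℝ} {x : ℝ → ModalState m n} {ζ : ℝ → ℝ} (T : S.IsTrajectory h C.Mφ x ζ)
include T

theorem continuousOn_energy (M : ℕ) : ContinuousOn (fun t => C.energy M (x t)) (Ici (-h)) :=
  ((continuousOn_dotProduct T.continuousOn_core (continuousOn_mulVec C.P T.continuousOn_core)).add
    (continuousOn_const.mul (continuousOn_dotProduct T.continuousOn_fast T.continuousOn_fast))).add
    (continuousOn_const.mul (T.continuousOn_residualEnergy M))

theorem continuousOn_history (M : ℕ) : ContinuousOn (fun t => C.history M (x t)) (Ici (-h)) :=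
  (((continuousOn_dotProduct T.continuousOn_core
    (continuousOn_mulVec C.Q₁ T.continuousOn_core)).add
    (continuousOn_dotProduct T.continuousOn_fast
      (continuousOn_mulVec C.Q₂ T.continuousOn_fast))).add (continuousOn_const.mul
      (continuousOn_finsetSum _ fun k _ => (T.continuousOn_residual k).pow 2))).add
    (continuousOn_const.mul ((T.continuousOn_input.pow 2).sub
      ((continuousOn_dotProduct continuousOn_const T.continuousOn_core).pow 2)).abs)

theorem continuousOn_outputDefect (hh : 0 ≤ h) (M : ℕ) :
    ContinuousOn (fun t => C.outputDefect M (x t) (ζ t)) (Ici 0) :=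
  continuousOn_const.mul (continuousOn_const.sup ((T.continuousOn_output.pow 2).sub
    (continuousOn_const.mul
      ((T.continuousOn_residualEnergy M).mono (Ici_subset_Ici.2 (neg_nonpos.2 hh))))))

theorem hasDerivAt_energy (M : ℕ) {t : ℝ} (ht : 0 < t) :
    HasDerivAt (fun s => C.energy M (x s)) (C.energyRate M (x t) (x (t - h)) (ζ t)) t := by
  have core := hasDerivAt_dotProduct_mulVec_self C.P_posDef.isHermitian (T.hasDerivAt_core t ht)
  have fast := (hasDerivAt_dotProduct (T.hasDerivAt_fast t ht)
    (T.hasDerivAt_fast t ht)).const_mul C.r₁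
  have residual := (T.hasDerivAt_residualEnergy M ht).const_mul C.γ
  refine ((core.fun_add fast).fun_add residual).congr_deriv ?_
  rw [energyRate, dotProduct_comm (S.fastRate _ _)]
  ring

theorem inputMismatch_eq_zero {t : ℝ} (ht : 0 ≤ t) : C.inputMismatch (x t) = 0 := by
  rw [inputMismatch, T.input_eq t ht, sub_self, abs_zero, mul_zero]

theorem tendsto_integral_outputDefect (hh : 0 ≤ h) (δ : ℝ) {t : ℝ} (ht : 0 ≤ t) :
    Filter.Tendsto (fun M => ∫ s in (0 : ℝ)..t,
      Real.exp (2 * δ * s) * C.outputDefect M (x s) (ζ s)) Filter.atTop (nhds 0) := by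
  have subset_Ici : Icc 0 t ⊆ Ici (0 : ℝ) := fun s hs => hs.1
  have subset_Icc : Set.uIoc (0 : ℝ) t ⊆ Icc 0 t := by
    rw [uIoc_of_le ht]; exact Ioc_subset_Icc_self
  have continuous_exp : Continuous fun s : ℝ => Real.exp (2 * δ * s) := by fun_prop
  suffices limit : Filter.Tendsto (fun M => ∫ s in (0 : ℝ)..t,
      Real.exp (2 * δ * s) * C.outputDefect M (x s) (ζ s)) Filter.atTop
      (nhds (∫ _ in (0 : ℝ)..t, (0 : ℝ))) by
    rwa [intervalIntegral.integral_zero] at limit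
  refine intervalIntegral.tendsto_integral_filter_of_dominated_convergence
    (fun s => Real.exp (2 * δ * s) * (C.β * ζ s ^ 2)) (.of_forall fun M => ?_)
    (.of_forall fun M => .of_forall fun s _ => ?_) ?_ (.of_forall fun s hs => ?_)
  · exact ((continuous_exp.continuousOn.mul ((C.continuousOn_outputDefect T hh M).mono
      subset_Ici)).aestronglyMeasurable measurableSet_Icc).mono_set subset_Icc
  · have defect_nonneg : 0 ≤ C.outputDefect M (x s) (ζ s) :=
      mul_nonneg C.β_pos.le (le_max_left _ _)
    rw [norm_of_nonneg (mul_nonneg (exp_pos _).le defect_nonneg)]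
    refine mul_le_mul_of_nonneg_left (mul_le_mul_of_nonneg_left ?_ C.β_pos.le) (exp_pos _).le
    exact max_le (sq_nonneg _)
      (sub_le_self _ (mul_nonneg C.Mφ_nonneg (C.residualEnergy_nonneg M _)))
  · refine ContinuousOn.intervalIntegrable ?_
    rw [uIcc_of_le ht]
    exact continuous_exp.continuousOn.mul
      (continuousOn_const.mul ((T.continuousOn_output.mono subset_Ici).pow 2))
  · simpa only [mul_zero, outputDefect] using
      ((T.defect s (subset_Icc hs).1).const_mul C.β).const_mul (Real.exp (2 * δ * s))

end Trajectory

theorem exists_exp_mul_energy_le {h : ℝ} (hh : 0 < h) :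
    ∃ δ > 0, ∃ A > 0, ∀ x ζ D, S.IsTrajectory h C.Mφ x ζ → S.DataBound h x D → ∀ M, ∀ t ≥ 0,
      Real.exp (2 * δ * t) * C.energy M (x t) ≤
        A * D + ∫ s in (0 : ℝ)..t, Real.exp (2 * δ * s) * C.outputDefect M (x s) (ζ s) := by
  obtain ⟨η, η_pos, dissipation⟩ := C.exists_dissipation
  obtain ⟨δ, δ_pos, hδη, hδh⟩ := exists_rate_le_and_exp_le hh η_pos
  obtain ⟨B₀, B₀_pos, total_le⟩ := C.exists_energy_add_memory_le
  obtain ⟨B, B_nonneg, history_le⟩ := C.exists_history_le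
  refine ⟨δ, δ_pos, B₀ + (1 + η) * (h * B), by positivity, ?_⟩
  intro x ζ D T ⟨bound, bound_zero⟩ M t ht
  have neg_h_le : Ici (0 : ℝ) ⊆ Ici (-h) := Ici_subset_Ici.2 (by linarith)
  have comparison := exp_mul_le_of_hasDerivAt_le_delay hh.le δ_pos.le hδη hδh
    ((C.continuousOn_energy T M).mono neg_h_le) (fun s _ => C.energy_nonneg M (x s))
    (C.continuousOn_history T M) (fun s _ => C.history_nonneg M (x s))
    (C.continuousOn_outputDefect T hh.le M) (fun s hs => C.hasDerivAt_energy T M hs)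
    (fun s hs => ?_)
    (fun s hs => (history_le M (x s)).trans (mul_le_mul_of_nonneg_left (bound s hs M) B_nonneg)) ht
  · have initial : C.energy M (x 0) ≤ B₀ * D := by
      have := mul_le_mul_of_nonneg_left (bound_zero M) B₀_pos.le
      linarith [total_le M (x 0), C.memory_nonneg M (x 0)]
    linarith
  · have mismatch : C.inputWeight * ((x (s - h)).input ^ 2 - (S.gain ⬝ᵥ (x (s - h)).core) ^ 2)
        ≤ C.inputMismatch (x (s - h)) :=
      mul_le_mul_of_nonneg_left (le_abs_self _) C.inputWeight_nonneg
    simp only [history, C.inputMismatch_eq_zero T hs.le, add_zero]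
    linarith [dissipation M (x s) (x (s - h)) (ζ s)]

theorem exists_exp_decay {h : ℝ} (hh : 0 < h) :
    ∃ δ > 0, ∃ B > 0, ∀ x ζ D, S.IsTrajectory h C.Mφ x ζ → S.DataBound h x D → ∀ M, ∀ t ≥ 0,
      S.sqEnergyNorm M (x t) ≤ B * Real.exp (-2 * δ * t) * D := by
  obtain ⟨δ, δ_pos, A, A_pos, energy_le⟩ := C.exists_exp_mul_energy_le hh
  obtain ⟨μ, μ_pos, le_energy⟩ := C.exists_mul_sqEnergyNorm_le_energy
  refine ⟨δ, δ_pos, A / μ, div_pos A_pos μ_pos, fun x ζ D T data M t ht => ?_⟩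
  have truncated : ∀ M' ≥ M, Real.exp (2 * δ * t) * (μ * S.sqEnergyNorm M (x t)) ≤
      A * D + ∫ s in (0 : ℝ)..t, Real.exp (2 * δ * s) * C.outputDefect M' (x s) (ζ s) :=
    fun M' hM' =>
      calc _ ≤ Real.exp (2 * δ * t) * C.energy M' (x t) := by
            gcongr
            exact (mul_le_mul_of_nonneg_left (C.sqEnergyNorm_mono (x t) hM') μ_pos.le).trans
              (le_energy M' (x t))
        _ ≤ _ := energy_le x ζ D T data M' t ht
  have limit := ge_of_tendsto ((C.tendsto_integral_outputDefect T hh.le δ ht).const_add (A * D))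
    (Filter.eventually_atTop.2 ⟨M, truncated⟩)
  have exp_neg : Real.exp (-2 * δ * t) = (Real.exp (2 * δ * t))⁻¹ := by
    rw [← Real.exp_neg]; ring_nf
  rw [add_zero, ← le_div_iff₀' (exp_pos _), ← le_div_iff₀' μ_pos] at limit
  calc _ ≤ _ := limit
    _ = _ := by rw [exp_neg]; field_simp

end LyapunovCertificate

end LyapunovDecay

/-! ### Quadratic forms of the LMIs -/

section BlockForms

variable {ι κ : Type*} [Fintype ι] [Fintype κ]

theorem sumElim_dotProduct_fromBlocks_mulVec (A : Matrix ι ι ℝ) (B : Matrix ι κ ℝ)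
    (C : Matrix κ ι ℝ) (D : Matrix κ κ ℝ) (x : ι → ℝ) (y : κ → ℝ) :
    Sum.elim x y ⬝ᵥ (fromBlocks A B C D *ᵥ Sum.elim x y) =
      x ⬝ᵥ (A *ᵥ x) + x ⬝ᵥ (B *ᵥ y) + (y ⬝ᵥ (C *ᵥ x) + y ⬝ᵥ (D *ᵥ y)) := by
  simp only [fromBlocks_mulVec, Sum.elim_comp_inl, Sum.elim_comp_inr, sumElim_dotProduct_sumElim,
    dotProduct_add]

theorem dotProduct_vecMulVec_mulVec_self (v x : ι → ℝ) :
    x ⬝ᵥ (vecMulVec v v *ᵥ x) = (v ⬝ᵥ x) ^ 2 := by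
  rw [vecMulVec_mulVec, op_smul_eq_smul, dotProduct_smul, smul_eq_mul, dotProduct_comm x, sq]

theorem dotProduct_of_unit_col_mulVec (v x : ι → ℝ) (ζ : ℝ) :
    x ⬝ᵥ ((of fun i (_ : Unit) => v i) *ᵥ fun _ => ζ) = ζ * (x ⬝ᵥ v) := by
  simp only [dotProduct, mulVec, of_apply, Finset.univ_unique, Finset.sum_singleton,
    Finset.mul_sum]
  exact Finset.sum_congr rfl fun i _ => by ring

theorem dotProduct_of_unit_row_mulVec (v x : ι → ℝ) (ζ : ℝ) :
    (fun _ => ζ) ⬝ᵥ ((of fun (_ : Unit) j => v j) *ᵥ x) = ζ * (x ⬝ᵥ v) := by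
  simp only [dotProduct, mulVec, of_apply, Finset.univ_unique, Finset.sum_singleton]
  rw [Finset.sum_congr rfl fun j _ => mul_comm (v j) (x j)]

theorem dotProduct_transpose_mulVec_comm (P F : Matrix ι ι ℝ) (hP : P.IsHermitian) (x : ι → ℝ) :
    x ⬝ᵥ (Fᵀ *ᵥ (P *ᵥ x)) = x ⬝ᵥ (P *ᵥ (F *ᵥ x)) := by
  rw [dotProduct_mulVec, vecMul_transpose, dotProduct_mulVec_comm hP]

end BlockForms

section LMI

variable {N₀ N : ℕ} {P Q₁ F₁ : Matrix (Fin N₀ ⊕ Fin N₀) (Fin N₀ ⊕ Fin N₀) ℝ}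
  {Q₂ F₃ : Matrix (Fin (N - N₀)) (Fin (N - N₀)) ℝ}
  {F₂ : Matrix (Fin N₀ ⊕ Fin N₀) (Fin (N - N₀)) ℝ} {inj gain : Fin N₀ ⊕ Fin N₀ → ℝ}
  {c r₁ β γ α₂ α₃ α₄ Ra Rb : ℝ}

theorem Erow_dotProduct (X : Fin N₀ ⊕ Fin N₀ → ℝ) (Y : Fin (N - N₀) → ℝ) (ζ : ℝ) :
    Erow N₀ N F₁ F₂ inj gain ⬝ᵥ (Sum.elim (Sum.elim X Y) fun _ => ζ) =
      gain ⬝ᵥ (F₁ *ᵥ X + F₂ *ᵥ Y + ζ • inj) := by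
  rw [Erow, sumElim_dotProduct_sumElim, sumElim_dotProduct_sumElim, ← dotProduct_mulVec,
    ← dotProduct_mulVec, dotProduct_add, dotProduct_add, dotProduct_smul]
  simp [dotProduct, mul_comm]

theorem dotProduct_PsiM_mulVec (hP : P.IsHermitian) (E : SIdx N₀ N → ℝ)
    (X : Fin N₀ ⊕ Fin N₀ → ℝ) (Y : Fin (N - N₀) → ℝ) (ζ : ℝ) :
    (Sum.elim (Sum.elim X Y) fun _ => ζ) ⬝ᵥ
      (PsiM N₀ N P Q₁ F₁ Q₂ F₃ F₂ inj gain E c r₁ β γ α₂ α₃ Ra Rb *ᵥ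
        (Sum.elim (Sum.elim X Y) fun _ => ζ)) =
      2 * (X ⬝ᵥ (P *ᵥ (F₁ *ᵥ X + F₂ *ᵥ Y + ζ • inj))) + |c| * (X ⬝ᵥ (P *ᵥ X))
        + X ⬝ᵥ (Q₁ *ᵥ X) + α₂ * γ * Ra * (gain ⬝ᵥ X) ^ 2
        + r₁ * (2 * (Y ⬝ᵥ (F₃ *ᵥ Y)) + |c| * (Y ⬝ᵥ Y)) + Y ⬝ᵥ (Q₂ *ᵥ Y) - β * ζ ^ 2
        + 2 * α₃ * γ * Rb * (E ⬝ᵥ (Sum.elim (Sum.elim X Y) fun _ => ζ)) ^ 2 := by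
  have output :
      (fun _ : Unit => ζ) ⬝ᵥ ((of fun _ _ : Unit => -β) *ᵥ fun _ => ζ) = -β * ζ ^ 2 := by
    simp only [dotProduct, mulVec, of_apply, Finset.univ_unique, Finset.sum_singleton]
    ring
  have cross : Y ⬝ᵥ ((P * F₂)ᵀ *ᵥ X) = X ⬝ᵥ (P *ᵥ (F₂ *ᵥ Y)) := by
    rw [dotProduct_mulVec, vecMul_transpose, mulVec_mulVec, dotProduct_comm]
  have injection : Sum.elim X Y ⬝ᵥ (Sum.elim (P *ᵥ inj) fun _ => 0) = X ⬝ᵥ (P *ᵥ inj) := by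
    rw [sumElim_dotProduct_sumElim]
    simp [dotProduct]
  rw [PsiM, add_mulVec, dotProduct_add, sumElim_dotProduct_fromBlocks_mulVec,
    sumElim_dotProduct_fromBlocks_mulVec, dotProduct_of_unit_col_mulVec,
    dotProduct_of_unit_row_mulVec, injection, output, cross, smul_mulVec, dotProduct_smul,
    dotProduct_vecMulVec_mulVec_self]
  simp only [add_mulVec, smul_mulVec, mulVec_add, mulVec_smul, dotProduct_add, dotProduct_smul,
    ← mulVec_mulVec, dotProduct_vecMulVec_mulVec_self, dotProduct_transpose_mulVec_comm P _ hP,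
    one_mulVec, smul_eq_mul]
  ring

theorem Theta1_form_le
    (hΘ : (-(Theta1 N₀ P Q₁ gain c γ α₃ α₄ Rb)).PosSemidef) (v : Fin N₀ ⊕ Fin N₀ → ℝ) :
    |c| * (v ⬝ᵥ (P *ᵥ v)) + (2 * α₃ * |c| + α₄) * γ * |c| * Rb * (gain ⬝ᵥ v) ^ 2 ≤
      v ⬝ᵥ (Q₁ *ᵥ v) := by
  have form := hΘ.dotProduct_mulVec_nonneg v
  simp only [star_trivial, neg_mulVec, dotProduct_neg, Theta1, add_mulVec, sub_mulVec,
    smul_mulVec, dotProduct_add, dotProduct_sub, dotProduct_smul, smul_eq_mul,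
    dotProduct_vecMulVec_mulVec_self] at form
  linarith

theorem Theta2_form_le (hΘ : (-(Theta2 N₀ N Q₂ r₁ c)).PosSemidef) (v : Fin (N - N₀) → ℝ) :
    r₁ * |c| * (v ⬝ᵥ v) ≤ v ⬝ᵥ (Q₂ *ᵥ v) := by
  have form := hΘ.dotProduct_mulVec_nonneg v
  simp only [star_trivial, neg_mulVec, dotProduct_neg, Theta2, sub_mulVec, smul_mulVec,
    dotProduct_sub, dotProduct_smul, smul_eq_mul, one_mulVec] at form
  linarith

theorem exists_PsiM_form_le (hP : P.IsHermitian)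
    (hΨ : (-(PsiM N₀ N P Q₁ F₁ Q₂ F₃ F₂ inj gain (Erow N₀ N F₁ F₂ inj gain)
      c r₁ β γ α₂ α₃ Ra Rb)).PosDef) :
    ∃ ε > 0, ∀ (X : Fin N₀ ⊕ Fin N₀ → ℝ) (Y : Fin (N - N₀) → ℝ) (ζ : ℝ),
      2 * (X ⬝ᵥ (P *ᵥ (F₁ *ᵥ X + F₂ *ᵥ Y + ζ • inj))) + |c| * (X ⬝ᵥ (P *ᵥ X))
        + X ⬝ᵥ (Q₁ *ᵥ X) + α₂ * γ * Ra * (gain ⬝ᵥ X) ^ 2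
        + r₁ * (2 * (Y ⬝ᵥ (F₃ *ᵥ Y)) + |c| * (Y ⬝ᵥ Y)) + Y ⬝ᵥ (Q₂ *ᵥ Y) - β * ζ ^ 2
        + 2 * α₃ * γ * Rb * (gain ⬝ᵥ (F₁ *ᵥ X + F₂ *ᵥ Y + ζ • inj)) ^ 2
      ≤ -(ε * (X ⬝ᵥ X + Y ⬝ᵥ Y)) := by
  obtain ⟨ε, ε_pos, coercive⟩ := exists_mul_dotProduct_self_le hΨ
  refine ⟨ε, ε_pos, fun X Y ζ => ?_⟩
  have form := coercive (Sum.elim (Sum.elim X Y) fun _ => ζ)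
  rw [neg_mulVec, dotProduct_neg, dotProduct_PsiM_mulVec hP, Erow_dotProduct,
    sumElim_dotProduct_sumElim, sumElim_dotProduct_sumElim] at form
  have output_nonneg := mul_nonneg ε_pos.le (dotProduct_self_nonneg fun _ : Unit => ζ)
  linarith

end LMI

/-! ### The boundary lifting -/

theorem slOp_add_smul {p q f g : ℝ → ℝ} (hp : ContDiffOn ℝ 1 p (Icc 0 1))
    (hf : ContDiffOn ℝ 2 f (Icc 0 1)) (hg : ContDiffOn ℝ 2 g (Icc 0 1)) (k : ℝ) :
    EqOn (slOp p q (f + k • g)) (slOp p q f + k • slOp p q g) (Icc 0 1) := by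
  intro x hx
  have hderiv : ∀ y ∈ Icc (0 : ℝ) 1, dI (f + k • g) y = dI f y + k * dI g y := fun y hy =>
    dI_add_smul (hf.of_le one_le_two) (hg.of_le one_le_two) k hy
  have hF := hasDerivWithinAt_dI (contDiffOn_mul_dI hp hf) hx
  have hG := hasDerivWithinAt_dI (contDiffOn_mul_dI hp hg) hx
  have hflux : dI (fun y => p y * dI (f + k • g) y) x =
      dI (fun y => p y * dI f y) x + k * dI (fun y => p y * dI g y) x :=
    dI_eq_of_hasDerivWithinAt hx <| (hF.fun_add (hG.const_mul k)).congr
      (fun y hy => by rw [hderiv y hy]; ring) (by rw [hderiv x hx]; ring)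
  simp only [slOp, hflux, Pi.add_apply, Pi.smul_apply, smul_eq_mul]
  ring

section bFun

variable {θ : ℝ} {p q qt : ℝ → ℝ} {q_c : ℝ}

theorem cos_add_two_mul_sin_pos (hθ : θ ∈ Icc 0 (π / 2)) : 0 < cos θ + 2 * sin θ := by
  have hcos : 0 ≤ cos θ := cos_nonneg_of_mem_Icc ⟨by linarith [hθ.1, pi_pos], hθ.2⟩
  have hsin : 0 ≤ sin θ := sin_nonneg_of_nonneg_of_le_pi hθ.1 (by linarith [hθ.2, pi_pos])
  nlinarith [sin_sq_add_cos_sq θ]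

theorem contDiff_bFun (θ : ℝ) (n : WithTop ℕ∞) : ContDiff ℝ n (bFun θ) := by
  unfold bFun
  fun_prop

theorem dI_bFun (θ : ℝ) {x : ℝ} (hx : x ∈ Icc (0 : ℝ) 1) :
    dI (bFun θ) x = -(2 * x) / (cos θ + 2 * sin θ) := by
  refine dI_eq_of_hasDerivWithinAt hx (HasDerivAt.hasDerivWithinAt ?_)
  exact (((hasDerivAt_id x).fun_pow 2).fun_neg.div_const (cos θ + 2 * sin θ)).congr_deriv (by simp)

theorem bFun_robin_left (θ₁ θ : ℝ) : cos θ₁ * bFun θ 0 - sin θ₁ * dI (bFun θ) 0 = 0 := by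
  simp [dI_bFun θ, bFun]

theorem bFun_robin_right (hθ : θ ∈ Icc 0 (π / 2)) :
    cos θ * bFun θ 1 + sin θ * dI (bFun θ) 1 = -1 := by
  have := cos_add_two_mul_sin_pos hθ
  rw [dI_bFun θ (by simp), bFun]
  field_simp
  ring

theorem slOp_bFun (hp : ContDiffOn ℝ 1 p (Icc 0 1))
    (hqt : ∀ x ∈ Icc (0 : ℝ) 1, qt x = q x - q_c) (θ : ℝ) :
    EqOn (slOp p q (bFun θ)) (aFun p qt θ + q_c • bFun θ) (Icc 0 1) := by
  intro x hx
  have hflux : dI (fun y => p y * dI (bFun θ) y) x =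
      (-(2 * p x) - 2 * x * dI p x) / (cos θ + 2 * sin θ) := by
    have hp' := (hasDerivWithinAt_dI hp hx).fun_mul
      ((hasDerivWithinAt_id x (Icc 0 1)).const_mul (2 : ℝ)).fun_neg
    refine dI_eq_of_hasDerivWithinAt hx <| ((hp'.div_const (cos θ + 2 * sin θ)).congr
      (fun y hy => ?_) ?_).congr_deriv ?_
    · rw [dI_bFun θ hy, id]; ring
    · rw [dI_bFun θ hx, id]; ring
    · rw [id]; ring
  simp only [slOp, hflux, aFun, bFun, hqt x hx, Pi.add_apply, Pi.smul_apply, smul_eq_mul]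
  ring

theorem neg_slOp_eq_lifted {f : ℝ → ℝ} (hp : ContDiffOn ℝ 1 p (Icc 0 1))
    (hf : ContDiffOn ℝ 2 f (Icc 0 1)) (hqt : ∀ x ∈ Icc (0 : ℝ) 1, qt x = q x - q_c) (θ v : ℝ) :
    EqOn (-slOp p qt f) (q_c • (f + v • bFun θ) - slOp p q (f + v • bFun θ) + v • aFun p qt θ)
      (Icc 0 1) := by
  intro x hx
  have hop := slOp_add_smul (q := q) hp hf (contDiff_bFun θ 2).contDiffOn v hx
  have hbx := slOp_bFun hp hqt θ hx
  simp only [Pi.add_apply, Pi.smul_apply, Pi.sub_apply, Pi.neg_apply, smul_eq_mul] at hop hbx ⊢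
  rw [hop, hbx, slOp, slOp, hqt x hx]
  ring

theorem continuousOn_aFun (hp : ContDiffOn ℝ 1 p (Icc 0 1)) (hqt : ContinuousOn qt (Icc 0 1))
    (θ : ℝ) : ContinuousOn (aFun p qt θ) (Icc 0 1) := by
  have hp' := continuousOn_dI hp
  have hpc := hp.continuousOn
  unfold aFun
  fun_prop

end bFun

/-! ### Classical solutions of the plant -/

theorem continuousOn_integral_unit {a : ℝ} {g : ℝ → ℝ → ℝ}
    (hg : ContinuousOn (Function.uncurry g) (Ici a ×ˢ Icc 0 1)) :
    ContinuousOn (fun t => ∫ x in (0 : ℝ)..1, g t x) (Ici a) := by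
  set G : ℝ → ℝ → ℝ := fun t x => g (max t a) (projIcc 0 1 zero_le_one x) with hG
  have hc : Continuous (Function.uncurry G) :=
    hg.comp_continuous (f := fun y : ℝ × ℝ => (max y.1 a, (projIcc (0 : ℝ) 1 zero_le_one y.2 : ℝ)))
      (by fun_prop) fun y => ⟨mem_Ici.2 (le_max_right _ _), Subtype.coe_prop _⟩
  refine (intervalIntegral.continuous_parametric_intervalIntegral_of_continuous' hc 0 1
    (μ := volume)).continuousOn.congr fun t ht => integral_unit_congr fun x hx => ?_
  simp only [hG, max_eq_left (mem_Ici.1 ht), projIcc_of_mem zero_le_one hx]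

theorem hasDerivAt_integral_unit {g g' : ℝ → ℝ → ℝ} {U : Set ℝ} (hU : IsOpen U)
    (hg : ∀ s ∈ U, ContinuousOn (g s) (Icc 0 1))
    (hg' : ContinuousOn (Function.uncurry g') (U ×ˢ Icc 0 1))
    (hderiv : ∀ s ∈ U, ∀ x ∈ Ioo (0 : ℝ) 1, HasDerivAt (fun r => g r x) (g' s x) s) {t : ℝ}
    (ht : t ∈ U) :
    HasDerivAt (fun s => ∫ x in (0 : ℝ)..1, g s x) (∫ x in (0 : ℝ)..1, g' t x) t := by
  obtain ⟨S, hS, htS, hSU⟩ := exists_compact_subset hU ht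
  obtain ⟨B, hB⟩ := (hS.prod isCompact_Icc).exists_bound_of_continuousOn
    (hg'.mono (prod_mono hSU Subset.rfl))
  have hsub : Set.uIoc (0 : ℝ) 1 ⊆ Icc 0 1 := by
    rw [uIoc_of_le zero_le_one]; exact Ioc_subset_Icc_self
  have hmeas {f : ℝ → ℝ} (hf : ContinuousOn f (Icc 0 1)) :
      AEStronglyMeasurable f (volume.restrict (Set.uIoc (0 : ℝ) 1)) :=
    (hf.aestronglyMeasurable measurableSet_Icc).mono_set hsub
  have hinterior : ∀ᵐ x : ℝ, x ∈ Set.uIoc (0 : ℝ) 1 → x ∈ Ioo (0 : ℝ) 1 := by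
    filter_upwards [compl_mem_ae_iff.2 (measure_singleton (1 : ℝ))] with x hx1 hx
    rw [uIoc_of_le zero_le_one] at hx
    exact ⟨hx.1, hx.2.lt_of_ne hx1⟩
  refine (intervalIntegral.hasDerivAt_integral_of_dominated_loc_of_deriv_le (μ := volume)
    (bound := fun _ => B) (mem_interior_iff_mem_nhds.1 htS) ?_ (intervalIntegrable_unit (hg t ht))
    (hmeas ?_) ?_ intervalIntegrable_const ?_).2
  · filter_upwards [hU.mem_nhds ht] with s hs using hmeas (hg s hs)
  · exact hg'.comp (f := fun x => (t, x)) (by fun_prop) fun x hx => ⟨ht, hx⟩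
  · exact .of_forall fun x hx s hs => hB (s, x) ⟨hs, hsub hx⟩
  · filter_upwards [hinterior] with x hx hmem s hs using hderiv s (hSU hs) x (hx hmem)

/-- Classical solutions of the reaction–diffusion equation with a delayed reaction term,
Robin boundary conditions, and boundary input `u` at `x = 1`. The condition at `x = 1` on
`[-h,0]` defines the initial input. -/
structure ClassicalSolution (θ₁ θ₂ : ℝ) (p qt : ℝ → ℝ) (c h : ℝ) (z : ℝ → ℝ → ℝ) (u : ℝ → ℝ) :
    Prop where
  space_reg : ∀ t ≥ -h, ContDiffOn ℝ 2 (z t) (Icc 0 1)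
  cont : ContinuousOn (Function.uncurry z) (Ici (-h) ×ˢ Icc 0 1)
  cont_deriv : ContinuousOn (fun y : ℝ × ℝ => deriv (fun s => z s y.2) y.1) (Ioi 0 ×ˢ Icc 0 1)
  pde : ∀ t > 0, ∀ x ∈ Ioo (0 : ℝ) 1, HasDerivAt (fun s => z s x)
    (dI (fun y => p y * dI (z t) y) x - qt x * z t x + c * z (t - h) x) t
  left : ∀ t ≥ 0, cos θ₁ * z t 0 - sin θ₁ * dI (z t) 0 = 0
  right : ∀ t ≥ -h, cos θ₂ * z t 1 + sin θ₂ * dI (z t) 1 = u t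

namespace ClassicalSolution

variable {θ₁ θ₂ : ℝ} {p q qt : ℝ → ℝ} {q_c c h : ℝ} {z : ℝ → ℝ → ℝ} {u : ℝ → ℝ} {f : ℝ → ℝ}

theorem continuousOn_ip (Z : ClassicalSolution θ₁ θ₂ p qt c h z u)
    (hf : ContinuousOn f (Icc 0 1)) : ContinuousOn (fun t => ip (z t) f) (Ici (-h)) :=
  continuousOn_integral_unit (Z.cont.mul (hf.comp continuousOn_snd fun _ hx => hx.2))

theorem lifted_mem (Z : ClassicalSolution θ₁ θ₂ p qt c h z u) (hθ₂ : θ₂ ∈ Icc 0 (π / 2))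
    (hh : 0 ≤ h) {t : ℝ} (ht : 0 ≤ t) : z t + u t • bFun θ₂ ∈ robinDomain θ₁ θ₂ := by
  have hz := Z.space_reg t (by linarith)
  have hb := (contDiff_bFun θ₂ 2).contDiffOn (s := Icc (0 : ℝ) 1)
  have hderiv : ∀ x ∈ Icc (0 : ℝ) 1, dI (z t + u t • bFun θ₂) x =
      dI (z t) x + u t * dI (bFun θ₂) x := fun x hx =>
    dI_add_smul (hz.of_le one_le_two) (hb.of_le one_le_two) (u t) hx
  refine ⟨hz.add (hb.const_smul (u t)), ?_, ?_⟩
  · rw [hderiv 0 (by simp)]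
    simp only [Pi.add_apply, Pi.smul_apply, smul_eq_mul]
    linear_combination Z.left t ht + u t * bFun_robin_left θ₁ θ₂
  · rw [hderiv 1 (by simp)]
    simp only [Pi.add_apply, Pi.smul_apply, smul_eq_mul]
    linear_combination Z.right t (by linarith) + u t * bFun_robin_right hθ₂

theorem hasDerivAt_ip (Z : ClassicalSolution θ₁ θ₂ p qt c h z u) (hh : 0 ≤ h)
    (hf : ContinuousOn f (Icc 0 1)) {t : ℝ} (ht : 0 < t) :
    HasDerivAt (fun s => ip (z s) f) (ip (fun x => deriv (fun s => z s x) t) f) t :=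
  hasDerivAt_integral_unit (g' := fun s x => deriv (fun r => z r x) s * f x) isOpen_Ioi
    (fun s hs => (Z.space_reg s (by linarith [mem_Ioi.1 hs])).continuousOn.mul hf)
    (Z.cont_deriv.mul (hf.comp continuousOn_snd fun _ hx => hx.2))
    (fun s hs x hx => ((Z.pde s hs x hx).differentiableAt.hasDerivAt).mul_const (f x)) ht

-- In terms of the lifted state the equation has homogeneous boundary conditions, so it can be
-- tested against the eigenfunctions; the input then acts through `a` and `b`.
theorem ip_deriv_phi {lam : ℕ → ℝ} {phi : ℕ → ℝ → ℝ}
    (Z : ClassicalSolution θ₁ θ₂ p qt c h z u) (H : SturmLiouville θ₁ θ₂ p q lam phi)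
    (hqt : ∀ x ∈ Icc (0 : ℝ) 1, qt x = q x - q_c) (hh : 0 ≤ h) {n : ℕ} (hn : 1 ≤ n) {t : ℝ}
    (ht : 0 < t) :
    ip (fun x => deriv (fun s => z s x) t) (phi n) =
      (-lam n + q_c) * ip (z t) (phi n) + c * ip (z (t - h)) (phi n)
        + betaC p qt θ₂ q_c lam phi n * u t := by
  have hz := Z.space_reg t (by linarith)
  have hzh := (Z.space_reg (t - h) (by linarith)).continuousOn
  have hb := (contDiff_bFun θ₂ 0).continuous.continuousOn (s := Icc (0 : ℝ) 1)
  have hw := Z.lifted_mem H.angle_right hh ht.le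
  have hwc := hw.1.continuousOn.const_smul q_c
  have ha := (continuousOn_aFun H.p_reg ((H.q_cont.sub continuousOn_const).congr hqt)
    θ₂).const_smul (u t)
  have hsl := continuousOn_slOp H.p_reg H.q_cont hw.1
  have hphi := H.continuousOn_phi hn
  have hlifted : EqOn (fun x => deriv (fun s => z s x) t)
      (q_c • (z t + u t • bFun θ₂) - slOp p q (z t + u t • bFun θ₂) + u t • aFun p qt θ₂
        + c • z (t - h)) (Ioo 0 1) := fun x hx => by
    have hop := neg_slOp_eq_lifted H.p_reg hz hqt θ₂ (u t) (Ioo_subset_Icc_self hx)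
    simp only [(Z.pde t ht x hx).deriv, Pi.add_apply, Pi.smul_apply, smul_eq_mul] at hop ⊢
    rw [← hop, Pi.neg_apply, slOp]
    ring
  calc _ = ip (q_c • (z t + u t • bFun θ₂) - slOp p q (z t + u t • bFun θ₂)
        + u t • aFun p qt θ₂ + c • z (t - h)) (phi n) :=
      intervalIntegral.integral_congr_Ioo_of_le zero_le_one fun x hx => by
        simp only [hlifted hx]
    _ = _ := by
      rw [ip_add_left ((hwc.sub hsl).add ha) (hzh.const_smul c) hphi,
        ip_add_left (hwc.sub hsl) ha hphi, ip_sub_left hwc hsl hphi, H.ip_slOp_phi hw hn]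
      simp only [ip_smul_left]
      rw [ip_add_left hz.continuousOn (hb.const_smul (u t)) hphi, ip_smul_left, betaC]
      ring

theorem hasDerivAt_ip_phi {lam : ℕ → ℝ} {phi : ℕ → ℝ → ℝ}
    (Z : ClassicalSolution θ₁ θ₂ p qt c h z u) (H : SturmLiouville θ₁ θ₂ p q lam phi)
    (hqt : ∀ x ∈ Icc (0 : ℝ) 1, qt x = q x - q_c) (hh : 0 ≤ h) {n : ℕ} (hn : 1 ≤ n) {t : ℝ}
    (ht : 0 < t) :
    HasDerivAt (fun s => ip (z s) (phi n))
      ((-lam n + q_c) * ip (z t) (phi n) + c * ip (z (t - h)) (phi n)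
        + betaC p qt θ₂ q_c lam phi n * u t) t :=
  (Z.hasDerivAt_ip hh (H.continuousOn_phi hn) ht).congr_deriv (Z.ip_deriv_phi H hqt hh hn ht)

end ClassicalSolution

/-! ### The finite-dimensional observer -/

theorem sum_Icc_eq_sum_fin_add {M : Type*} [AddCommMonoid M] {m n : ℕ} (hmn : m ≤ n) (g : ℕ → M) :
    ∑ k ∈ Finset.Icc 1 n, g k =
      ∑ i : Fin m, g (i.val + 1) + ∑ j : Fin (n - m), g (m + j.val + 1) := by
  obtain ⟨d, rfl⟩ := Nat.exists_eq_add_of_le hmn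
  rw [Fin.sum_univ_eq_sum_range (fun k => g (k + 1)) m,
    Fin.sum_univ_eq_sum_range (fun k => g (m + k + 1)), Nat.add_sub_cancel_left,
    ← Finset.sum_range_add fun k => g (k + 1)]
  exact (Finset.sum_Ico_add' g 0 (m + d) 1).symm.trans (by rw [Finset.range_eq_Ico])

/-- Trajectories `zhat` of the observer-based controller with measurement `y` and input `u`, for
a plant whose `n`-th mode has eigenvalue `lam n`, input coefficients `β n` and `b n`, and output
coefficient `C n`. -/
structure ObserverSolution (N₀ N : ℕ) (lam : ℕ → ℝ) (q_c c h : ℝ) (β b C : ℕ → ℝ)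
    (K L : Fin N₀ → ℝ) (y u : ℝ → ℝ) (zhat : ℕ → ℝ → ℝ) : Prop where
  cont : ∀ n, 1 ≤ n → n ≤ N → ContinuousOn (zhat n) (Ici (-h))
  low : ∀ i : Fin N₀, ∀ t > 0, HasDerivAt (zhat (i.val + 1))
    ((-lam (i.val + 1) + q_c) * zhat (i.val + 1) t + c * zhat (i.val + 1) (t - h)
      + β (i.val + 1) * u t
      - L i * ((∑ k ∈ Finset.Icc 1 N, (zhat k t + b k * u t) * C k) - y t)) t
  high : ∀ n, N₀ + 1 ≤ n → n ≤ N → ∀ t > 0, HasDerivAt (zhat n)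
    ((-lam n + q_c) * zhat n t + c * zhat n (t - h) + β n * u t) t
  feedback : ∀ t ≥ 0, u t = ∑ i : Fin N₀, K i * zhat (i.val + 1) t

/-- The estimates of the first `N₀` modes together with their estimation errors. -/
def observerState (N₀ : ℕ) (zn zhat : ℕ → ℝ → ℝ) (t : ℝ) : Fin N₀ ⊕ Fin N₀ → ℝ :=
  Sum.elim (fun i => zhat (i.val + 1) t) fun i => zn (i.val + 1) t - zhat (i.val + 1) t

/-- The estimation errors of the modes `N₀ + 1, …, N`, scaled by `√λₙ`. -/
def scaledError (N₀ N : ℕ) (lam : ℕ → ℝ) (zn zhat : ℕ → ℝ → ℝ) (t : ℝ) : Fin (N - N₀) → ℝ :=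
  fun j => √(lam (N₀ + j.val + 1)) * (zn (N₀ + j.val + 1) t - zhat (N₀ + j.val + 1) t)

theorem F1_mulVec (N₀ : ℕ) (lam : ℕ → ℝ) (q_c : ℝ) (B C K L x e : Fin N₀ → ℝ) :
    F1 N₀ lam q_c B C K L *ᵥ Sum.elim x e =
      Sum.elim (fun i => (-lam (i.val + 1) + q_c) * x i + B i * (K ⬝ᵥ x) + L i * (C ⬝ᵥ e))
        (fun i => (-lam (i.val + 1) + q_c) * e i - L i * (C ⬝ᵥ e)) := by
  rw [F1, fromBlocks_mulVec]
  simp only [Sum.elim_comp_inl, Sum.elim_comp_inr, add_mulVec, sub_mulVec, vecMulVec_mulVec,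
    zero_mulVec, zero_add, A0]
  congr 1 <;> ext i <;> simp [mulVec_diagonal, mul_comm]

theorem F2_mulVec (N₀ N : ℕ) (L : Fin N₀ → ℝ) (C e : Fin (N - N₀) → ℝ) :
    F2 N₀ N L C *ᵥ e = (C ⬝ᵥ e) • Lv N₀ L := by
  ext (i | i) <;>
  · simp only [F2, Lv, mulVec, dotProduct, of_apply, Sum.elim_inl, Sum.elim_inr, Pi.smul_apply,
      smul_eq_mul, Finset.sum_mul]
    exact Finset.sum_congr rfl fun j _ => by ring

theorem sum_sub_mul_eq_dotProduct {N₀ N : ℕ} (hN : N₀ ≤ N) {lam : ℕ → ℝ}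
    (hlam : ∀ n ≥ 1, 0 < lam n) (C : ℕ → ℝ) (zn zhat : ℕ → ℝ → ℝ) (t : ℝ) :
    ∑ k ∈ Finset.Icc 1 N, (zn k t - zhat k t) * C k =
      (fun i : Fin N₀ => C (i.val + 1)) ⬝ᵥ (fun i => zn (i.val + 1) t - zhat (i.val + 1) t)
        + (fun j : Fin (N - N₀) => C (N₀ + j.val + 1) / √(lam (N₀ + j.val + 1))) ⬝ᵥ
          scaledError N₀ N lam zn zhat t := by
  rw [sum_Icc_eq_sum_fin_add hN]
  congr 1
  · exact Finset.sum_congr rfl fun i _ => mul_comm _ _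
  · refine Finset.sum_congr rfl fun j _ => ?_
    have := Real.sqrt_pos.2 (hlam (N₀ + j.val + 1) (by omega))
    simp only [scaledError]
    field_simp

namespace ObserverSolution

variable {N₀ N : ℕ} {lam : ℕ → ℝ} {q_c c h : ℝ} {β b C : ℕ → ℝ} {K L : Fin N₀ → ℝ} {y u : ℝ → ℝ}
  {zn zhat : ℕ → ℝ → ℝ}

theorem feedback_eq (O : ObserverSolution N₀ N lam q_c c h β b C K L y u zhat) {t : ℝ}
    (ht : 0 ≤ t) : u t = Kt N₀ K ⬝ᵥ observerState N₀ zn zhat t := by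
  rw [O.feedback t ht, Kt, observerState, sumElim_dotProduct_sumElim, zero_dotProduct, add_zero]
  rfl

theorem hasDerivAt_scaledError (O : ObserverSolution N₀ N lam q_c c h β b C K L y u zhat)
    (hzn : ∀ n ≥ 1, ∀ t > 0, HasDerivAt (zn n)
      ((-lam n + q_c) * zn n t + c * zn n (t - h) + β n * u t) t) {t : ℝ} (ht : 0 < t) :
    HasDerivAt (scaledError N₀ N lam zn zhat)
      (A1 N₀ N lam q_c *ᵥ scaledError N₀ N lam zn zhat t
        + c • scaledError N₀ N lam zn zhat (t - h)) t := by
  refine hasDerivAt_pi.2 fun j => ?_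
  have hj := j.2
  refine (((hzn (N₀ + j.val + 1) (by omega) t ht).fun_sub
    (O.high (N₀ + j.val + 1) (by omega) (by omega) t ht)).const_mul _).congr_deriv ?_
  simp only [A1, Pi.add_apply, mulVec_diagonal, scaledError, Pi.smul_apply, smul_eq_mul]
  ring

theorem hasDerivAt_observerState (O : ObserverSolution N₀ N lam q_c c h β b C K L y u zhat)
    (hN : N₀ ≤ N) (hlam : ∀ n ≥ 1, 0 < lam n)
    (hzn : ∀ n ≥ 1, ∀ t > 0, HasDerivAt (zn n)
      ((-lam n + q_c) * zn n t + c * zn n (t - h) + β n * u t) t) {t : ℝ} (ht : 0 < t) :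
    HasDerivAt (observerState N₀ zn zhat)
      (F1 N₀ lam q_c (fun i => β (i.val + 1)) (fun i => C (i.val + 1)) K L *ᵥ
          observerState N₀ zn zhat t
        + F2 N₀ N L (fun i => C (N₀ + i.val + 1) / √(lam (N₀ + i.val + 1))) *ᵥ
          scaledError N₀ N lam zn zhat t
        + (y t - ∑ k ∈ Finset.Icc 1 N, (zn k t + b k * u t) * C k) • Lv N₀ L
        + c • observerState N₀ zn zhat (t - h)) t := by
  have innovation : (∑ k ∈ Finset.Icc 1 N, (zhat k t + b k * u t) * C k) - y t =
      -(∑ k ∈ Finset.Icc 1 N, (zn k t - zhat k t) * C k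
        + (y t - ∑ k ∈ Finset.Icc 1 N, (zn k t + b k * u t) * C k)) := by
    simp only [add_mul, sub_mul, Finset.sum_add_distrib, Finset.sum_sub_distrib]
    ring
  have hu : K ⬝ᵥ (fun i : Fin N₀ => zhat (i.val + 1) t) = u t := (O.feedback t ht.le).symm
  refine hasDerivAt_pi.2 fun x => ?_
  rw [F2_mulVec, observerState, F1_mulVec, hu]
  simp only [Pi.add_apply, Pi.smul_apply, smul_eq_mul]
  rcases x with i | i
  · refine (O.low i t ht).congr_deriv ?_
    rw [innovation, sum_sub_mul_eq_dotProduct hN hlam]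
    simp only [Sum.elim_inl, Lv, observerState]
    ring
  · refine ((hzn (i.val + 1) (by omega) t ht).fun_sub (O.low i t ht)).congr_deriv ?_
    rw [innovation, sum_sub_mul_eq_dotProduct hN hlam]
    simp only [Sum.elim_inr, Lv, observerState]
    ring

theorem hasDerivAt_input (O : ObserverSolution N₀ N lam q_c c h β b C K L y u zhat) {t : ℝ}
    (ht : 0 < t) {X' : Fin N₀ ⊕ Fin N₀ → ℝ} (hX : HasDerivAt (observerState N₀ zn zhat) X' t) :
    HasDerivAt u (Kt N₀ K ⬝ᵥ X') t := by
  have hfeedback : HasDerivAt (fun s => Kt N₀ K ⬝ᵥ observerState N₀ zn zhat s) (Kt N₀ K ⬝ᵥ X') t :=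
    HasDerivAt.fun_sum fun i _ => (hasDerivAt_pi.1 hX i).const_mul _
  refine hfeedback.congr_of_eventuallyEq ?_
  filter_upwards [Ioi_mem_nhds ht] with s hs using O.feedback_eq (mem_Ioi.1 hs).le

theorem continuousOn_input (O : ObserverSolution N₀ N lam q_c c h β b C K L y u zhat)
    (hh : 0 ≤ h) (hN : N₀ ≤ N) (hu : ContinuousOn u (Icc (-h) 0)) : ContinuousOn u (Ici (-h)) := by
  have hforward : ContinuousOn u (Ici 0) :=
    ContinuousOn.congr (continuousOn_finsetSum _ fun i _ => continuousOn_const.mul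
      ((O.cont _ (by omega) (by omega)).mono (Ici_subset_Ici.2 (by linarith)))) O.feedback
  rw [← Icc_union_Ici_eq_Ici (show -h ≤ 0 by linarith)]
  exact hu.union_of_isClosed hforward isClosed_Icc isClosed_Ici

end ObserverSolution

/-! ### Scalar delay equations with decaying input -/

theorem scalar_delay_dissipation {μ a c : ℝ} (hμ : 0 < μ) (ha : a + |c| ≤ -μ) (x xd f : ℝ) :
    2 * x * (a * x + c * xd + f) ≤
      -(μ / (1 + |c|)) * x ^ 2 - (1 + μ / (1 + |c|)) * (|c| * x ^ 2) + |c| * xd ^ 2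
        + f ^ 2 / μ := by
  have hdelay := two_mul_mul_le_abs_mul one_pos c x xd
  have hinput := two_mul_le_sq_div_add hμ f x
  have hdamping := mul_le_mul_of_nonneg_right ha (sq_nonneg x)
  have hsplit : μ / (1 + |c|) * (1 + |c|) = μ := div_mul_cancel₀ _ (by positivity)
  linear_combination hdelay + hinput + 2 * hdamping + x ^ 2 * hsplit

theorem integral_exp_mul_exp_le {δ δ' E t : ℝ} (hδ : 0 < δ) (hδ' : 2 * δ' ≤ δ) (hE : 0 ≤ E)
    (ht : 0 ≤ t) :
    ∫ s in (0 : ℝ)..t, exp (2 * δ' * s) * (exp (-2 * δ * s) * E) ≤ E / δ := by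
  have hle : ∫ s in (0 : ℝ)..t, exp (2 * δ' * s) * (exp (-2 * δ * s) * E) ≤
      ∫ s in (0 : ℝ)..t, exp (-δ * s) * E := by
    refine intervalIntegral.integral_mono_on ht
      (Continuous.intervalIntegrable (by fun_prop) _ _)
      (Continuous.intervalIntegrable (by fun_prop) _ _) fun s hs => ?_
    rw [← mul_assoc, ← exp_add]
    gcongr
    nlinarith [hs.1]
  have heq : ∫ s in (0 : ℝ)..t, exp (-δ * s) * E =
      exp (-δ * t) * -(E / δ) - exp (-δ * 0) * -(E / δ) := by
    refine intervalIntegral.integral_eq_sub_of_hasDerivAt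
      (f := fun s => exp (-δ * s) * -(E / δ)) (fun s _ => ?_)
      (Continuous.intervalIntegrable (by fun_prop) _ _)
    refine ((((hasDerivAt_id s).const_mul (-δ)).exp).mul_const _).congr_deriv ?_
    simp only [id]
    field_simp
  rw [heq, mul_zero, exp_zero] at hle
  have hpos : 0 ≤ exp (-δ * t) * (E / δ) := by positivity
  linarith

theorem exists_scalar_delay_decay {h μ δ : ℝ} (hh : 0 < h) (hμ : 0 < μ) (hδ : 0 < δ) (c : ℝ) :
    ∃ δ' > 0, δ' ≤ δ ∧ ∃ C > 0, ∀ (a D : ℝ) (x f : ℝ → ℝ), a + |c| ≤ -μ →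
      ContinuousOn x (Ici (-h)) →
      (∀ t > 0, HasDerivAt x (a * x t + c * x (t - h) + f t) t) →
      (∀ t ≥ 0, f t ^ 2 ≤ exp (-2 * δ * t) * D) → (∀ s ∈ Icc (-h) 0, x s ^ 2 ≤ D) →
      ∀ t ≥ 0, x t ^ 2 ≤ C * exp (-2 * δ' * t) * D := by
  set η := μ / (1 + |c|)
  have hη : 0 < η := by positivity
  obtain ⟨δ₀, hδ₀, hδ₀η, hδ₀h⟩ := exists_rate_le_and_exp_le hh hη
  have hle₀ : min δ₀ (δ / 2) ≤ δ₀ := min_le_left _ _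
  have hle : min δ₀ (δ / 2) ≤ δ / 2 := min_le_right _ _
  have hδ' : 0 < min δ₀ (δ / 2) := by positivity
  set δ' := min δ₀ (δ / 2)
  refine ⟨δ', hδ', by linarith, 1 + (1 + η) * (h * |c|) + 1 / (μ * δ), by positivity, ?_⟩
  intro a D x f ha hx hx' hf hx0 t ht
  have hx00 : x 0 ^ 2 ≤ D := hx0 0 ⟨by linarith, le_rfl⟩
  have hD : 0 ≤ D := (sq_nonneg _).trans hx00
  have hcompare := exp_mul_le_of_hasDerivAt_le_delay (δ := δ') (η := η) (g := |c| * D)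
    (V := fun t => x t ^ 2) (V' := fun t => 2 * x t * (a * x t + c * x (t - h) + f t))
    (G := fun t => |c| * x t ^ 2) (err := fun t => exp (-2 * δ * t) * (D / μ))
    hh.le hδ'.le (by linarith) ((exp_le_exp.2 (by gcongr)).trans hδ₀h)
    ((hx.mono (Ici_subset_Ici.2 (by linarith))).pow 2) (fun _ _ => sq_nonneg _)
    (continuousOn_const.mul (hx.pow 2)) (fun _ _ => by positivity) (by fun_prop)
    (fun t ht => ((hx' t ht).fun_pow 2).congr_deriv (by ring))
    (fun t ht => (scalar_delay_dissipation hμ ha _ _ _).trans (by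
      have := div_le_div_of_nonneg_right (hf t (le_of_lt ht)) hμ.le
      rw [mul_div_assoc] at this
      gcongr))
    (fun s hs => mul_le_mul_of_nonneg_left (hx0 s hs) (abs_nonneg c)) ht
  have herr := integral_exp_mul_exp_le (δ' := δ') hδ (by linarith) (div_nonneg hD hμ.le) ht
  calc x t ^ 2 = exp (-2 * δ' * t) * (exp (2 * δ' * t) * x t ^ 2) := by
        rw [← mul_assoc, ← exp_add]
        ring_nf
        simp
    _ ≤ exp (-2 * δ' * t) * (D + (1 + η) * (h * (|c| * D)) + D / μ / δ) := by
        gcongr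
        linarith
    _ = _ := by
        rw [div_div]
        ring

/-! ### Finite-dimensional and residual modes -/

-- Cauchy–Schwarz gives `ζ² ≤ Mφ * Σ l w²`, but a defect of partial sums also makes sense when
-- `Σ l w²` is not known to converge.
theorem tendsto_max_trace_defect {ζ Mφ : ℝ} {l w f : ℕ → ℝ} (hl : ∀ k, 0 < l k)
    (hM : ∀ M, ∑ k ∈ Finset.range M, f k ^ 2 / l k ≤ Mφ)
    (hζ : Filter.Tendsto (fun M => ∑ k ∈ Finset.range M, w k * f k) Filter.atTop (nhds ζ)) :
    Filter.Tendsto (fun M => max 0 (ζ ^ 2 - Mφ * ∑ k ∈ Finset.range M, l k * w k ^ 2))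
      Filter.atTop (nhds 0) := by
  have hlim : Filter.Tendsto (fun M => max 0 (ζ ^ 2 - (∑ k ∈ Finset.range M, w k * f k) ^ 2))
      Filter.atTop (nhds 0) := by
    have := (tendsto_const_nhds (x := (0 : ℝ))).max ((hζ.pow 2).const_sub (ζ ^ 2))
    rwa [sub_self, max_self] at this
  refine squeeze_zero (fun M => le_max_left _ _) (fun M => max_le_max le_rfl ?_) hlim
  have hcauchy := Finset.sum_mul_sq_le_sq_mul_sq (Finset.range M)
    (fun k => f k / √(l k)) (fun k => √(l k) * w k)
  have hfactor : ∀ k, f k / √(l k) * (√(l k) * w k) = w k * f k := by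
    intro k
    have := Real.sqrt_pos.2 (hl k)
    field_simp
  simp only [hfactor, div_pow, mul_pow, Real.sq_sqrt (hl _).le] at hcauchy
  have henergy : 0 ≤ ∑ k ∈ Finset.range M, l k * w k ^ 2 :=
    Finset.sum_nonneg fun k _ => mul_nonneg (hl k).le (sq_nonneg _)
  linarith [mul_le_mul_of_nonneg_right (hM M) henergy]

theorem sum_range_add_eq_sum_Icc_add {A : Type*} [AddCommMonoid A] (g : ℕ → A) (N M : ℕ) :
    ∑ k ∈ Finset.range (N + M), g (k + 1) =
      ∑ k ∈ Finset.Icc 1 N, g k + ∑ k ∈ Finset.range M, g (N + 1 + k) := by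
  rw [Finset.sum_range_add]
  congr 1
  · rw [Finset.range_eq_Ico, Finset.sum_Ico_add' g 0 N 1]
    rfl
  · exact Finset.sum_congr rfl fun k _ => by rw [show N + k + 1 = N + 1 + k by ring]

namespace SturmLiouville

variable {θ₁ θ₂ : ℝ} {p q : ℝ → ℝ} {lam : ℕ → ℝ} {phi : ℕ → ℝ → ℝ} {f : ℝ → ℝ}

theorem summable_tail_sq (H : SturmLiouville θ₁ θ₂ p q lam phi) (hf : ContinuousOn f (Icc 0 1))
    (N : ℕ) : Summable fun k => ip f (phi (N + 1 + k)) ^ 2 := by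
  refine ((summable_nat_add_iff (f := fun k => ip f (phi (k + 1)) ^ 2) N).2
    (H.hasSum_sq hf).summable).congr fun k => ?_
  rw [show k + N + 1 = N + 1 + k by ring]

theorem sum_tail_sq_le_RN2 (H : SturmLiouville θ₁ θ₂ p q lam phi) (hf : ContinuousOn f (Icc 0 1))
    (N M : ℕ) : ∑ k ∈ Finset.range M, ip f (phi (N + 1 + k)) ^ 2 ≤ RN2 f phi N :=
  (H.summable_tail_sq hf N).sum_le_tsum _ fun _ _ => sq_nonneg _

theorem sum_sq_add_sum_tail_sq_le (H : SturmLiouville θ₁ θ₂ p q lam phi)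
    (hf : ContinuousOn f (Icc 0 1)) (N M : ℕ) :
    ∑ k ∈ Finset.Icc 1 N, ip f (phi k) ^ 2 + ∑ k ∈ Finset.range M, ip f (phi (N + 1 + k)) ^ 2 ≤
      ip f f := by
  rw [← sum_range_add_eq_sum_Icc_add fun k => ip f (phi k) ^ 2]
  exact sum_le_hasSum _ (fun _ _ => sq_nonneg _) (H.hasSum_sq hf)

theorem sum_sq_le (H : SturmLiouville θ₁ θ₂ p q lam phi) (hf : ContinuousOn f (Icc 0 1)) (N : ℕ) :
    ∑ k ∈ Finset.Icc 1 N, ip f (phi k) ^ 2 ≤ ip f f := by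
  simpa using H.sum_sq_add_sum_tail_sq_le hf N 0

theorem sum_tail_sq_le (H : SturmLiouville θ₁ θ₂ p q lam phi) (hf : ContinuousOn f (Icc 0 1))
    (N M : ℕ) : ∑ k ∈ Finset.range M, ip f (phi (N + 1 + k)) ^ 2 ≤ ip f f :=
  (le_add_of_nonneg_left (Finset.sum_nonneg fun _ _ => sq_nonneg _)).trans
    (H.sum_sq_add_sum_tail_sq_le hf N M)

theorem sum_tail_energy_le (H : SturmLiouville θ₁ θ₂ p q lam phi) (hf : f ∈ robinDomain θ₁ θ₂)
    (N M : ℕ) :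
    ∑ k ∈ Finset.range M, lam (N + 1 + k) * ip f (phi (N + 1 + k)) ^ 2 ≤ ip (slOp p q f) f := by
  have hnonneg : ∀ k ≥ 1, 0 ≤ lam k * ip f (phi k) ^ 2 := fun k hk =>
    mul_nonneg (H.lam_pos k hk).le (sq_nonneg _)
  have hpartial := sum_le_hasSum (Finset.range (N + M)) (fun k _ => hnonneg (k + 1) (by omega))
    (H.hasSum_energy hf)
  rw [sum_range_add_eq_sum_Icc_add fun k => lam k * ip f (phi k) ^ 2] at hpartial
  linarith [Finset.sum_nonneg fun k (hk : k ∈ Finset.Icc 1 N) =>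
    hnonneg k (Finset.mem_Icc.1 hk).1]

theorem energy_le (H : SturmLiouville θ₁ θ₂ p q lam phi) (hf : f ∈ robinDomain θ₁ θ₂) {N : ℕ}
    {B : ℝ}
    (hB : ∀ M, ∑ k ∈ Finset.range M, lam (N + 1 + k) * ip f (phi (N + 1 + k)) ^ 2 ≤ B) :
    ip (slOp p q f) f ≤ lam N * ∑ k ∈ Finset.Icc 1 N, ip f (phi k) ^ 2 + B := by
  refine le_of_tendsto'
    ((H.hasSum_energy hf).tendsto_sum_nat.comp (Filter.tendsto_add_atTop_nat N)) fun M => ?_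
  simp only [Function.comp, add_comm M N]
  rw [sum_range_add_eq_sum_Icc_add (fun k => lam k * ip f (phi k) ^ 2), Finset.mul_sum]
  refine add_le_add (Finset.sum_le_sum fun k hk => ?_) (hB M)
  obtain ⟨hk1, hkN⟩ := Finset.mem_Icc.1 hk
  exact mul_le_mul_of_nonneg_right (H.lam_mono hk1 hkN) (sq_nonneg _)

theorem tendsto_trace_tail (H : SturmLiouville θ₁ θ₂ p q lam phi) (hf : f ∈ robinDomain θ₁ θ₂)
    (N : ℕ) :
    Filter.Tendsto (fun M => ∑ k ∈ Finset.range M, ip f (phi (N + 1 + k)) * phi (N + 1 + k) 0)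
      Filter.atTop (nhds (f 0 - ∑ k ∈ Finset.Icc 1 N, ip f (phi k) * phi k 0)) := by
  refine (((H.tendsto_sum_trace hf).comp (Filter.tendsto_add_atTop_nat N)).sub_const
    (∑ k ∈ Finset.Icc 1 N, ip f (phi k) * phi k 0)).congr fun M => ?_
  simp only [Function.comp, add_comm M N]
  rw [sum_range_add_eq_sum_Icc_add fun k => ip f (phi k) * phi k 0]
  ring

end SturmLiouville

/-! ### Comparison of norms -/

theorem ip_self_add_smul_le {f g : ℝ → ℝ} (hf : ContinuousOn f (Icc 0 1))
    (hg : ContinuousOn g (Icc 0 1)) (k : ℝ) :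
    ip (f + k • g) (f + k • g) ≤ 2 * ip f f + 2 * k ^ 2 * ip g g := by
  have hsplit : 2 * ip f f + 2 * k ^ 2 * ip g g =
      ∫ x in (0 : ℝ)..1, (2 * f x ^ 2 + 2 * k ^ 2 * g x ^ 2) := by
    rw [intervalIntegral.integral_add (intervalIntegrable_unit (by fun_prop))
      (intervalIntegrable_unit (by fun_prop)), intervalIntegral.integral_const_mul,
      intervalIntegral.integral_const_mul, ip_self, ip_self]
  rw [hsplit, ip_self]
  refine integral_unit_mono (by fun_prop) (by fun_prop) fun x _ => ?_
  simp only [Pi.add_apply, Pi.smul_apply, smul_eq_mul]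
  nlinarith [sq_nonneg (f x - k * g x)]

theorem h1sq_add_smul_le {f g : ℝ → ℝ} (hf : ContDiffOn ℝ 1 f (Icc 0 1))
    (hg : ContDiffOn ℝ 1 g (Icc 0 1)) (k : ℝ) :
    h1sq (f + k • g) ≤ 2 * h1sq f + 2 * k ^ 2 * h1sq g := by
  have hderiv : ∫ x in (0 : ℝ)..1, dI (f + k • g) x ^ 2 =
      ip (dI f + k • dI g) (dI f + k • dI g) := by
    rw [ip_self]
    exact integral_unit_congr fun x hx => by rw [dI_add_smul hf hg k hx]; rfl
  rw [h1sq, hderiv, h1sq, h1sq, ← ip_self, ← ip_self, ← ip_self, ← ip_self, ← ip_self]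
  linarith [ip_self_add_smul_le hf.continuousOn hg.continuousOn k,
    ip_self_add_smul_le (continuousOn_dI hf) (continuousOn_dI hg) k]

section ObserverNorms

variable {N₀ N : ℕ} {lam : ℕ → ℝ} {zn zhat : ℕ → ℝ → ℝ} {t : ℝ}

theorem observerState_dotProduct_self :
    observerState N₀ zn zhat t ⬝ᵥ observerState N₀ zn zhat t =
      ∑ i : Fin N₀, zhat (i.val + 1) t ^ 2
        + ∑ i : Fin N₀, (zn (i.val + 1) t - zhat (i.val + 1) t) ^ 2 := by
  rw [observerState, sumElim_dotProduct_sumElim]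
  simp only [dotProduct, sq]

theorem scaledError_dotProduct_self (hlam : ∀ n ≥ 1, 0 < lam n) :
    scaledError N₀ N lam zn zhat t ⬝ᵥ scaledError N₀ N lam zn zhat t =
      ∑ j : Fin (N - N₀), lam (N₀ + j.val + 1) *
        (zn (N₀ + j.val + 1) t - zhat (N₀ + j.val + 1) t) ^ 2 := by
  refine Finset.sum_congr rfl fun j _ => ?_
  rw [scaledError, mul_mul_mul_comm, Real.mul_self_sqrt (hlam _ (by omega)).le, sq]

theorem sum_sq_sub_le {ι : Type*} (s : Finset ι) (f g : ι → ℝ) :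
    ∑ k ∈ s, (f k - g k) ^ 2 ≤ 2 * ∑ k ∈ s, f k ^ 2 + 2 * ∑ k ∈ s, g k ^ 2 := by
  rw [Finset.mul_sum, Finset.mul_sum, ← Finset.sum_add_distrib]
  exact Finset.sum_le_sum fun k _ => by nlinarith [sq_nonneg (f k + g k)]

theorem observerState_dotProduct_self_le (hN : N₀ ≤ N) :
    observerState N₀ zn zhat t ⬝ᵥ observerState N₀ zn zhat t ≤
      2 * ∑ k ∈ Finset.Icc 1 N, zn k t ^ 2 + 3 * ∑ k ∈ Finset.Icc 1 N, zhat k t ^ 2 := by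
  have herror := sum_sq_sub_le (Finset.Icc 1 N) (zn · t) (zhat · t)
  rw [sum_Icc_eq_sum_fin_add hN fun k => (zn k t - zhat k t) ^ 2] at herror
  have hestimate := sum_Icc_eq_sum_fin_add hN fun k => zhat k t ^ 2
  have herror_nonneg :
      0 ≤ ∑ j : Fin (N - N₀), (zn (N₀ + j.val + 1) t - zhat (N₀ + j.val + 1) t) ^ 2 := by
    positivity
  have hestimate_nonneg : 0 ≤ ∑ j : Fin (N - N₀), zhat (N₀ + j.val + 1) t ^ 2 := by positivity
  rw [observerState_dotProduct_self]
  linarith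

theorem scaledError_dotProduct_self_le (hN : N₀ < N) (hlam : ∀ n ≥ 1, 0 < lam n)
    (hmono : ∀ n, 1 ≤ n → n ≤ N → lam n ≤ lam N) :
    scaledError N₀ N lam zn zhat t ⬝ᵥ scaledError N₀ N lam zn zhat t ≤
      lam N * (2 * ∑ k ∈ Finset.Icc 1 N, zn k t ^ 2 + 2 * ∑ k ∈ Finset.Icc 1 N, zhat k t ^ 2) := by
  have herror := sum_sq_sub_le (Finset.Icc 1 N) (zn · t) (zhat · t)
  rw [sum_Icc_eq_sum_fin_add hN.le fun k => (zn k t - zhat k t) ^ 2] at herror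
  have herror_nonneg : 0 ≤ ∑ i : Fin N₀, (zn (i.val + 1) t - zhat (i.val + 1) t) ^ 2 := by
    positivity
  rw [scaledError_dotProduct_self hlam]
  calc _ ≤ ∑ j : Fin (N - N₀), lam N * (zn (N₀ + j.val + 1) t - zhat (N₀ + j.val + 1) t) ^ 2 := by
        refine Finset.sum_le_sum fun j _ => mul_le_mul_of_nonneg_right ?_ (sq_nonneg _)
        exact hmono _ (by omega) (by omega)
    _ = lam N * ∑ j : Fin (N - N₀), (zn (N₀ + j.val + 1) t - zhat (N₀ + j.val + 1) t) ^ 2 :=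
        (Finset.mul_sum _ _ _).symm
    _ ≤ _ := mul_le_mul_of_nonneg_left (by linarith) (hlam N (by omega)).le

theorem sum_sq_error_le_dotProduct (hN : N₀ ≤ N) (hlam : ∀ n ≥ 1, 0 < lam n)
    (hmono : ∀ n ≥ 1, lam 1 ≤ lam n) :
    ∑ k ∈ Finset.Icc 1 N, (zn k t - zhat k t) ^ 2 ≤
      observerState N₀ zn zhat t ⬝ᵥ observerState N₀ zn zhat t
        + scaledError N₀ N lam zn zhat t ⬝ᵥ scaledError N₀ N lam zn zhat t / lam 1 := by
  have hestimate : 0 ≤ ∑ i : Fin N₀, zhat (i.val + 1) t ^ 2 := by positivity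
  have hscaled : ∑ j : Fin (N - N₀), (zn (N₀ + j.val + 1) t - zhat (N₀ + j.val + 1) t) ^ 2
      ≤ scaledError N₀ N lam zn zhat t ⬝ᵥ scaledError N₀ N lam zn zhat t / lam 1 := by
    rw [le_div_iff₀ (hlam 1 le_rfl), scaledError_dotProduct_self hlam, Finset.sum_mul]
    refine Finset.sum_le_sum fun j _ => ?_
    rw [mul_comm]
    exact mul_le_mul_of_nonneg_right (hmono _ (by omega)) (sq_nonneg _)
  rw [sum_Icc_eq_sum_fin_add hN, observerState_dotProduct_self]
  linarith

end ObserverNorms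

/-! ### The closed loop -/

/-- Classical solutions of the plant in closed loop with the controller fed by `y(t) = z(t,0)`, the
observer being initialised by constants on `[-h,0]`. -/
structure ClosedLoopSolution (θ₁ θ₂ : ℝ) (p qt : ℝ → ℝ) (q_c c h : ℝ) (lam : ℕ → ℝ)
    (phi : ℕ → ℝ → ℝ) (N₀ N : ℕ) (K L : Fin N₀ → ℝ) (z : ℝ → ℝ → ℝ) (u : ℝ → ℝ)
    (zhat : ℕ → ℝ → ℝ) : Prop where
  plant : ClassicalSolution θ₁ θ₂ p qt c h z u
  observer : ObserverSolution N₀ N lam q_c c h (betaC p qt θ₂ q_c lam phi)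
    (fun n => ip (bFun θ₂) (phi n)) (fun n => phi n 0) K L (fun t => z t 0) u zhat
  input_cont : ContinuousOn u (Icc (-h) 0)
  zhat_const : ∀ n, 1 ≤ n → n ≤ N → ∀ τ ∈ Icc (-h) 0, zhat n τ = zhat n 0

/-- The initial data of a closed-loop solution are at most `D`, in squared norms. -/
structure InitialDataBound (h : ℝ) (N : ℕ) (z : ℝ → ℝ → ℝ) (u : ℝ → ℝ) (zhat : ℕ → ℝ → ℝ)
    (D : ℝ) : Prop where
  sq_le : ∀ τ ∈ Icc (-h) 0, ip (z τ) (z τ) ≤ D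
  input_le : ∀ τ ∈ Icc (-h) 0, u τ ^ 2 ≤ D
  h1sq_le : h1sq (z 0) ≤ D
  zhat_le : ∑ n ∈ Finset.Icc 1 N, zhat n 0 ^ 2 ≤ D

theorem InitialDataBound.nonneg {h : ℝ} {N : ℕ} {z : ℝ → ℝ → ℝ} {u : ℝ → ℝ} {zhat : ℕ → ℝ → ℝ}
    {D : ℝ} (I : InitialDataBound h N z u zhat D) : 0 ≤ D :=
  (h1sq_nonneg _).trans I.h1sq_le

/-- The modal coefficient `⟨z(t), φₙ⟩`. -/
def modalCoeff (phi : ℕ → ℝ → ℝ) (z : ℝ → ℝ → ℝ) (n : ℕ) (t : ℝ) : ℝ := ip (z t) (phi n)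

/-- The closed loop in modal coordinates, after lifting the boundary input into the domain. -/
def closedLoopSystem (θ₂ : ℝ) (p qt : ℝ → ℝ) (q_c c : ℝ) (lam : ℕ → ℝ) (phi : ℕ → ℝ → ℝ)
    (N₀ N : ℕ) (K L : Fin N₀ → ℝ) : ModalSystem (Fin N₀ ⊕ Fin N₀) (Fin (N - N₀)) where
  F₁ := F1 N₀ lam q_c (B0 N₀ p qt θ₂ q_c lam phi) (fun i => phi (i.val + 1) 0) K L
  F₂ := F2 N₀ N L (fun i => phi (N₀ + i.val + 1) 0 / √(lam (N₀ + i.val + 1)))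
  F₃ := A1 N₀ N lam q_c
  inj := Lv N₀ L
  gain := Kt N₀ K
  c := c
  q_c := q_c
  l k := lam (N + 1 + k)
  a k := ip (aFun p qt θ₂) (phi (N + 1 + k))
  b k := ip (bFun θ₂) (phi (N + 1 + k))

/-- The modal state of a closed-loop solution; the residual modes are those of the lifted state
`z + u b`, which satisfies the homogeneous boundary conditions. -/
def closedLoopState (θ₂ : ℝ) (lam : ℕ → ℝ) (phi : ℕ → ℝ → ℝ) (N₀ N : ℕ) (z : ℝ → ℝ → ℝ) (u : ℝ → ℝ)
    (zhat : ℕ → ℝ → ℝ) (t : ℝ) : ModalState (Fin N₀ ⊕ Fin N₀) (Fin (N - N₀)) where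
  core := observerState N₀ (modalCoeff phi z) zhat t
  fast := scaledError N₀ N lam (modalCoeff phi z) zhat t
  residual k := ip (z t + u t • bFun θ₂) (phi (N + 1 + k))
  input := u t

/-- The output `z(t,0)` minus the contributions of the first `N` modes of the lifted state. -/
def residualOutput (θ₂ : ℝ) (phi : ℕ → ℝ → ℝ) (N : ℕ) (z : ℝ → ℝ → ℝ) (u : ℝ → ℝ) (t : ℝ) : ℝ :=
  z t 0 - ∑ k ∈ Finset.Icc 1 N, ip (z t + u t • bFun θ₂) (phi k) * phi k 0

theorem ClassicalSolution.ip_lifted {θ₁ θ₂ : ℝ} {p q qt : ℝ → ℝ} {c h : ℝ} {lam : ℕ → ℝ}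
    {phi : ℕ → ℝ → ℝ} {z : ℝ → ℝ → ℝ} {u : ℝ → ℝ} (Z : ClassicalSolution θ₁ θ₂ p qt c h z u)
    (H : SturmLiouville θ₁ θ₂ p q lam phi) {t : ℝ} (ht : -h ≤ t) {n : ℕ} (hn : 1 ≤ n) :
    ip (z t + u t • bFun θ₂) (phi n) = modalCoeff phi z n t + ip (bFun θ₂) (phi n) * u t := by
  rw [ip_add_left (Z.space_reg t ht).continuousOn
    ((contDiff_bFun θ₂ 0).continuous.continuousOn.const_smul _) (H.continuousOn_phi hn),
    ip_smul_left, mul_comm, modalCoeff]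

namespace ClosedLoopSolution

variable {θ₁ θ₂ : ℝ} {p q qt : ℝ → ℝ} {q_c c h D : ℝ} {lam : ℕ → ℝ} {phi : ℕ → ℝ → ℝ} {N₀ N : ℕ}
  {K L : Fin N₀ → ℝ} {z : ℝ → ℝ → ℝ} {u : ℝ → ℝ} {zhat : ℕ → ℝ → ℝ}

theorem continuousOn_input (S : ClosedLoopSolution θ₁ θ₂ p qt q_c c h lam phi N₀ N K L z u zhat)
    (hh : 0 ≤ h) (hN : N₀ ≤ N) : ContinuousOn u (Ici (-h)) :=
  S.observer.continuousOn_input hh hN S.input_cont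

theorem continuousOn_ip_lifted
    (S : ClosedLoopSolution θ₁ θ₂ p qt q_c c h lam phi N₀ N K L z u zhat)
    (H : SturmLiouville θ₁ θ₂ p q lam phi) (hh : 0 ≤ h) (hN : N₀ ≤ N) {n : ℕ} (hn : 1 ≤ n) :
    ContinuousOn (fun t => ip (z t + u t • bFun θ₂) (phi n)) (Ici (-h)) :=
  ((S.plant.continuousOn_ip (H.continuousOn_phi hn)).add
    (continuousOn_const.mul (S.continuousOn_input hh hN))).congr
    fun _ ht => S.plant.ip_lifted H ht hn

theorem continuousOn_residualOutput
    (S : ClosedLoopSolution θ₁ θ₂ p qt q_c c h lam phi N₀ N K L z u zhat)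
    (H : SturmLiouville θ₁ θ₂ p q lam phi) (hh : 0 ≤ h) (hN : N₀ ≤ N) :
    ContinuousOn (residualOutput θ₂ phi N z u) (Ici 0) := by
  have hsub : Ici (0 : ℝ) ⊆ Ici (-h) := Ici_subset_Ici.2 (by linarith)
  have houtput : ContinuousOn (fun t => z t 0) (Ici 0) :=
    S.plant.cont.comp (f := fun t : ℝ => (t, (0 : ℝ))) (by fun_prop) fun t ht => ⟨hsub ht, by simp⟩
  exact houtput.sub (continuousOn_finsetSum _ fun k hk =>
    ((S.continuousOn_ip_lifted H hh hN (Finset.mem_Icc.1 hk).1).mono hsub).mul continuousOn_const)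

theorem hasDerivAt_modalCoeff
    (S : ClosedLoopSolution θ₁ θ₂ p qt q_c c h lam phi N₀ N K L z u zhat)
    (H : SturmLiouville θ₁ θ₂ p q lam phi) (hqt : ∀ x ∈ Icc (0 : ℝ) 1, qt x = q x - q_c)
    (hh : 0 ≤ h) : ∀ n ≥ 1, ∀ t > 0, HasDerivAt (modalCoeff phi z n)
      ((-lam n + q_c) * modalCoeff phi z n t + c * modalCoeff phi z n (t - h)
        + betaC p qt θ₂ q_c lam phi n * u t) t :=
  fun _ hn _ ht => S.plant.hasDerivAt_ip_phi H hqt hh hn ht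

theorem hasDerivAt_core (S : ClosedLoopSolution θ₁ θ₂ p qt q_c c h lam phi N₀ N K L z u zhat)
    (H : SturmLiouville θ₁ θ₂ p q lam phi) (hqt : ∀ x ∈ Icc (0 : ℝ) 1, qt x = q x - q_c)
    (hh : 0 ≤ h) (hN : N₀ ≤ N) {t : ℝ} (ht : 0 < t) :
    HasDerivAt (observerState N₀ (modalCoeff phi z) zhat)
      ((closedLoopSystem θ₂ p qt q_c c lam phi N₀ N K L).coreRate
        (closedLoopState θ₂ lam phi N₀ N z u zhat t)
        (closedLoopState θ₂ lam phi N₀ N z u zhat (t - h)) (residualOutput θ₂ phi N z u t)) t := by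
  have houtput : residualOutput θ₂ phi N z u t = z t 0 - ∑ k ∈ Finset.Icc 1 N,
      (modalCoeff phi z k t + ip (bFun θ₂) (phi k) * u t) * phi k 0 := by
    rw [residualOutput]
    congr 1
    exact Finset.sum_congr rfl fun k hk => by
      rw [S.plant.ip_lifted H (by linarith) (Finset.mem_Icc.1 hk).1]
  rw [houtput]
  exact S.observer.hasDerivAt_observerState hN H.lam_pos (S.hasDerivAt_modalCoeff H hqt hh) ht

theorem hasDerivAt_residual (S : ClosedLoopSolution θ₁ θ₂ p qt q_c c h lam phi N₀ N K L z u zhat)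
    (H : SturmLiouville θ₁ θ₂ p q lam phi) (hqt : ∀ x ∈ Icc (0 : ℝ) 1, qt x = q x - q_c)
    (hh : 0 ≤ h) (hN : N₀ ≤ N) (k : ℕ) {t : ℝ} (ht : 0 < t) :
    HasDerivAt (fun s => (closedLoopState θ₂ lam phi N₀ N z u zhat s).residual k)
      ((closedLoopSystem θ₂ p qt q_c c lam phi N₀ N K L).residualRate
        (closedLoopState θ₂ lam phi N₀ N z u zhat t)
        (closedLoopState θ₂ lam phi N₀ N z u zhat (t - h)) (residualOutput θ₂ phi N z u t) k)
      t := by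
  have hk : 1 ≤ N + 1 + k := by omega
  have hinput := S.observer.hasDerivAt_input ht (S.hasDerivAt_core H hqt hh hN ht)
  refine (((S.hasDerivAt_modalCoeff H hqt hh _ hk t ht).fun_add
    (hinput.const_mul (ip (bFun θ₂) (phi (N + 1 + k))))).congr_deriv ?_).congr_of_eventuallyEq ?_
  · rw [ModalSystem.residualRate]
    simp only [closedLoopSystem, closedLoopState, ← S.observer.feedback_eq ht.le, betaC]
    rw [S.plant.ip_lifted H (by linarith) hk, S.plant.ip_lifted H (by linarith) hk]
    ring
  · filter_upwards [Ioi_mem_nhds ht] with s hs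
    exact S.plant.ip_lifted H (by linarith [mem_Ioi.1 hs]) hk

theorem tendsto_residualOutput_defect
    (S : ClosedLoopSolution θ₁ θ₂ p qt q_c c h lam phi N₀ N K L z u zhat)
    (H : SturmLiouville θ₁ θ₂ p q lam phi) (hh : 0 ≤ h) {Mφ : ℝ}
    (hM : ∀ M, ∑ k ∈ Finset.range M, phi (N + 1 + k) 0 ^ 2 / lam (N + 1 + k) ≤ Mφ) {t : ℝ}
    (ht : 0 ≤ t) :
    Filter.Tendsto (fun M => max 0 (residualOutput θ₂ phi N z u t ^ 2 -
      Mφ * (closedLoopSystem θ₂ p qt q_c c lam phi N₀ N K L).residualEnergy M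
        (closedLoopState θ₂ lam phi N₀ N z u zhat t))) Filter.atTop (nhds 0) := by
  have htrace := H.tendsto_trace_tail (S.plant.lifted_mem H.angle_right hh ht) N
  have hzero : (z t + u t • bFun θ₂) 0 = z t 0 := by simp [bFun]
  rw [hzero] at htrace
  exact tendsto_max_trace_defect (fun k => H.lam_pos _ (by omega)) hM htrace

theorem isTrajectory (S : ClosedLoopSolution θ₁ θ₂ p qt q_c c h lam phi N₀ N K L z u zhat)
    (H : SturmLiouville θ₁ θ₂ p q lam phi) (hqt : ∀ x ∈ Icc (0 : ℝ) 1, qt x = q x - q_c)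
    (hh : 0 ≤ h) (hN : N₀ ≤ N) {Mφ : ℝ}
    (hM : ∀ M, ∑ k ∈ Finset.range M, phi (N + 1 + k) 0 ^ 2 / lam (N + 1 + k) ≤ Mφ) :
    (closedLoopSystem θ₂ p qt q_c c lam phi N₀ N K L).IsTrajectory h Mφ
      (closedLoopState θ₂ lam phi N₀ N z u zhat) (residualOutput θ₂ phi N z u) := by
  have hmode : ∀ n ≥ 1, ContinuousOn (modalCoeff phi z n) (Ici (-h)) := fun n hn =>
    S.plant.continuousOn_ip (H.continuousOn_phi hn)
  refine
    { continuousOn_core := continuousOn_pi.2 ?_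
      continuousOn_fast := continuousOn_pi.2 fun j => continuousOn_const.mul
        ((hmode _ (by omega)).sub (S.observer.cont _ (by omega) (by omega)))
      continuousOn_residual := fun k => S.continuousOn_ip_lifted H hh hN (by omega)
      continuousOn_input := S.continuousOn_input hh hN
      continuousOn_output := S.continuousOn_residualOutput H hh hN
      hasDerivAt_core := fun t ht => S.hasDerivAt_core H hqt hh hN ht
      hasDerivAt_fast := fun t ht =>
        S.observer.hasDerivAt_scaledError (S.hasDerivAt_modalCoeff H hqt hh) ht
      hasDerivAt_residual := fun k t ht => S.hasDerivAt_residual H hqt hh hN k ht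
      input_eq := fun t ht => S.observer.feedback_eq ht
      defect := fun t ht => S.tendsto_residualOutput_defect H hh hM ht }
  rintro (i | i)
  · exact S.observer.cont _ (by omega) (by omega)
  · exact (hmode _ (by omega)).sub (S.observer.cont _ (by omega) (by omega))

theorem core_fast_le (S : ClosedLoopSolution θ₁ θ₂ p qt q_c c h lam phi N₀ N K L z u zhat)
    (H : SturmLiouville θ₁ θ₂ p q lam phi) (hN : N₀ < N) (I : InitialDataBound h N z u zhat D)
    {s : ℝ} (hs : s ∈ Icc (-h) 0) :
    observerState N₀ (modalCoeff phi z) zhat s ⬝ᵥ observerState N₀ (modalCoeff phi z) zhat s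
      + scaledError N₀ N lam (modalCoeff phi z) zhat s ⬝ᵥ
        scaledError N₀ N lam (modalCoeff phi z) zhat s ≤ (5 + 4 * lam N) * D := by
  have hplant : ∑ k ∈ Finset.Icc 1 N, modalCoeff phi z k s ^ 2 ≤ D :=
    (H.sum_sq_le (S.plant.space_reg s hs.1).continuousOn N).trans (I.sq_le s hs)
  have hestimate : ∑ k ∈ Finset.Icc 1 N, zhat k s ^ 2 ≤ D := by
    refine (Finset.sum_congr rfl fun k hk => ?_).trans_le I.zhat_le
    rw [S.zhat_const k (Finset.mem_Icc.1 hk).1 (Finset.mem_Icc.1 hk).2 s hs]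
  have hcore := observerState_dotProduct_self_le (zn := modalCoeff phi z) (zhat := zhat) (t := s)
    hN.le
  have hfast := (scaledError_dotProduct_self_le (zn := modalCoeff phi z) (zhat := zhat) (t := s) hN
    H.lam_pos fun n h1 h2 => H.lam_mono h1 h2).trans (mul_le_mul_of_nonneg_left
      (add_le_add (mul_le_mul_of_nonneg_left hplant zero_le_two)
        (mul_le_mul_of_nonneg_left hestimate zero_le_two)) (H.lam_pos N (by omega)).le)
  linarith

theorem sqNorm_closedLoopState_le
    (S : ClosedLoopSolution θ₁ θ₂ p qt q_c c h lam phi N₀ N K L z u zhat)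
    (H : SturmLiouville θ₁ θ₂ p q lam phi) (hN : N₀ < N) (I : InitialDataBound h N z u zhat D)
    {s : ℝ} (hs : s ∈ Icc (-h) 0) (M : ℕ) :
    (closedLoopState θ₂ lam phi N₀ N z u zhat s).sqNorm M ≤
      (8 + 4 * lam N + 2 * ip (bFun θ₂) (bFun θ₂)) * D := by
  have hz := (S.plant.space_reg s hs.1).continuousOn
  have hb := (contDiff_bFun θ₂ 0).continuous.continuousOn (s := Icc (0 : ℝ) 1)
  have hresidual := (H.sum_tail_sq_le (hz.add (hb.const_smul (u s))) N M).trans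
    (ip_self_add_smul_le hz hb (u s))
  have hlift := mul_le_mul_of_nonneg_right (I.input_le s hs) (ip_self_nonneg (bFun θ₂))
  rw [ModalState.sqNorm]
  simp only [closedLoopState]
  linarith [S.core_fast_le H hN I hs, I.sq_le s hs, I.input_le s hs]

theorem sqEnergyNorm_closedLoopState_zero_le
    (S : ClosedLoopSolution θ₁ θ₂ p qt q_c c h lam phi N₀ N K L z u zhat)
    (H : SturmLiouville θ₁ θ₂ p q lam phi) (hh : 0 ≤ h) (hN : N₀ < N)
    (I : InitialDataBound h N z u zhat D) {Ce : ℝ} (hCe : 0 ≤ Ce)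
    (hform : ∀ f ∈ robinDomain θ₁ θ₂, ip (slOp p q f) f ≤ Ce * h1sq f) (M : ℕ) :
    (closedLoopSystem θ₂ p qt q_c c lam phi N₀ N K L).sqEnergyNorm M
        (closedLoopState θ₂ lam phi N₀ N z u zhat 0) ≤
      (5 + 4 * lam N + Ce * (2 + 2 * h1sq (bFun θ₂))) * D := by
  have hzero : (0 : ℝ) ∈ Icc (-h) 0 := ⟨by linarith, le_rfl⟩
  have hw := S.plant.lifted_mem H.angle_right hh le_rfl
  have hlift := h1sq_add_smul_le ((S.plant.space_reg 0 (by linarith)).of_le one_le_two)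
    (contDiff_bFun θ₂ 1).contDiffOn (u 0)
  have hinput := mul_le_mul_of_nonneg_right (I.input_le 0 hzero) (h1sq_nonneg (bFun θ₂))
  have hresidual := (H.sum_tail_energy_le hw N M).trans ((hform _ hw).trans
    (mul_le_mul_of_nonneg_left (c := (2 + 2 * h1sq (bFun θ₂)) * D)
      (by linarith [I.h1sq_le]) hCe))
  rw [ModalSystem.sqEnergyNorm]
  simp only [ModalSystem.residualEnergy, closedLoopSystem, closedLoopState]
  linarith [S.core_fast_le H hN I hzero]

end ClosedLoopSolution

theorem exists_dataBound_closedLoopState {θ₁ θ₂ : ℝ} {p q : ℝ → ℝ} {lam : ℕ → ℝ}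
    {phi : ℕ → ℝ → ℝ} (H : SturmLiouville θ₁ θ₂ p q lam phi) {N₀ N : ℕ} (hN : N₀ < N) :
    ∃ B > 0, ∀ qt q_c c h (K L : Fin N₀ → ℝ) z u zhat D, 0 ≤ h →
      ClosedLoopSolution θ₁ θ₂ p qt q_c c h lam phi N₀ N K L z u zhat →
      InitialDataBound h N z u zhat D →
      (closedLoopSystem θ₂ p qt q_c c lam phi N₀ N K L).DataBound h
        (closedLoopState θ₂ lam phi N₀ N z u zhat) (B * D) := by
  obtain ⟨Ce, hCe, hform⟩ :=
    exists_ip_slOp_le_mul_h1sq H.p_reg H.q_cont θ₁ θ₂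
  have hlam := H.lam_pos N (by omega)
  have hb := ip_self_nonneg (bFun θ₂)
  have hb1 := h1sq_nonneg (bFun θ₂)
  refine ⟨8 + 4 * lam N + 2 * ip (bFun θ₂) (bFun θ₂) + Ce * (2 + 2 * h1sq (bFun θ₂)),
    by positivity, fun qt q_c c h K L z u zhat D hh S I => ⟨fun s hs M => ?_, fun M => ?_⟩⟩
  · refine (S.sqNorm_closedLoopState_le H hN I hs M).trans
      (mul_le_mul_of_nonneg_right ?_ I.nonneg)
    linarith [show 0 ≤ Ce * (2 + 2 * h1sq (bFun θ₂)) by positivity]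
  · refine (S.sqEnergyNorm_closedLoopState_zero_le H hh hN I hCe.le hform M).trans
      (mul_le_mul_of_nonneg_right ?_ I.nonneg)
    linarith

/-! ### Exponential decay of the closed loop -/

theorem ModalSystem.core_add_fast_le_of_sqEnergyNorm_le {m n : Type*} [Fintype m] [Fintype n]
    {S : ModalSystem m n} {x : ModalState m n} {E : ℝ} (hE : ∀ M, S.sqEnergyNorm M x ≤ E) :
    x.core ⬝ᵥ x.core + x.fast ⬝ᵥ x.fast ≤ E := by
  simpa [ModalSystem.sqEnergyNorm, ModalSystem.residualEnergy] using hE 0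

theorem ModalSystem.residualEnergy_le_of_sqEnergyNorm_le {m n : Type*} [Fintype m] [Fintype n]
    {S : ModalSystem m n} {x : ModalState m n} {E : ℝ} (hE : ∀ M, S.sqEnergyNorm M x ≤ E) (M : ℕ) :
    S.residualEnergy M x ≤ E :=
  (le_add_of_nonneg_left (add_nonneg (dotProduct_self_nonneg _) (dotProduct_self_nonneg _))).trans
    (hE M)

theorem exists_sq_estimate_decay {N₀ N : ℕ} {lam : ℕ → ℝ} {q_c c h δ : ℝ} (hh : 0 < h) (hδ : 0 < δ)
    (hlam : ∀ n, N₀ + 1 ≤ n → lam (N₀ + 1) ≤ lam n) (hgap : -lam (N₀ + 1) + q_c + |c| < 0)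
    (β : ℕ → ℝ) :
    ∃ δ' > 0, δ' ≤ δ ∧ ∃ A > 0, ∀ b C (K L : Fin N₀ → ℝ) y u zhat D,
      ObserverSolution N₀ N lam q_c c h β b C K L y u zhat →
      (∀ t ≥ 0, u t ^ 2 ≤ exp (-2 * δ * t) * D) →
      (∀ n ∈ Finset.Icc 1 N, ∀ τ ∈ Icc (-h) 0, zhat n τ ^ 2 ≤ D) →
      ∀ n, N₀ + 1 ≤ n → n ≤ N → ∀ t ≥ 0, zhat n t ^ 2 ≤ A * exp (-2 * δ' * t) * D := by
  obtain ⟨δ', hδ', hle, A, hA, decay⟩ := exists_scalar_delay_decay hh (neg_pos.2 hgap) hδ c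
  have hB : 0 ≤ ∑ n ∈ Finset.Icc 1 N, β n ^ 2 := by positivity
  refine ⟨δ', hδ', hle, A * (1 + ∑ n ∈ Finset.Icc 1 N, β n ^ 2), by positivity, ?_⟩
  intro b C K L y u zhat D O hu hdata n hn hnN t ht
  have hmem : n ∈ Finset.Icc 1 N := Finset.mem_Icc.2 ⟨by omega, hnN⟩
  have hβ : β n ^ 2 ≤ ∑ n ∈ Finset.Icc 1 N, β n ^ 2 :=
    Finset.single_le_sum (f := fun n => β n ^ 2) (fun _ _ => sq_nonneg _) hmem
  have hD : 0 ≤ D := by simpa using (sq_nonneg _).trans (hu 0 le_rfl)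
  have hforcing : ∀ s ≥ 0, (β n * u s) ^ 2 ≤
      exp (-2 * δ * s) * ((1 + ∑ n ∈ Finset.Icc 1 N, β n ^ 2) * D) := fun s hs => by
    have hinput := mul_le_mul hβ (hu s hs) (sq_nonneg _) hB
    have hnonneg : 0 ≤ exp (-2 * δ * s) * D := by positivity
    rw [mul_pow]
    linarith
  have hhistory : ∀ s ∈ Icc (-h) 0,
      zhat n s ^ 2 ≤ (1 + ∑ n ∈ Finset.Icc 1 N, β n ^ 2) * D := fun s hs => by
    linarith [hdata n hmem s hs, mul_nonneg hB hD]
  refine (decay (-lam n + q_c) _ (zhat n) (fun s => β n * u s) (by linarith [hlam n hn])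
    (O.cont n (by omega) hnN) (O.high n hn hnN) hforcing hhistory t ht).trans_eq (by ring)

theorem h1sq_le_add_smul {f g : ℝ → ℝ} (hf : ContDiffOn ℝ 1 f (Icc 0 1))
    (hg : ContDiffOn ℝ 1 g (Icc 0 1)) (k : ℝ) :
    h1sq f ≤ 2 * h1sq (f + k • g) + 2 * k ^ 2 * h1sq g := by
  have key : h1sq (f + k • g + -k • g) ≤ 2 * h1sq (f + k • g) + 2 * (-k) ^ 2 * h1sq g :=
    h1sq_add_smul_le (hf.add (hg.const_smul k)) hg (-k)
  rwa [neg_sq, neg_smul, add_neg_cancel_right] at key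

section

variable {θ₁ θ₂ : ℝ} {p q qt : ℝ → ℝ} {q_c c h : ℝ} {lam : ℕ → ℝ} {phi : ℕ → ℝ → ℝ} {N₀ N : ℕ}
  {K L : Fin N₀ → ℝ} {z : ℝ → ℝ → ℝ} {u : ℝ → ℝ} {zhat : ℕ → ℝ → ℝ}

theorem ClassicalSolution.sum_lifted_sq_le (Z : ClassicalSolution θ₁ θ₂ p qt c h z u)
    (H : SturmLiouville θ₁ θ₂ p q lam phi) (zhat : ℕ → ℝ → ℝ) {t : ℝ} (ht : -h ≤ t) :
    ∑ k ∈ Finset.Icc 1 N, ip (z t + u t • bFun θ₂) (phi k) ^ 2 ≤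
      3 * (∑ k ∈ Finset.Icc 1 N, zhat k t ^ 2
        + ∑ k ∈ Finset.Icc 1 N, (modalCoeff phi z k t - zhat k t) ^ 2
        + ip (bFun θ₂) (bFun θ₂) * u t ^ 2) := by
  have hb := H.sum_sq_le (contDiff_bFun θ₂ 0).continuous.continuousOn N
  refine le_trans ?_ (mul_le_mul_of_nonneg_left (add_le_add_right
    (mul_le_mul_of_nonneg_right hb (sq_nonneg (u t))) _) zero_le_three)
  rw [Finset.sum_mul, ← Finset.sum_add_distrib, ← Finset.sum_add_distrib, Finset.mul_sum]
  refine Finset.sum_le_sum fun k hk => ?_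
  rw [Z.ip_lifted H ht (Finset.mem_Icc.1 hk).1]
  nlinarith [sq_nonneg (zhat k t - (modalCoeff phi z k t - zhat k t)),
    sq_nonneg (zhat k t - ip (bFun θ₂) (phi k) * u t),
    sq_nonneg (modalCoeff phi z k t - zhat k t - ip (bFun θ₂) (phi k) * u t)]

namespace ClosedLoopSolution

theorem input_sq_le (S : ClosedLoopSolution θ₁ θ₂ p qt q_c c h lam phi N₀ N K L z u zhat) {t E : ℝ}
    (ht : 0 ≤ t) (hE : ∀ M, (closedLoopSystem θ₂ p qt q_c c lam phi N₀ N K L).sqEnergyNorm M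
      (closedLoopState θ₂ lam phi N₀ N z u zhat t) ≤ E) :
    u t ^ 2 ≤ Kt N₀ K ⬝ᵥ Kt N₀ K * E := by
  have hcore := ModalSystem.core_add_fast_le_of_sqEnergyNorm_le hE
  rw [S.observer.feedback_eq (zn := modalCoeff phi z) ht]
  exact (dotProduct_sq_le _ _).trans (mul_le_mul_of_nonneg_left
    ((le_add_of_nonneg_right (dotProduct_self_nonneg _)).trans hcore) (dotProduct_self_nonneg _))

theorem sum_sq_error_le
    (H : SturmLiouville θ₁ θ₂ p q lam phi) (hN : N₀ ≤ N) {t E : ℝ}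
    (hE : ∀ M, (closedLoopSystem θ₂ p qt q_c c lam phi N₀ N K L).sqEnergyNorm M
      (closedLoopState θ₂ lam phi N₀ N z u zhat t) ≤ E) :
    ∑ k ∈ Finset.Icc 1 N, (modalCoeff phi z k t - zhat k t) ^ 2 ≤ (1 + 1 / lam 1) * E := by
  have hcore := ModalSystem.core_add_fast_le_of_sqEnergyNorm_le hE
  have hcore_nonneg := dotProduct_self_nonneg (observerState N₀ (modalCoeff phi z) zhat t)
  have hfast_nonneg := dotProduct_self_nonneg (scaledError N₀ N lam (modalCoeff phi z) zhat t)
  simp only [closedLoopState] at hcore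
  refine (sum_sq_error_le_dotProduct hN H.lam_pos fun n hn => H.lam_mono le_rfl hn).trans ?_
  rw [add_mul, one_mul, one_div_mul_eq_div]
  have hlam := H.lam_pos 1 le_rfl
  gcongr <;> linarith

theorem sum_low_estimate_sq_le {t E : ℝ}
    (hE : ∀ M, (closedLoopSystem θ₂ p qt q_c c lam phi N₀ N K L).sqEnergyNorm M
      (closedLoopState θ₂ lam phi N₀ N z u zhat t) ≤ E) :
    ∑ i : Fin N₀, zhat (i.val + 1) t ^ 2 ≤ E := by
  have hcore := ModalSystem.core_add_fast_le_of_sqEnergyNorm_le hE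
  have hfast := dotProduct_self_nonneg (scaledError N₀ N lam (modalCoeff phi z) zhat t)
  have herror : 0 ≤ ∑ i : Fin N₀, (modalCoeff phi z (i.val + 1) t - zhat (i.val + 1) t) ^ 2 := by
    positivity
  simp only [closedLoopState, observerState_dotProduct_self] at hcore
  linarith

theorem ip_slOp_lifted_le (S : ClosedLoopSolution θ₁ θ₂ p qt q_c c h lam phi N₀ N K L z u zhat)
    (H : SturmLiouville θ₁ θ₂ p q lam phi) (hh : 0 ≤ h) (hN : N₀ < N) {t E : ℝ} (ht : 0 ≤ t)
    (hE : ∀ M, (closedLoopSystem θ₂ p qt q_c c lam phi N₀ N K L).sqEnergyNorm M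
      (closedLoopState θ₂ lam phi N₀ N z u zhat t) ≤ E)
    (hestimate : ∑ n ∈ Finset.Icc 1 N, zhat n t ^ 2 ≤ E) :
    ip (slOp p q (z t + u t • bFun θ₂)) (z t + u t • bFun θ₂) ≤
      (lam N * (3 * (2 + 1 / lam 1 + ip (bFun θ₂) (bFun θ₂) * (Kt N₀ K ⬝ᵥ Kt N₀ K))) + 1) * E := by
  have hlow := S.plant.sum_lifted_sq_le (N := N) H zhat (t := t) (by linarith)
  have herror := sum_sq_error_le H hN.le hE
  have hinput := mul_le_mul_of_nonneg_left (S.input_sq_le ht hE) (ip_self_nonneg (bFun θ₂))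
  refine (H.energy_le (S.plant.lifted_mem H.angle_right hh ht)
    (ModalSystem.residualEnergy_le_of_sqEnergyNorm_le hE)).trans ?_
  rw [add_mul, one_mul, mul_assoc]
  gcongr
  · exact (H.lam_pos N (by omega)).le
  · linarith

end ClosedLoopSolution

theorem exists_h1sq_le_of_sqEnergyNorm_le (H : SturmLiouville θ₁ θ₂ p q lam phi) (hN : N₀ < N)
    (qt : ℝ → ℝ) (q_c c : ℝ) (K L : Fin N₀ → ℝ) :
    ∃ A > 0, ∀ h z u zhat t E, 0 ≤ h → 0 ≤ t →
      ClosedLoopSolution θ₁ θ₂ p qt q_c c h lam phi N₀ N K L z u zhat →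
      (∀ M, (closedLoopSystem θ₂ p qt q_c c lam phi N₀ N K L).sqEnergyNorm M
        (closedLoopState θ₂ lam phi N₀ N z u zhat t) ≤ E) →
      ∑ n ∈ Finset.Icc 1 N, zhat n t ^ 2 ≤ E → h1sq (z t) ≤ A * E := by
  obtain ⟨m, hm, coercive⟩ := exists_mul_h1sq_le_ip_slOp H.angle_left H.angle_right H.p_reg H.p_pos
    H.q_cont H.q_pos
  have hk := dotProduct_self_nonneg (Kt N₀ K)
  have hb := ip_self_nonneg (bFun θ₂)
  have hb1 := h1sq_nonneg (bFun θ₂)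
  have hlamN := H.lam_pos N (by omega)
  have hlam1 := H.lam_pos 1 le_rfl
  refine ⟨2 * ((lam N * (3 * (2 + 1 / lam 1 + ip (bFun θ₂) (bFun θ₂) * (Kt N₀ K ⬝ᵥ Kt N₀ K))) + 1)
    / m) + 2 * (Kt N₀ K ⬝ᵥ Kt N₀ K) * h1sq (bFun θ₂), by positivity,
    fun h z u zhat t E hh ht S hE hestimate => ?_⟩
  have hlifted := (coercive _ (S.plant.lifted_mem H.angle_right hh ht)).trans
    (S.ip_slOp_lifted_le H hh hN ht hE hestimate)
  rw [← le_div_iff₀' hm, ← div_mul_eq_mul_div] at hlifted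
  have hinput := mul_le_mul_of_nonneg_right (S.input_sq_le ht hE) hb1
  have hunlift := h1sq_le_add_smul ((S.plant.space_reg t (by linarith)).of_le one_le_two)
    (contDiff_bFun θ₂ 1).contDiffOn (u t)
  linarith

theorem exists_modal_decay (H : SturmLiouville θ₁ θ₂ p q lam phi)
    (hqt : ∀ x ∈ Icc (0 : ℝ) 1, qt x = q x - q_c) (hh : 0 < h) (hN : N₀ < N)
    (C : LyapunovCertificate (closedLoopSystem θ₂ p qt q_c c lam phi N₀ N K L))
    (hM : ∀ M, ∑ k ∈ Finset.range M, phi (N + 1 + k) 0 ^ 2 / lam (N + 1 + k) ≤ C.Mφ) :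
    ∃ δ > 0, ∃ A > 0, ∀ z u zhat D,
      ClosedLoopSolution θ₁ θ₂ p qt q_c c h lam phi N₀ N K L z u zhat →
      InitialDataBound h N z u zhat D → ∀ M, ∀ t ≥ 0,
      (closedLoopSystem θ₂ p qt q_c c lam phi N₀ N K L).sqEnergyNorm M
        (closedLoopState θ₂ lam phi N₀ N z u zhat t) ≤ A * exp (-2 * δ * t) * D := by
  obtain ⟨δ, hδ, A, hA, decay⟩ := C.exists_exp_decay hh
  obtain ⟨B, hB, dataBound⟩ := exists_dataBound_closedLoopState H hN
  refine ⟨δ, hδ, A * B, by positivity, fun z u zhat D S I M t ht => ?_⟩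
  refine (decay _ _ _ (S.isTrajectory H hqt hh.le hN.le hM)
    (dataBound _ _ _ _ _ _ _ _ _ _ hh.le S I) M t ht).trans_eq (by ring)

theorem exists_sum_sq_estimate_decay (H : SturmLiouville θ₁ θ₂ p q lam phi) (hh : 0 < h)
    (hN : N₀ ≤ N) (hgap : -lam (N₀ + 1) + q_c + |c| < 0) {δ A : ℝ} (hδ : 0 < δ) (hA : 0 < A)
    (qt : ℝ → ℝ) (K L : Fin N₀ → ℝ) :
    ∃ δ' > 0, δ' ≤ δ ∧ ∃ B > 0, ∀ z u zhat D,
      ClosedLoopSolution θ₁ θ₂ p qt q_c c h lam phi N₀ N K L z u zhat →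
      InitialDataBound h N z u zhat D →
      (∀ M, ∀ t ≥ 0, (closedLoopSystem θ₂ p qt q_c c lam phi N₀ N K L).sqEnergyNorm M
        (closedLoopState θ₂ lam phi N₀ N z u zhat t) ≤ A * exp (-2 * δ * t) * D) →
      ∀ t ≥ 0, ∑ n ∈ Finset.Icc 1 N, zhat n t ^ 2 ≤ B * exp (-2 * δ' * t) * D := by
  obtain ⟨δ', hδ', hle, B, hB, decay⟩ := exists_sq_estimate_decay (N := N) hh hδ
    (fun n hn => H.lam_mono (by omega) hn) hgap (betaC p qt θ₂ q_c lam phi)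
  have hk := dotProduct_self_nonneg (Kt N₀ K)
  set k2 := Kt N₀ K ⬝ᵥ Kt N₀ K
  refine ⟨δ', hδ', hle, A + (N - N₀ : ℕ) * (B * (1 + k2 * A)), by positivity,
    fun z u zhat D S I hE t ht => ?_⟩
  have hD := I.nonneg
  have hDle : D ≤ (1 + k2 * A) * D := le_mul_of_one_le_left hD (by nlinarith)
  have hinput : ∀ s ≥ 0, u s ^ 2 ≤ exp (-2 * δ * s) * ((1 + k2 * A) * D) := fun s hs =>
    (S.input_sq_le hs fun M => hE M s hs).trans (by
      linarith [mul_nonneg (exp_pos (-2 * δ * s)).le hD])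
  have hhistory : ∀ n ∈ Finset.Icc 1 N, ∀ τ ∈ Icc (-h) 0, zhat n τ ^ 2 ≤ (1 + k2 * A) * D :=
    fun n hn τ hτ => by
      rw [S.zhat_const n (Finset.mem_Icc.1 hn).1 (Finset.mem_Icc.1 hn).2 τ hτ]
      exact (Finset.single_le_sum (f := fun n => zhat n 0 ^ 2) (fun _ _ => sq_nonneg _) hn).trans
        (I.zhat_le.trans hDle)
  have hhigh : ∑ j : Fin (N - N₀), zhat (N₀ + j.val + 1) t ^ 2 ≤
      (N - N₀ : ℕ) * (B * exp (-2 * δ' * t) * ((1 + k2 * A) * D)) := by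
    refine (Finset.sum_le_card_nsmul _ _ _ fun j _ => decay _ _ _ _ _ _ _ _ S.observer hinput
      hhistory (N₀ + j.val + 1) (by omega) (by omega) t ht).trans_eq ?_
    rw [Finset.card_univ, Fintype.card_fin, nsmul_eq_mul]
  have hlow : ∑ i : Fin N₀, zhat (i.val + 1) t ^ 2 ≤ A * exp (-2 * δ' * t) * D := by
    have hexp : A * exp (-2 * δ * t) * D ≤ A * exp (-2 * δ' * t) * D := by
      gcongr A * exp ?_ * D
      nlinarith
    exact (ClosedLoopSolution.sum_low_estimate_sq_le fun M => hE M t ht).trans hexp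
  rw [sum_Icc_eq_sum_fin_add hN fun n => zhat n t ^ 2]
  linarith

theorem exists_closedLoop_decay (H : SturmLiouville θ₁ θ₂ p q lam phi)
    (hqt : ∀ x ∈ Icc (0 : ℝ) 1, qt x = q x - q_c) (hh : 0 < h) (hN : N₀ < N)
    (hgap : -lam (N₀ + 1) + q_c + |c| < 0)
    (C : LyapunovCertificate (closedLoopSystem θ₂ p qt q_c c lam phi N₀ N K L))
    (hM : ∀ M, ∑ k ∈ Finset.range M, phi (N + 1 + k) 0 ^ 2 / lam (N + 1 + k) ≤ C.Mφ) :
    ∃ δ > 0, ∃ A > 0, ∀ z u zhat D,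
      ClosedLoopSolution θ₁ θ₂ p qt q_c c h lam phi N₀ N K L z u zhat →
      InitialDataBound h N z u zhat D → ∀ t ≥ 0,
      h1sq (z t) + ∑ n ∈ Finset.Icc 1 N, zhat n t ^ 2 ≤ A * exp (-2 * δ * t) * D := by
  obtain ⟨δ, hδ, A₁, hA₁, modal_decay⟩ := exists_modal_decay H hqt hh hN C hM
  obtain ⟨δ', hδ', hle, A₂, hA₂, estimate_decay⟩ :=
    exists_sum_sq_estimate_decay H hh hN.le hgap hδ hA₁ qt K L
  obtain ⟨A₃, hA₃, h1sq_le⟩ := exists_h1sq_le_of_sqEnergyNorm_le H hN qt q_c c K L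
  refine ⟨δ', hδ', A₃ * (A₁ + A₂) + A₂, by positivity, fun z u zhat D S I t ht => ?_⟩
  have hD := I.nonneg
  have hestimate := estimate_decay z u zhat D S I (modal_decay z u zhat D S I) t ht
  have hmodal : A₁ * exp (-2 * δ * t) * D ≤ (A₁ + A₂) * exp (-2 * δ' * t) * D := by
    gcongr ?_ * exp ?_ * D <;> nlinarith
  have hstate := h1sq_le h z u zhat t _ hh.le ht S
    (fun M => (modal_decay z u zhat D S I M t ht).trans hmodal)
    (hestimate.trans (by gcongr; linarith))
  linarith

end

/-! ### The stability theorem -/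

/-- Feasible decision variables of the matrix inequalities for the observer dimension `N`, with the
paper's matrices `F₁`, `F₂`, `F₃`, `E` and residual norms substituted. -/
structure StabilityLMI (θ₂ : ℝ) (p qt : ℝ → ℝ) (q_c c : ℝ) (lam : ℕ → ℝ) (phi : ℕ → ℝ → ℝ)
    (N₀ N : ℕ) (K L : Fin N₀ → ℝ) where
  (P Q₁ : Matrix (Fin N₀ ⊕ Fin N₀) (Fin N₀ ⊕ Fin N₀) ℝ)
  (Q₂ : Matrix (Fin (N - N₀)) (Fin (N - N₀)) ℝ)
  (r₁ r₂ β γ α₁ α₂ α₃ α₄ : ℝ)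
  P_posDef : P.PosDef
  Q₁_posSemidef : Q₁.PosSemidef
  Q₂_posSemidef : Q₂.PosSemidef
  r₁_pos : 0 < r₁
  r₂_pos : 0 < r₂
  β_pos : 0 < β
  γ_pos : 0 < γ
  α₁_pos : 0 < α₁
  α₂_pos : 0 < α₂
  α₃_pos : 0 < α₃
  α₄_pos : 0 < α₄
  margin_nonneg : 0 ≤ youngMargin c α₁ α₂ α₃ α₄
  summable_trace : Summable fun k : ℕ => phi (N + 1 + k) 0 ^ 2 / lam (N + 1 + k)
  psi_neg : (-(PsiM N₀ N P Q₁
    (F1 N₀ lam q_c (B0 N₀ p qt θ₂ q_c lam phi) (fun i => phi (i.val + 1) 0) K L) Q₂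
    (A1 N₀ N lam q_c) (F2 N₀ N L fun i => phi (N₀ + i.val + 1) 0 / √(lam (N₀ + i.val + 1)))
    (Lv N₀ L) (Kt N₀ K)
    (Erow N₀ N (F1 N₀ lam q_c (B0 N₀ p qt θ₂ q_c lam phi) (fun i => phi (i.val + 1) 0) K L)
      (F2 N₀ N L fun i => phi (N₀ + i.val + 1) 0 / √(lam (N₀ + i.val + 1))) (Lv N₀ L) (Kt N₀ K))
    c r₁ β γ α₂ α₃ (RN2 (aFun p qt θ₂) phi N) (RN2 (bFun θ₂) phi N))).PosDef
  theta1_nonpos : (-(Theta1 N₀ P Q₁ (Kt N₀ K) c γ α₃ α₄ (RN2 (bFun θ₂) phi N))).PosSemidef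
  theta2_nonpos : (-(Theta2 N₀ N Q₂ r₁ c)).PosSemidef
  theta3_nonpos : γ * α₁ * |c| - r₂ ≤ 0
  theta4_neg : 2 * γ * (-youngMargin c α₁ α₂ α₃ α₄ * lam (N + 1) + q_c)
    + β * (∑' k : ℕ, phi (N + 1 + k) 0 ^ 2 / lam (N + 1 + k)) + r₂ / lam (N + 1) < 0

section

variable {θ₁ θ₂ : ℝ} {p q qt : ℝ → ℝ} {q_c c h : ℝ} {lam : ℕ → ℝ} {phi : ℕ → ℝ → ℝ} {N₀ N : ℕ}
  {K L : Fin N₀ → ℝ} {z : ℝ → ℝ → ℝ} {u : ℝ → ℝ} {zhat : ℕ → ℝ → ℝ}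

theorem StabilityLMI.exists_lyapunovCertificate
    (I : StabilityLMI θ₂ p qt q_c c lam phi N₀ N K L) (H : SturmLiouville θ₁ θ₂ p q lam phi)
    (hqt : ContinuousOn qt (Icc 0 1)) :
    ∃ C : LyapunovCertificate (closedLoopSystem θ₂ p qt q_c c lam phi N₀ N K L),
      C.Mφ = ∑' k : ℕ, phi (N + 1 + k) 0 ^ 2 / lam (N + 1 + k) := by
  obtain ⟨ε, hε, psi_le⟩ := exists_PsiM_form_le I.P_posDef.isHermitian I.psi_neg
  have hb := (contDiff_bFun θ₂ 0).continuous.continuousOn (s := Icc (0 : ℝ) 1)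
  exact
   ⟨{ I with
      l₀ := lam (N + 1)
      Ra := RN2 (aFun p qt θ₂) phi N
      Rb := RN2 (bFun θ₂) phi N
      Mφ := ∑' k : ℕ, phi (N + 1 + k) 0 ^ 2 / lam (N + 1 + k)
      ε := ε
      ε_pos := hε
      l₀_pos := H.lam_pos _ (by omega)
      Mφ_nonneg := tsum_nonneg fun k => div_nonneg (sq_nonneg _) (H.lam_pos _ (by omega)).le
      l₀_le := fun k => H.lam_mono (by omega) (by omega)
      sum_a_le := H.sum_tail_sq_le_RN2 (continuousOn_aFun H.p_reg hqt θ₂) N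
      sum_b_le := H.sum_tail_sq_le_RN2 hb N
      psi_le := fun x ζ => psi_le x.core x.fast ζ
      theta1_le := Theta1_form_le I.theta1_nonpos
      theta2_le := Theta2_form_le I.theta2_nonpos
      theta3_le := sub_nonpos.1 I.theta3_nonpos }, rfl⟩

theorem ClassicalSolution.integral_sq_le_sSup (Z : ClassicalSolution θ₁ θ₂ p qt c h z u) {τ : ℝ}
    (hτ : τ ∈ Icc (-h) 0) :
    ∫ x in (0 : ℝ)..1, z τ x ^ 2 ≤
      sSup ((fun τ => ∫ x in (0 : ℝ)..1, z τ x ^ 2) '' Icc (-h) 0) :=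
  have hcont : ContinuousOn (fun τ => ∫ x in (0 : ℝ)..1, z τ x ^ 2) (Ici (-h)) :=
    continuousOn_integral_unit (g := fun τ x => z τ x ^ 2) (Z.cont.fun_pow 2)
  le_csSup (isCompact_Icc.image_of_continuousOn (hcont.mono Icc_subset_Ici_self)).bddAbove
    (mem_image_of_mem _ hτ)

theorem sq_le_sq_sSup_abs {s : Set ℝ} (hs : IsCompact s) (hu : ContinuousOn u s) {τ : ℝ}
    (hτ : τ ∈ s) : u τ ^ 2 ≤ sSup ((fun τ => |u τ|) '' s) ^ 2 :=
  sq_le_sq.2 ((le_csSup (hs.image_of_continuousOn hu.abs).bddAbove (mem_image_of_mem _ hτ)).trans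
    (le_abs_self _))

theorem ClosedLoopSolution.initialDataBound
    (S : ClosedLoopSolution θ₁ θ₂ p qt q_c c h lam phi N₀ N K L z u zhat) (hh : 0 ≤ h) :
    InitialDataBound h N z u zhat (sSup ((fun τ => ∫ x in (0 : ℝ)..1, z τ x ^ 2) '' Icc (-h) 0)
      + h1sq (z 0) + sSup ((fun τ => |u τ|) '' Icc (-h) 0) ^ 2
      + ∑ n ∈ Finset.Icc 1 N, zhat n 0 ^ 2) := by
  have hz := fun τ (hτ : τ ∈ Icc (-h) 0) => S.plant.integral_sq_le_sSup hτ
  have hu := fun τ (hτ : τ ∈ Icc (-h) 0) => sq_le_sq_sSup_abs isCompact_Icc S.input_cont hτ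
  have hz_nonneg := ((ip_self_nonneg (z 0)).trans_eq (ip_self _)).trans (hz 0 (by simpa))
  have hu_nonneg := sq_nonneg (sSup ((fun τ => |u τ|) '' Icc (-h) 0))
  have hzhat_nonneg := Finset.sum_nonneg fun n (_ : n ∈ Finset.Icc 1 N) => sq_nonneg (zhat n 0)
  have hh1 := h1sq_nonneg (z 0)
  refine ⟨fun τ hτ => ?_, fun τ hτ => ?_, ?_, ?_⟩
  · rw [ip_self]
    linarith [hz τ hτ]
  · linarith [hu τ hτ]
  · linarith
  · linarith

theorem stmt_15_general (H : SturmLiouville θ₁ θ₂ p q lam phi)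
    (hq : ∀ x ∈ Icc (0 : ℝ) 1, qt x = q x - q_c) (hN : N₀ < N)
    (hgap : -lam (N₀ + 1) + q_c + |c| < 0)
    (I : StabilityLMI θ₂ p qt q_c c lam phi N₀ N K L) (hh : 0 < h) :
    ∃ δ > 0, ∃ M > 0, ∀ z u zhat,
      ClosedLoopSolution θ₁ θ₂ p qt q_c c h lam phi N₀ N K L z u zhat → ∀ t ≥ 0,
      h1sq (z t) + ∑ n ∈ Finset.Icc 1 N, zhat n t ^ 2 ≤ M * exp (-2 * δ * t) *
        (sSup ((fun τ => ∫ x in (0 : ℝ)..1, z τ x ^ 2) '' Icc (-h) 0) + h1sq (z 0)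
          + sSup ((fun τ => |u τ|) '' Icc (-h) 0) ^ 2 + ∑ n ∈ Finset.Icc 1 N, zhat n 0 ^ 2) := by
  obtain ⟨C, hC⟩ := I.exists_lyapunovCertificate H
    ((H.q_cont.sub continuousOn_const).congr hq)
  obtain ⟨δ, hδ, M, hM, decay⟩ := exists_closedLoop_decay H hq hh hN hgap C fun M =>
    (I.summable_trace.sum_le_tsum _ fun k _ =>
      div_nonneg (sq_nonneg _) (H.lam_pos _ (by omega)).le).trans_eq hC.symm
  exact ⟨δ, hδ, M, hM, fun z u zhat S => decay z u zhat _ S (S.initialDataBound hh.le)⟩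

end

/-- Theorem 1 (stability), Dirichlet measurement: under the LMI conditions
`Ψ ≺ 0`, `Θ₁ ≺ 0`, `Θ₂ ≺ 0`, `Θ₃ < 0`, `Θ₄ < 0`, for any delay `h > 0` the closed-loop
system (plant + finite-dimensional observer-based controller with output `y_D(t) = z(t,0)`)
is exponentially stable in `H¹` norm. -/
theorem stmt_15
    -- plant data
    (θ₁ θ₂ : ℝ) (hθ₁ : θ₁ ∈ Set.Ioc 0 (π/2)) (hθ₂ : θ₂ ∈ Set.Icc 0 (π/2))
    (p q qt : ℝ → ℝ) (q_c c : ℝ) (hc : c ≠ 0)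
    (hp : ContDiffOn ℝ 2 p (Set.Icc 0 1)) (hppos : ∀ x ∈ Set.Icc (0:ℝ) 1, 0 < p x)
    (hqc : ContinuousOn q (Set.Icc 0 1)) (hqpos : ∀ x ∈ Set.Icc (0:ℝ) 1, 0 < q x)
    (hqt : ∀ x, qt x = q x - q_c)
    -- eigenstructure of the Sturm–Liouville operator A f = -(p f')' + q f
    (lam : ℕ → ℝ) (phi : ℕ → ℝ → ℝ)
    (hlampos : ∀ n ≥ 1, 0 < lam n)
    (hlammono : ∀ n ≥ 1, lam n < lam (n+1))
    (hlamtop : Filter.Tendsto lam Filter.atTop Filter.atTop)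
    (hphireg : ∀ n ≥ 1, ContDiffOn ℝ 2 (phi n) (Set.Icc 0 1))
    (hphieig : ∀ n ≥ 1, ∀ x ∈ Set.Icc (0:ℝ) 1,
      -(dI (fun y => p y * dI (phi n) y) x) + q x * phi n x = lam n * phi n x)
    (hphibc : ∀ n ≥ 1,
      Real.cos θ₁ * phi n 0 - Real.sin θ₁ * dI (phi n) 0 = 0 ∧
      Real.cos θ₂ * phi n 1 + Real.sin θ₂ * dI (phi n) 1 = 0)
    (horth : ∀ m ≥ 1, ∀ n ≥ 1,
      ip (phi m) (phi n) = if m = n then 1 else 0)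
    -- (φₙ)ₙ is a Hilbert basis of L²(0,1): Parseval identity
    (hparseval : ∀ f : ℝ → ℝ, ContinuousOn f (Set.Icc 0 1) →
      (∫ x in (0:ℝ)..1, (f x)^2) = ∑' k : ℕ, (ip f (phi (k+1)))^2)
    -- dimensions
    (N₀ N : ℕ) (hN₀ : 1 ≤ N₀) (hN : N₀ + 1 ≤ N)
    (hspec : ∀ n ≥ N₀ + 1, -lam n + q_c + |c| < 0)
    -- gains, with all eigenvalues of F₁ of real part < -|c|
    (K L : Fin N₀ → ℝ)
    (F1m : Matrix (Fin N₀ ⊕ Fin N₀) (Fin N₀ ⊕ Fin N₀) ℝ)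
    (hF1m : F1m = F1 N₀ lam q_c (B0 N₀ p qt θ₂ q_c lam phi)
      (fun i => phi (i.val + 1) 0) K L)
    (hF1spec : ∀ μ : ℂ, μ ∈ spectrum ℂ (F1m.map (Complex.ofReal : ℝ → ℂ)) → μ.re < -|c|)
    -- Young parameters
    (α₁ α₂ α₃ α₄ cf : ℝ) (hα₁ : 0 < α₁) (hα₂ : 0 < α₂) (hα₃ : 0 < α₃) (hα₄ : 0 < α₄)
    (hcf : cf = 1 - (|c|/α₁ + 1/α₂ + 1/α₃ + |c|/α₄)/2) (hcfpos : 0 < cf)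
    -- residual norms and boundary-trace series
    (RNa2 RNb2 Mphi : ℝ)
    (hRNa2 : RNa2 = RN2 (aFun p qt θ₂) phi N) (hRNb2 : RNb2 = RN2 (bFun θ₂) phi N)
    (hMphisum : Summable fun k : ℕ => (phi (N + 1 + k) 0)^2 / lam (N + 1 + k))
    (hMphi : Mphi = ∑' k : ℕ, (phi (N + 1 + k) 0)^2 / lam (N + 1 + k))
    -- derived matrices
    (F2m : Matrix (Fin N₀ ⊕ Fin N₀) (Fin (N - N₀)) ℝ)
    (hF2m : F2m = F2 N₀ N L
      (fun i => phi (N₀ + i.val + 1) 0 / Real.sqrt (lam (N₀ + i.val + 1))))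
    (Em : SIdx N₀ N → ℝ) (hEm : Em = Erow N₀ N F1m F2m (Lv N₀ L) (Kt N₀ K))
    -- LMI decision variables and constraints
    (P Q1 : Matrix (Fin N₀ ⊕ Fin N₀) (Fin N₀ ⊕ Fin N₀) ℝ)
    (Q2 : Matrix (Fin (N - N₀)) (Fin (N - N₀)) ℝ)
    (r₁ r₂ βs γ : ℝ) (hr₁ : 0 < r₁) (hr₂ : 0 < r₂) (hβs : 0 < βs) (hγ : 0 < γ)
    (hP : P.PosDef) (hQ1 : Q1.PosSemidef) (hQ2 : Q2.PosSemidef)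
    (hPsi : (-(PsiM N₀ N P Q1 F1m Q2 (A1 N₀ N lam q_c) F2m (Lv N₀ L) (Kt N₀ K) Em
      c r₁ βs γ α₂ α₃ RNa2 RNb2)).PosDef)
    (hTh1 : (-(Theta1 N₀ P Q1 (Kt N₀ K) c γ α₃ α₄ RNb2)).PosDef)
    (hTh2 : (-(Theta2 N₀ N Q2 r₁ c)).PosDef)
    (hTh3 : γ * α₁ * |c| - r₂ < 0)
    (hTh4 : 2*γ*(-cf * lam (N+1) + q_c) + βs * Mphi + r₂ / lam (N+1) < 0)
    -- state delay
    (h : ℝ) (hh : 0 < h) :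
    ∃ δ > (0:ℝ), ∃ M > (0:ℝ),
      ∀ (z : ℝ → ℝ → ℝ) (u : ℝ → ℝ) (zhat : ℕ → ℝ → ℝ),
      -- regularity of the classical solution
      (∀ t ≥ -h, ContDiffOn ℝ 2 (z t) (Set.Icc 0 1)) →
      ContinuousOn (fun pr : ℝ × ℝ => z pr.1 pr.2) (Set.Ici (-h) ×ˢ Set.Icc 0 1) →
      ContinuousOn (fun pr : ℝ × ℝ => deriv (fun s => z s pr.2) pr.1)
        (Set.Ioi 0 ×ˢ Set.Icc 0 1) →
      ContinuousOn (fun pr : ℝ × ℝ => dI (z pr.1) pr.2) (Set.Ioi 0 ×ˢ Set.Icc 0 1) →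
      ContinuousOn (fun pr : ℝ × ℝ => dI (dI (z pr.1)) pr.2) (Set.Ioi 0 ×ˢ Set.Icc 0 1) →
      (∀ n, ContinuousOn (zhat n) (Set.Ici (-h))) →
      -- Lipschitz regularity of the initial data z₀ (in L²) and u₀
      (∃ Kz, ∀ τ₁ ∈ Set.Icc (-h) (0:ℝ), ∀ τ₂ ∈ Set.Icc (-h) (0:ℝ),
        (∫ x in (0:ℝ)..1, (z τ₁ x - z τ₂ x)^2) ≤ Kz * (τ₁ - τ₂)^2) →
      (∃ Ku, ∀ τ₁ ∈ Set.Icc (-h) (0:ℝ), ∀ τ₂ ∈ Set.Icc (-h) (0:ℝ),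
        |u τ₁ - u τ₂| ≤ Ku * |τ₁ - τ₂|) →
      -- the PDE in the domain
      (∀ t > (0:ℝ), ∀ x ∈ Set.Ioo (0:ℝ) 1,
        HasDerivAt (fun s => z s x)
          (dI (fun y => p y * dI (z t) y) x - qt x * z t x + c * z (t-h) x) t) →
      -- boundary conditions (and compatibility at t = 0)
      (∀ t ≥ (0:ℝ), Real.cos θ₁ * z t 0 - Real.sin θ₁ * dI (z t) 0 = 0) →
      -- Robin actuation at x = 1; for τ ∈ [-h,0] this defines u₀
      (∀ t ≥ -h, Real.cos θ₂ * z t 1 + Real.sin θ₂ * dI (z t) 1 = u t) →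
      -- observer initial data constant on [-h,0]
      (∀ n, ∀ τ ∈ Set.Icc (-h) (0:ℝ), zhat n τ = zhat n 0) →
      -- observer dynamics with Dirichlet output innovation, modes 1..N₀
      (∀ i : Fin N₀, ∀ t > (0:ℝ),
        HasDerivAt (zhat (i.val + 1))
          ((-lam (i.val + 1) + q_c) * zhat (i.val + 1) t + c * zhat (i.val + 1) (t-h)
            + betaC p qt θ₂ q_c lam phi (i.val + 1) * u t
            - L i * ((∑ k ∈ Finset.Icc 1 N,
                (zhat k t + ip (bFun θ₂) (phi k) * u t) * phi k 0) - z t 0)) t) →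
      -- observer dynamics, modes N₀+1..N
      (∀ n, N₀ + 1 ≤ n → n ≤ N → ∀ t > (0:ℝ),
        HasDerivAt (zhat n)
          ((-lam n + q_c) * zhat n t + c * zhat n (t-h)
            + betaC p qt θ₂ q_c lam phi n * u t) t) →
      -- feedback law (including the compatibility condition u₀(0) = K Ẑ(0))
      (∀ t ≥ (0:ℝ), u t = ∑ i : Fin N₀, K i * zhat (i.val + 1) t) →
      -- exponential stability estimate in H¹ norm
      ∀ t ≥ (0:ℝ),
        ((∫ x in (0:ℝ)..1, (z t x)^2) + ∫ x in (0:ℝ)..1, (dI (z t) x)^2)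
            + ∑ n ∈ Finset.Icc 1 N, (zhat n t)^2
          ≤ M * Real.exp (-2*δ*t) *
            (sSup ((fun τ => ∫ x in (0:ℝ)..1, (z τ x)^2) '' Set.Icc (-h) 0)
              + ((∫ x in (0:ℝ)..1, (z 0 x)^2) + ∫ x in (0:ℝ)..1, (dI (z 0) x)^2)
              + (sSup ((fun τ => |u τ|) '' Set.Icc (-h) 0))^2
              + ∑ n ∈ Finset.Icc 1 N, (zhat n 0)^2) := by
  subst hF1m hF2m hEm hRNa2 hRNb2 hMphi hcf
  have H : SturmLiouville θ₁ θ₂ p q lam phi :=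
    ⟨⟨hθ₁.1.le, hθ₁.2⟩, hθ₂, hp.of_le one_le_two, hppos, hqc, hqpos, hlampos,
      fun n hn => (hlammono n hn).le, fun n hn => ⟨hphireg n hn, hphibc n hn⟩, hphieig, horth,
      fun f hf => (ip_self f).trans (hparseval f hf)⟩
  have I : StabilityLMI θ₂ p qt q_c c lam phi N₀ N K L :=
    ⟨P, Q1, Q2, r₁, r₂, βs, γ, α₁, α₂, α₃, α₄, hP, hQ1, hQ2, hr₁, hr₂, hβs, hγ, hα₁, hα₂, hα₃, hα₄,
      hcfpos.le, hMphisum, hPsi, hTh1.posSemidef, hTh2.posSemidef, hTh3.le, hTh4⟩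
  obtain ⟨δ, hδ, M, hM, decay⟩ :=
    stmt_15_general H (fun x _ => hqt x) hN (hspec _ le_rfl) I hh
  exact ⟨δ, hδ, M, hM, fun z u zhat hzreg hzc hzt _ _ hzhat _ ⟨_, hu⟩ hpde hleft hright hconst hlow
    hhigh hfb => decay z u zhat ⟨⟨hzreg, hzc, hzt, hpde, hleft, hright⟩,
      ⟨fun n _ _ => hzhat n, hlow, hhigh, hfb⟩, (LipschitzOnWith.of_dist_le' hu).continuousOn,
      fun n _ _ => hconst n⟩⟩

end
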